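/- arXiv:2510.07405 — 3 statements merged into one kernel-verified Lean document; each statement's English description precedes it below -/
import Mathlib

section
/- Let A be an Iwanaga-Gorenstein algebra of Gorenstein dimension at most 1. Then the stable Cohen-Macaulay category CMP A (equivalently, the category of non-projective syzygies) is generated under extensions and direct summands by the A-module rad A = ⊕_i rad P(i), the direct sum of the radicals of the indecomposable projective modules. -/
noncomputable section

open CategoryTheory Opposite DirectSum MulOpposite

/-- An idempotent is primitive if it is nonzero and is not the sum of two nonzero
orthogonal idempotents. -/
def IsPrimitiveIdempotent {A : Type} [Ring A] (a : A) : Prop :=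
  IsIdempotentElem a ∧ a ≠ 0 ∧
    ∀ b c : A, IsIdempotentElem b → IsIdempotentElem c → b * c = 0 → c * b = 0 →
      a = b + c → b = 0 ∨ c = 0

/-- A complete family of orthogonal idempotents. -/
def CompOrthIdem {A ι : Type} [Ring A] [Fintype ι] (e : ι → A) : Prop :=
  (∀ i j, i ≠ j → e i * e j = 0) ∧ (∀ i, IsIdempotentElem (e i)) ∧ (∑ i, e i) = 1

/-- The two-sided ideal `A e A` generated by an idempotent `e`, viewed as a
right `A`-module (i.e. a module over `Aᵐᵒᵖ`): it is the right `A`-submodule of `A`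
spanned by all elements `b * e`. -/
def genIdeal {A : Type} [Ring A] (e : A) : Submodule Aᵐᵒᵖ A :=
  Submodule.span Aᵐᵒᵖ {x | ∃ b : A, x = b * e}

/-- The indecomposable projective right module `e A` at the idempotent `e`. -/
def pIdeal {A : Type} [Ring A] (e : A) : Submodule Aᵐᵒᵖ A :=
  Submodule.span Aᵐᵒᵖ ({e} : Set A)

/-- The radical of a module: the intersection of all maximal submodules.
For a finite dimensional module `M` over a finite dimensional algebra this is `M · rad A`. -/
def radical (R M : Type) [Ring R] [AddCommGroup M] [Module R M] : Submodule R M :=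
  sInf {m | IsCoatom m}

/-- `Ext¹` for right `A`-modules, as a `k`-module. -/
abbrev rext1 (k : Type) [Field k] (A : Type) [Ring A] [Algebra k A]
    (M N : ModuleCat.{0} Aᵐᵒᵖ) : ModuleCat.{0} k :=
  ((Ext k (ModuleCat.{0} Aᵐᵒᵖ) 1).obj (op M)).obj N

/-- A right `A`-module `M` is Cohen-Macaulay if `Ext¹_A(M, A) = 0`. -/
def IsCM (k : Type) [Field k] (A : Type) [Ring A] [Algebra k A]
    (M : ModuleCat.{0} Aᵐᵒᵖ) : Prop :=
  Subsingleton (rext1 k A M (ModuleCat.of Aᵐᵒᵖ A))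

/-- A module has injective dimension at most 1: it admits an injective
coresolution `0 → M → I₀ → I₁ → 0`. -/
def InjDimLE1 (R : Type) [Ring R] (M : ModuleCat.{0} R) : Prop :=
  ∃ (I₀ I₁ : ModuleCat.{0} R) (f : M →ₗ[R] I₀) (g : I₀ →ₗ[R] I₁),
    Module.Injective R I₀ ∧ Module.Injective R I₁ ∧
    Function.Injective f ∧ Function.Surjective g ∧ Function.Exact f g

/-- A module has projective dimension at most 1: it admits a projective
resolution `0 → P₁ → P₀ → M → 0`. -/
def ProjDimLE1 (R : Type) [Ring R] (M : ModuleCat.{0} R) : Prop :=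
  ∃ (P₀ P₁ : ModuleCat.{0} R) (g : P₀ →ₗ[R] M) (f : P₁ →ₗ[R] P₀),
    Module.Projective R P₀ ∧ Module.Projective R P₁ ∧
    Function.Surjective g ∧ Function.Injective f ∧ Function.Exact f g

/-- `R` is Iwanaga-Gorenstein of Gorenstein dimension at most 1: every projective
module has injective dimension at most 1 and every injective module has projective
dimension at most 1. -/
def IwanagaGorenstein1 (R : Type) [Ring R] : Prop :=
  (∀ P : ModuleCat.{0} R, Module.Projective R P → InjDimLE1 R P) ∧
  (∀ I : ModuleCat.{0} R, Module.Injective R I → ProjDimLE1 R I)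

/-- The smallest class of objects of the stable Cohen-Macaulay category containing
`rad A` (hence its summands `rad P(i)`), the projective modules (which are zero objects of
the stable category), closed under isomorphism, extensions, and direct summands. -/
inductive GenRad (A : Type) [Ring A] : ModuleCat.{0} Aᵐᵒᵖ → Prop
  /-- the generator `rad A` -/
  | gen (M : ModuleCat.{0} Aᵐᵒᵖ)
      (h : Nonempty (M ≃ₗ[Aᵐᵒᵖ] ↥(radical Aᵐᵒᵖ A))) : GenRad A M
  /-- projectives are zero in the stable category -/
  | proj (M : ModuleCat.{0} Aᵐᵒᵖ) (h : Module.Projective Aᵐᵒᵖ M) : GenRad A M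
  /-- closure under extensions -/
  | ext (L M N : ModuleCat.{0} Aᵐᵒᵖ) (f : L →ₗ[Aᵐᵒᵖ] M) (g : M →ₗ[Aᵐᵒᵖ] N)
      (hf : Function.Injective f) (hg : Function.Surjective g) (hfg : Function.Exact f g)
      (hL : GenRad A L) (hN : GenRad A N) : GenRad A M
  /-- closure under direct summands -/
  | summand (M Y : ModuleCat.{0} Aᵐᵒᵖ) (s : M →ₗ[Aᵐᵒᵖ] Y) (r : Y →ₗ[Aᵐᵒᵖ] M)
      (h : r ∘ₗ s = LinearMap.id) (hY : GenRad A Y) : GenRad A M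

/-!
A Cohen-Macaulay module `M` is torsionless: its injective hull has a projective resolution
`0 → P₁ → P₀ → I → 0`, and since `Ext¹(M, P₁) = 0` the embedding of `M` in `I` lifts to an
embedding in `P₀`, hence in a finite free module. So `M` is a first syzygy of a module of finite
length. By Schanuel's lemma, the modules whose syzygies all lie in a class closed under extensions
and summands and containing the projectives again form a class closed under extensions and
summands. As `rad A` is a syzygy of `A / rad A`, of which every simple module is a summand,
induction on length puts every syzygy of a finite length module in the class generated by `rad A`.
-/

section Syzygies

open Limits

universe v u

variable {C : Type u} [Category.{v} C] [Abelian C]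

theorem isPullback_kernel_comp {S : ShortComplex C} (hS : S.Exact) [Mono S.f] {X : C}
    (p : X ⟶ S.X₂) :
    IsPullback (hS.lift (kernel.ι (p ≫ S.g) ≫ p) (by simp)) (kernel.ι (p ≫ S.g)) S.f p where
  w := by simp
  isLimit' := ⟨PullbackCone.IsLimit.mk _
    (fun s ↦ kernel.lift _ s.snd (by simp [← s.condition_assoc]))
    (fun s ↦ by simp [← cancel_mono S.f, s.condition])
    (fun s ↦ by simp)
    (fun s m _ hm ↦ by simpa [← cancel_mono (kernel.ι (p ≫ S.g))] using hm)⟩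

/-- Over a lift `c` of `q` through `p`, the fibre product of `p` and `q` splits off `kernel p`. -/
def kernelRetractOfIsPullback {E X Q N : C} {f : E ⟶ X} {g : E ⟶ Q} {p : X ⟶ N} {q : Q ⟶ N}
    (sq : IsPullback f g p q) {c : Q ⟶ X} (hc : c ≫ p = q) : Retract (kernel p) E where
  i := sq.lift (kernel.ι p) 0 (by simp)
  r := kernel.lift p (f - g ≫ c) (by simp [hc, sq.w])
  retract := by simp [← cancel_mono (kernel.ι p), Preadditive.comp_sub]

/-- For a summand `M` of `N` with complementary idempotent `𝟙 - r ≫ i`, maps `X ⟶ M` and `Q ⟶ N`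
combine to `X ⊞ Q ⟶ N`, and its kernel has `kernel p` as a summand. -/
def kernelRetractKernelDesc {M N X Q : C} (h : Retract M N) (p : X ⟶ M) (q : Q ⟶ N) :
    Retract (kernel p) (kernel (biprod.desc (p ≫ h.i) (q ≫ (𝟙 N - h.r ≫ h.i)))) where
  i := kernel.map _ _ biprod.inl h.i (by simp)
  r := kernel.map _ _ biprod.fst h.r (by ext <;> simp)
  retract := by simp [← cancel_mono (kernel.ι p)]

theorem epi_desc_of_retract {M N X Q : C} (h : Retract M N) (p : X ⟶ M) (q : Q ⟶ N)
    [Epi p] [Epi q] : Epi (biprod.desc (p ≫ h.i) (q ≫ (𝟙 N - h.r ≫ h.i))) := by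
  refine Preadditive.epi_of_cancel_zero _ fun g hg ↦ ?_
  have hi : h.i ≫ g = 0 := by
    simpa [← cancel_epi p] using biprod.inl ≫= hg
  have hr : (𝟙 N - h.r ≫ h.i) ≫ g = 0 := by
    simpa [← cancel_epi q] using biprod.inr ≫= hg
  simpa [hi, Preadditive.sub_comp] using hr

/-- The objects all of whose first syzygies satisfy `P`. Every epimorphism from a projective
object counts here, not only projective covers. -/
def syzygiesIn (P : ObjectProperty C) : ObjectProperty C := fun N ↦
  ∀ ⦃X : C⦄ [Projective X] (p : X ⟶ N) [Epi p], P (kernel p)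

variable {P : ObjectProperty C}

theorem prop_kernel_iff_of_isPullback [P.IsClosedUnderIsomorphisms] {W X Y Z : C}
    {t : W ⟶ X} {l : W ⟶ Y} {r : X ⟶ Z} {b : Y ⟶ Z} (sq : IsPullback t l r b) :
    P (kernel t) ↔ P (kernel b) :=
  have := isIso_kernel_map_of_isPullback sq
  P.prop_iff_of_iso (asIso (kernel.map _ _ _ _ sq.w))

instance isStableUnderRetracts_syzygiesIn [EnoughProjectives C] [P.IsStableUnderRetracts] :
    (syzygiesIn P).IsStableUnderRetracts where
  of_retract {_ N} h hN _ _ p _ :=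
    have := epi_desc_of_retract h p (Projective.π N)
    P.prop_of_retract (kernelRetractKernelDesc h p (Projective.π N)) (hN _)

variable [P.IsClosedUnderExtensions] [P.IsStableUnderRetracts]

-- Schanuel's trick: `kernel p` is a summand of the pullback of `p` and `q`, which is an
-- extension of `X` by `kernel q`.
theorem prop_kernel_of_prop_kernel_projective {X Q N : C} [Projective Q] (p : X ⟶ N) [Epi p]
    (q : Q ⟶ N) [Epi q] (hX : P X) (hq : P (kernel q)) : P (kernel p) := by
  have sq := IsPullback.of_hasPullback p q
  have hE : P (pullback p q) :=
    P.prop_X₂_of_shortExact { exact := ShortComplex.exact_kernel (pullback.fst p q) }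
      ((prop_kernel_iff_of_isPullback sq).2 hq) hX
  exact P.prop_of_retract (kernelRetractOfIsPullback sq (Projective.factorThru_comp q p)) hE

theorem syzygiesIn_X₃_iff_of_shortExact (hP : isProjective C ≤ P) {S : ShortComplex C}
    (hS : S.ShortExact) [Projective S.X₂] : syzygiesIn P S.X₃ ↔ P S.X₁ := by
  have := hS.mono_f
  have := hS.epi_g
  have e : S.X₁ ≅ kernel S.g := hS.fIsKernel.conePointUniqueUpToIso (limit.isLimit _)
  exact ⟨fun h ↦ P.prop_of_iso e.symm (h S.g), fun h X _ p _ ↦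
    prop_kernel_of_prop_kernel_projective p S.g (hP X ‹_›) (P.prop_of_iso e h)⟩

-- The preimage `kernel (p ≫ S.g)` of `S.X₁` in `X` maps onto `S.X₁` with the same kernel as `p`.
instance isClosedUnderExtensions_syzygiesIn [EnoughProjectives C] :
    (syzygiesIn P).IsClosedUnderExtensions where
  prop_X₂_of_shortExact {S} hS h₁ h₃ _ _ p _ := by
    have := hS.mono_f
    have := hS.epi_g
    have sq := isPullback_kernel_comp hS.exact p
    have : Epi (hS.exact.lift (kernel.ι (p ≫ S.g) ≫ p) (by simp)) :=
      Abelian.epi_fst_of_isLimit _ _ sq.isLimit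
    exact (prop_kernel_iff_of_isPullback sq).1
      (prop_kernel_of_prop_kernel_projective _ (Projective.π S.X₁) (h₃ (p ≫ S.g)) (h₁ _))

end Syzygies

section FiniteLength

universe u v

theorem shortExact_subtype_mkQ {R : Type u} [Ring R] {M : Type v} [AddCommGroup M] [Module R M]
    (N : Submodule R M) : (ModuleCat.shortComplexOfCompEqZero N.subtype N.mkQ
      (LinearMap.exact_subtype_mkQ N).linearMap_comp_eq_zero).ShortExact :=
  ModuleCat.shortComplex_shortExact _ (LinearMap.exact_subtype_mkQ N) N.subtype_injective
    N.mkQ_surjective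

theorem prop_of_isFiniteLength {R : Type u} [Ring R] {P : ObjectProperty (ModuleCat.{v} R)}
    [P.IsClosedUnderExtensions] (hzero : ∀ N : ModuleCat.{v} R, Subsingleton N → P N)
    (hsimple : ∀ N : ModuleCat.{v} R, IsSimpleModule R N → P N) {N : Type v} [AddCommGroup N]
    [Module R N] (hN : IsFiniteLength R N) : P (ModuleCat.of R N) := by
  induction hN with
  | of_subsingleton => exact hzero _ ‹_›
  | @of_simple_quotient _ _ _ N' _ _ hN' =>
    exact P.prop_X₂_of_shortExact (shortExact_subtype_mkQ N') hN' (hsimple (.of R (_ ⧸ N')) ‹_›)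

variable {R : Type u} [Ring R] [IsSemisimpleModule R (R ⧸ Ring.jacobson R)]

theorem nonempty_retract_quotient_jacobson (S : ModuleCat.{u} R) [IsSimpleModule R S] :
    Nonempty (Retract S (.of R (R ⧸ Ring.jacobson R))) := by
  have := IsSimpleModule.nontrivial R S
  obtain ⟨m, hm⟩ := exists_ne (0 : S)
  let f : R ⧸ Ring.jacobson R →ₗ[R] S :=
    (Ring.jacobson R).liftQ (.toSpanSingleton R S m) (IsSemisimpleModule.jacobson_le_ker ..)
  have hf : Function.Surjective f := by
    rw [← LinearMap.range_eq_top, Submodule.range_liftQ, LinearMap.range_eq_top]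
    exact IsSimpleModule.toSpanSingleton_surjective R hm
  obtain ⟨s, hs⟩ := IsSemisimpleModule.lifting_property f hf .id
  exact ⟨ModuleCat.ofHom s, ModuleCat.ofHom f, ModuleCat.hom_ext hs⟩

theorem syzygiesIn_of_isFiniteLength {P : ObjectProperty (ModuleCat.{u} R)}
    [P.IsClosedUnderExtensions] [P.IsStableUnderRetracts] (hP : isProjective _ ≤ P)
    (hJ : P (.of R (Ring.jacobson R))) {N : Type u} [AddCommGroup N] [Module R N]
    (hN : IsFiniteLength R N) : syzygiesIn P (.of R N) := by
  have : Projective (ModuleCat.of R R) := (IsProjective.iff_projective R).1 inferInstance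
  have htop : syzygiesIn P (.of R (R ⧸ Ring.jacobson R)) :=
    (syzygiesIn_X₃_iff_of_shortExact hP (shortExact_subtype_mkQ (Ring.jacobson R))).2 hJ
  refine prop_of_isFiniteLength (fun Z _ ↦ ?_) (fun S _ ↦ ?_) hN
  · exact (syzygiesIn P).prop_of_retract ((ModuleCat.isZero_of_subsingleton Z).retract _) htop
  · exact (syzygiesIn P).prop_of_retract (nonempty_retract_quotient_jacobson S).some htop

end FiniteLength

section Ext

universe v u w

theorem exists_finset_eq_sum_dual {R : Type u} [Ring R] {M : Type v} [AddCommGroup M] [Module R M]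
    [Module.Finite R M] {P : Type v} [AddCommGroup P] [Module R P] [Module.Projective R P]
    (f : M →ₗ[R] P) :
    ∃ (T : Finset P) (φ : P → Module.Dual R M), ∀ m, f m = ∑ x ∈ T, φ x m • x := by
  obtain ⟨s, hs⟩ := Module.projective_def'.1 ‹Module.Projective R P›
  obtain ⟨G, hG⟩ := Module.Finite.iff_fg.1 (Module.Finite.range (s ∘ₗ f))
  classical
  refine ⟨G.biUnion Finsupp.support, fun x ↦ Finsupp.lapply x ∘ₗ s ∘ₗ f, fun m ↦ ?_⟩
  have hm : s (f m) ∈ Finsupp.supported R R (G.biUnion Finsupp.support : Set P) := by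
    have := Finsupp.span_le_supported_biUnion_support R (G : Set (P →₀ R))
    rw [hG] at this
    simpa using this ⟨m, rfl⟩
  calc f m = Finsupp.linearCombination R id (s (f m)) := (LinearMap.congr_fun hs (f m)).symm
    _ = _ := Finsupp.linearCombination_apply_of_mem_supported R hm

theorem exists_injective_pi {R : Type u} [Ring R] {M : Type v} [AddCommGroup M] [Module R M]
    [Module.Finite R M] {P : Type v} [AddCommGroup P] [Module R P] [Module.Projective R P]
    {f : M →ₗ[R] P} (hf : Function.Injective f) :
    ∃ (T : Finset P) (g : M →ₗ[R] T → R), Function.Injective g := by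
  obtain ⟨T, φ, hφ⟩ := exists_finset_eq_sum_dual f
  refine ⟨T, LinearMap.pi fun x ↦ φ x, fun m n hmn ↦ hf ?_⟩
  rw [hφ, hφ]
  exact Finset.sum_congr rfl fun x hx ↦ congrArg (· • x) (congr_fun hmn ⟨x, hx⟩)

theorem subsingleton_abelianExt_of_subsingleton_ext {k : Type w} [Ring k] {C : Type u}
    [Category.{v} C] [Abelian C] [Linear k C] [EnoughProjectives C] [HasExt.{v} C] {X Y : C}
    {n : ℕ}
    (h : Subsingleton (((Ext k C (n + 1)).obj (op X)).obj Y)) :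
    Subsingleton (Abelian.Ext X Y (n + 1)) := by
  let Q := projectiveResolution X
  have hz : Limits.IsZero ((Q.complex.linearYonedaObj k Y).homology (n + 1)) :=
    (ModuleCat.isZero_of_subsingleton _).of_iso (Q.isoExt (n + 1) Y).symm
  rw [← HomologicalComplex.exactAt_iff_isZero_homology,
    HomologicalComplex.exactAt_iff' _ n (n + 1) (n + 2) (by simp) (by simp),
    ShortComplex.moduleCat_exact_iff] at hz
  refine subsingleton_of_forall_eq 0 fun α ↦ ?_
  obtain ⟨f, hf, rfl⟩ := Q.extMk_surjective α (n + 2) rfl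
  exact (Q.extMk_eq_zero_iff f _ _ hf n rfl).2 (hz f hf)

-- `P` may be infinitely generated: a class in `Ext¹(M, P)` comes from a map out of the finitely
-- generated syzygy `ker p`, and such a map factors through a finite free module.
theorem subsingleton_ext_projective {R : Type u} [Ring R] {M : ModuleCat.{u} R}
    [Module.FinitePresentation R M] (hM : Subsingleton (Abelian.Ext M (.of R R) 1))
    (P : ModuleCat.{u} R) [Module.Projective R P] : Subsingleton (Abelian.Ext M P 1) := by
  refine subsingleton_of_forall_eq 0 fun α ↦ ?_
  obtain ⟨n, p, hp⟩ := Module.Finite.exists_fin' R M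
  have hS := LinearMap.shortExact_shortComplexKer hp
  have : Projective p.shortComplexKer.X₂ :=
    (IsProjective.iff_projective (Fin n → R)).1 inferInstance
  have : Module.Finite R p.ker := .of_fg (Module.FinitePresentation.fg_ker p hp)
  obtain ⟨β, rfl⟩ := Abelian.Ext.contravariant_sequence_exact₃ hS P α
    (Abelian.Ext.eq_zero_of_projective _) (add_comm 1 0)
  obtain ⟨u, rfl⟩ := Abelian.Ext.homEquiv₀.symm.surjective β
  obtain ⟨T, φ, hφ⟩ := exists_finset_eq_sum_dual u.hom
  have hu : u = ∑ x : T, ModuleCat.ofHom (φ x) ≫ ModuleCat.ofHom (.toSpanSingleton R P x) := by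
    ext m
    simp [hφ, ModuleCat.hom_sum, ← Finset.sum_coe_sort T]
  calc hS.extClass.comp (Abelian.Ext.mk₀ u) (add_comm 1 0)
    _ = ∑ x : T, (hS.extClass.comp (.mk₀ (ModuleCat.ofHom (φ x))) (add_comm 1 0)).comp
          (.mk₀ (ModuleCat.ofHom (.toSpanSingleton R P x))) (add_zero 1) := by
      simp only [hu, Abelian.Ext.mk₀_sum, Abelian.Ext.comp_sum, ← Abelian.Ext.mk₀_comp_mk₀,
        Abelian.Ext.comp_assoc_of_third_deg_zero]
    _ = 0 := Finset.sum_eq_zero fun x _ ↦ by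
      rw [Subsingleton.elim (hS.extClass.comp _ _) 0, Abelian.Ext.zero_comp]

theorem exists_comp_eq_of_subsingleton_ext {C : Type u} [Category.{v} C] [Abelian C]
    [HasExt.{v} C] {S : ShortComplex C} (hS : S.ShortExact) {X : C}
    (h : Subsingleton (Abelian.Ext X S.X₁ 1)) (f : X ⟶ S.X₃) : ∃ g : X ⟶ S.X₂, g ≫ S.g = f := by
  obtain ⟨β, hβ⟩ := Abelian.Ext.covariant_sequence_exact₃ X hS (.mk₀ f) (zero_add 1)
    (Subsingleton.elim _ _)
  obtain ⟨g, rfl⟩ := Abelian.Ext.homEquiv₀.symm.surjective β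
  refine ⟨g, Abelian.Ext.homEquiv₀.symm.injective ?_⟩
  simpa using hβ

end Ext

section Torsionless

universe u

theorem exists_injective_pi_of_subsingleton_ext {R : Type} [Ring R]
    (hpd : ∀ I : ModuleCat.{0} R, Module.Injective R I → ProjDimLE1 R I) {M : ModuleCat.{0} R}
    [Module.FinitePresentation R M] (hM : Subsingleton (Abelian.Ext M (.of R R) 1)) :
    ∃ (T : Type) (_ : Finite T) (g : M →ₗ[R] T → R), Function.Injective g := by
  let I : ModuleCat.{0} R := Injective.under M
  have : Injective (ModuleCat.of R I) := Injective.injective_under M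
  obtain ⟨P₀, P₁, g, f, _, _, hg, hf, hfg⟩ :=
    hpd I (Module.injective_module_of_injective_object R I)
  have hS := ModuleCat.shortComplex_shortExact
    (ModuleCat.shortComplexOfCompEqZero f g hfg.linearMap_comp_eq_zero) hfg hf hg
  obtain ⟨j, hj⟩ := exists_comp_eq_of_subsingleton_ext hS
    (subsingleton_ext_projective hM P₁) (Injective.ι M)
  have : Mono j := mono_of_mono_fac hj
  obtain ⟨T, i, hi⟩ := exists_injective_pi ((ModuleCat.mono_iff_injective j).1 this)
  exact ⟨T, inferInstance, i, hi⟩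

theorem prop_of_injective_pi {R : Type u} [Ring R] [IsArtinianRing R]
    {P : ObjectProperty (ModuleCat.{u} R)} [P.IsClosedUnderExtensions] [P.IsStableUnderRetracts]
    (hP : isProjective _ ≤ P) (hJ : P (.of R (Ring.jacobson R))) {M : ModuleCat.{u} R} {T : Type u}
    [Finite T] {g : M →ₗ[R] T → R} (hg : Function.Injective g) : P M := by
  have : IsSemisimpleModule R (R ⧸ Ring.jacobson R) :=
    (IsArtinian.isSemisimpleModule_iff_jacobson _ _).2 (Module.jacobson_quotient_jacobson R R)
  let S := ModuleCat.shortComplexOfCompEqZero g g.range.mkQ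
    (LinearMap.exact_map_mkQ_range g).linearMap_comp_eq_zero
  have hS : S.ShortExact := ModuleCat.shortComplex_shortExact S
    (LinearMap.exact_map_mkQ_range g) hg g.range.mkQ_surjective
  have : Projective S.X₂ := (IsProjective.iff_projective (T → R)).1 inferInstance
  have hlen : IsFiniteLength R ((T → R) ⧸ g.range) :=
    isFiniteLength_iff_isNoetherian_isArtinian.2 ⟨inferInstance, inferInstance⟩
  exact (syzygiesIn_X₃_iff_of_shortExact hP hS).1 (syzygiesIn_of_isFiniteLength hP hJ hlen)

end Torsionless

section GenRad

variable {A : Type} [Ring A]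

instance isClosedUnderExtensions_genRad :
    ObjectProperty.IsClosedUnderExtensions (GenRad A) where
  prop_X₂_of_shortExact {S} hS h₁ h₃ :=
    .ext S.X₁ S.X₂ S.X₃ S.f.hom S.g.hom hS.moduleCat_injective_f hS.moduleCat_surjective_g
      ((ShortComplex.ShortExact.moduleCat_exact_iff_function_exact S).1 hS.exact) h₁ h₃

instance isStableUnderRetracts_genRad : ObjectProperty.IsStableUnderRetracts (GenRad A) where
  of_retract {M Y} h hY := .summand M Y h.i.hom h.r.hom (ModuleCat.hom_ext_iff.1 h.retract) hY

theorem isProjective_le_genRad : isProjective (ModuleCat.{0} Aᵐᵒᵖ) ≤ GenRad A :=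
  fun M hM ↦ .proj M ((IsProjective.iff_projective M).2 hM)

/-- The regular right module `A` as the left regular module of `Aᵐᵒᵖ`. -/
def opRegularEquiv (A : Type) [Ring A] : A ≃ₗ[Aᵐᵒᵖ] Aᵐᵒᵖ where
  __ := opAddEquiv
  map_smul' r a := by simp [smul_eq_mul_unop]

theorem genRad_jacobson : GenRad A (.of Aᵐᵒᵖ (Ring.jacobson Aᵐᵒᵖ)) :=
  .gen _ ⟨(opRegularEquiv A).symm.ofSubmodules _ _
    (Module.map_jacobson_of_bijective (opRegularEquiv A).symm.bijective)⟩

theorem IsCM.subsingleton_ext {k : Type} [Field k] [Algebra k A] {M : ModuleCat.{0} Aᵐᵒᵖ}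
    (hM : IsCM k A M) : Subsingleton (Abelian.Ext M (.of Aᵐᵒᵖ Aᵐᵒᵖ) 1) := by
  have e : rext1 k A M (.of Aᵐᵒᵖ A) ≅ rext1 k A M (.of Aᵐᵒᵖ Aᵐᵒᵖ) :=
    ((Ext k (ModuleCat.{0} Aᵐᵒᵖ) 1).obj (op M)).mapIso (opRegularEquiv A).toModuleIso
  have hM : Subsingleton (rext1 k A M (.of Aᵐᵒᵖ A)) := hM
  have : Subsingleton (rext1 k A M (.of Aᵐᵒᵖ Aᵐᵒᵖ)) := e.toLinearEquiv.symm.subsingleton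
  exact subsingleton_abelianExt_of_subsingleton_ext this

end GenRad

theorem stable_cmp_generated_by_radical_general (k A : Type) [Field k] [Ring A] [Algebra k A]
    [IsArtinianRing Aᵐᵒᵖ]
    (hpd : ∀ I : ModuleCat.{0} Aᵐᵒᵖ, Module.Injective Aᵐᵒᵖ I → ProjDimLE1 Aᵐᵒᵖ I)
    (M : ModuleCat.{0} Aᵐᵒᵖ) [Module.Finite Aᵐᵒᵖ M] (hM : IsCM k A M) : GenRad A M := by
  have := Module.finitePresentation_of_finite Aᵐᵒᵖ M
  obtain ⟨T, _, g, hg⟩ := exists_injective_pi_of_subsingleton_ext hpd hM.subsingleton_ext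
  exact prop_of_injective_pi isProjective_le_genRad genRad_jacobson hg

/-- Let `A` be an Iwanaga-Gorenstein algebra of Gorenstein dimension at
most 1. Then the stable Cohen-Macaulay category of `A` is generated, under extensions and
direct summands, by the module `rad A` (the direct sum of the radicals of the
indecomposable projective modules). -/
theorem stable_cmp_generated_by_radical
    (k A : Type) [Field k] [IsAlgClosed k] [Ring A] [Algebra k A] [FiniteDimensional k A]
    (hIG : IwanagaGorenstein1 Aᵐᵒᵖ) :
    ∀ M : ModuleCat.{0} Aᵐᵒᵖ, Module.Finite Aᵐᵒᵖ M → IsCM k A M → GenRad A M := by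
  have := IsArtinianRing.of_finite k Aᵐᵒᵖ
  exact fun M _ hM ↦ stable_cmp_generated_by_radical_general k A hIG.2 M hM
end
end

section
/- Let A be a 2-Calabi-Yau tilted algebra, i.e., A = End_C(T) for a cluster-tilting object T in a 2-Calabi-Yau triangulated category C, and let e_i be the primitive idempotent corresponding to an indecomposable summand T_i of T. Then the quotient B = A/A e_i A is again a 2-Calabi-Yau tilted algebra; explicitly, B ≅ End_{C'}(T/T_i) where C' = T_i^⊥/(T_i) is the Iyama-Yoshino reduction of C at T_i. -/
noncomputable section

open CategoryTheory Opposite DirectSum MulOpposite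

/-- A witness that `B` is a 2-Calabi-Yau tilted algebra: a Hom-finite, idempotent
complete (hence Krull-Schmidt), `k`-linear triangulated 2-Calabi-Yau category `C`
together with a cluster-tilting object `T` such that `B ≅ End_C T`. -/
structure CYTiltedWitness (k : Type) [Field k] (B : Type) [Ring B] [Algebra k B] :
    Type 1 where
  C : Type
  [cat : Category.{0} C]
  [pre : Preadditive C]
  [lin : Linear k C]
  [shift : HasShift C ℤ]
  [zero : Limits.HasZeroObject C]
  [shiftAdd : ∀ n : ℤ, (shiftFunctor C n).Additive]
  [tri : Pretriangulated C]
  [biprod : Limits.HasFiniteBiproducts C]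
  [idem : IsIdempotentComplete C]
  homFinite : ∀ X Y : C, FiniteDimensional k (X ⟶ Y)
  /-- the 2-Calabi-Yau property: a Serre duality `D Hom(X,Y) ≅ Hom(Y, X⟦2⟧)` -/
  serre : ∀ X Y : C, Nonempty ((X ⟶ Y) ≃ₗ[k] Module.Dual k (Y ⟶ X⟦(2:ℤ)⟧))
  T : C
  /-- `T` is cluster-tilting: `add T = {X | Ext¹(T, X) = 0}` -/
  clusterTilting : ∀ X : C, (∀ f : T ⟶ X⟦(1:ℤ)⟧, f = 0) ↔
    ∃ (n : ℕ) (s : X ⟶ ⨁ (fun _ : Fin n => T)) (r : (⨁ (fun _ : Fin n => T)) ⟶ X),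
      s ≫ r = 𝟙 X
  algIso : Nonempty (B ≃ₐ[k] End T)

/-- `B` is a 2-Calabi-Yau tilted algebra. -/
def IsCYTilted (k : Type) [Field k] (B : Type) [Ring B] [Algebra k B] : Prop :=
  Nonempty (CYTiltedWitness k B)

/-!
Let `D = add T_i`. By Serre duality the conditions `Ext¹(D, X) = 0` and `Ext¹(X, D) = 0` define the
same subcategory `D^⊥`. Every `X` in `D^⊥` sits in triangles `X ⟶ W ⟶ X' ⟶ X⟦1⟧` with `W` in `D` and
`X'` in `D^⊥`, and likewise on the other side, so it has a complete `D`-resolution. Modulo `[D]` the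
resolution is functorial, and translating it is the shift of `C' = D^⊥/[D]`. A morphism `X ⟶ Y` is
completed to a triangle of `C'` by the object `Z` of a triangle `Y ⟶ Z ⟶ X' ⟶ Y⟦1⟧` of `C`, whose
last morphism is the composite `X' ⟶ X⟦1⟧ ⟶ Y⟦1⟧`. Writing `Hom(X, Y)` and `Hom(Y, X⟦2⟧)` in `C'` as
Hom spaces of `C` reduces the 2-Calabi-Yau property of `C'` to that of `C`, and `Ext¹` vanishes in
`C'` exactly when it does in `C`, so the other summand `T'` of `T` is cluster-tilting in `C'`.
Finally, both the quotient of `End T` by the ideal of `e_i` and `End_{C'} T'` are quotients of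
`End_C T'` by the ideal of endomorphisms factoring through `add T_i`.
-/

namespace IyamaYoshino

open Category Limits Preadditive Pretriangulated

theorem exists_int_chain {P : ℤ → Sort*} (r : ∀ i j, i + 1 = j → P i → P j → Prop)
    (up : ∀ i j h x, ∃ y, r i j h x y) (down : ∀ i j h y, ∃ x, r i j h x y) (x₀ : P 0) :
    ∃ f : ∀ n, P n, f 0 = x₀ ∧ ∀ i j h, r i j h (f i) (f j) := by
  choose succ r_succ using up
  choose pred r_pred using down
  let f (n : ℤ) : P n := n.inductionOn' 0 x₀
    (fun i _ => succ i (i + 1) rfl) (fun j _ => pred (j - 1) j (sub_add_cancel j 1))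
  refine ⟨f, Int.inductionOn'_self, fun i j h => ?_⟩
  rcases le_or_gt 0 i with hi | hi
  · subst h
    have hf : f (i + 1) = succ i (i + 1) rfl (f i) := Int.inductionOn'_add_one hi
    exact hf ▸ r_succ i (i + 1) rfl (f i)
  · obtain rfl : i = j - 1 := by omega
    have hf : f (j - 1) = pred (j - 1) j h (f j) := Int.inductionOn'_sub_one (by omega)
    exact hf ▸ r_pred (j - 1) j h (f j)

section IdempotentLifting

variable {S : Type*} [Ring S]

theorem exists_isIdempotentElem_map_eq_of_isArtinianRing {A : Type*} [CommRing A]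
    [IsArtinianRing A] (f : A →+* S) {e : A} (he : IsIdempotentElem (f e)) :
    ∃ g : A, IsIdempotentElem g ∧ f g = f e := by
  obtain ⟨n, y, hy⟩ := IsArtinian.exists_pow_succ_smul_dvd e (1 : A)
  simp only [smul_eq_mul, mul_one, Nat.succ_eq_add_one] at hy
  have absorb (m : ℕ) : e ^ (n + 1) * (e * y) ^ m = e ^ (n + 1) := by
    induction m with
    | zero => rw [pow_zero, mul_one]
    | succ m ih => linear_combination (e * y) * ih + e * hy
  refine ⟨(e * y) ^ (n + 1), ?_, ?_⟩
  · change (e * y) ^ (n + 1) * (e * y) ^ (n + 1) = _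
    linear_combination y ^ (n + 1) * absorb (n + 1)
  · have hfe : f (e ^ (n + 1)) = f e := by rw [map_pow, he.pow_succ_eq]
    calc f ((e * y) ^ (n + 1)) = f (e ^ (n + 1)) * f (y ^ (n + 1)) := by rw [mul_pow, map_mul]
      _ = f (e ^ (n + 1)) * f (e ^ (n + 1)) * f (y ^ (n + 1)) := by rw [hfe, he.eq]
      _ = f (e ^ (n + 1) * (e * y) ^ (n + 1)) := by simp only [mul_pow, map_mul, mul_assoc]
      _ = f e := by rw [absorb, hfe]

theorem exists_isIdempotentElem_map_eq (k : Type*) [Field k] {R : Type*} [Ring R] [Algebra k R]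
    [FiniteDimensional k R] (f : R →+* S) {e : R} (he : IsIdempotentElem (f e)) :
    ∃ g : R, IsIdempotentElem g ∧ f g = f e := by
  let A := Algebra.adjoin k {e}
  have : IsMulCommutative A := Algebra.isMulCommutative_adjoin k (by simp)
  have : IsArtinianRing A := IsArtinianRing.of_finite k A
  obtain ⟨g, hg, hfg⟩ := exists_isIdempotentElem_map_eq_of_isArtinianRing
    (A := A) (f.comp A.val.toRingHom) (e := ⟨e, Algebra.self_mem_adjoin_singleton k e⟩) he
  exact ⟨g, congrArg Subtype.val hg, hfg⟩

end IdempotentLifting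

section ExactTriangles

variable {C : Type*} [Category* C] [Preadditive C]

/-- `f` is a weak kernel of `g`: it is annihilated by `g`, and every morphism annihilated by `g`
factors through `f`, not necessarily uniquely. -/
def IsWeakKernel {X Y Z : C} (f : X ⟶ Y) (g : Y ⟶ Z) : Prop :=
  f ≫ g = 0 ∧ ∀ ⦃W : C⦄ (t : W ⟶ Y), t ≫ g = 0 → ∃ l, l ≫ f = t

namespace IsWeakKernel

variable {X Y Z : C} {f : X ⟶ Y} {g : Y ⟶ Z} (H : IsWeakKernel f g)

include H

theorem neg_left : IsWeakKernel (-f) g :=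
  ⟨by rw [neg_comp, H.1, neg_zero], fun _ t ht =>
    have ⟨l, hl⟩ := H.2 t ht
    ⟨-l, by rw [neg_comp, comp_neg, neg_neg, hl]⟩⟩

theorem neg_right : IsWeakKernel f (-g) :=
  ⟨by rw [comp_neg, H.1, neg_zero], fun _ t ht => H.2 t (by rwa [comp_neg, neg_eq_zero] at ht)⟩

theorem map (F : C ⥤ C) [F.IsEquivalence] [F.Additive] : IsWeakKernel (F.map f) (F.map g) := by
  refine ⟨by rw [← F.map_comp, H.1, F.map_zero], fun W t ht => ?_⟩
  obtain ⟨s, hs⟩ := F.map_surjective ((F.objObjPreimageIso W).hom ≫ t)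
  obtain ⟨l, rfl⟩ := H.2 s <| F.map_injective <| by
    rw [F.map_comp, hs, assoc, ht, comp_zero, F.map_zero]
  exact ⟨(F.objObjPreimageIso W).inv ≫ F.map l, by
    rw [assoc, ← F.map_comp, hs, Iso.inv_hom_id_assoc]⟩

theorem of_iso {X' Y' Z' : C} {f' : X' ⟶ Y'} {g' : Y' ⟶ Z'} (e₁ : X' ≅ X) (e₂ : Y' ≅ Y)
    (e₃ : Z' ≅ Z) (h₁ : f' ≫ e₂.hom = e₁.hom ≫ f) (h₂ : g' ≫ e₃.hom = e₂.hom ≫ g) :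
    IsWeakKernel f' g' := by
  refine ⟨?_, fun W t ht => ?_⟩
  · rw [← cancel_mono e₃.hom, assoc, h₂, reassoc_of% h₁, H.1, comp_zero, zero_comp]
  · obtain ⟨l, hl⟩ := H.2 (t ≫ e₂.hom) <| by rw [assoc, ← h₂, reassoc_of% ht, zero_comp]
    exact ⟨l ≫ e₁.inv, by
      rw [← cancel_mono e₂.hom, assoc, assoc, h₁, Iso.inv_hom_id_assoc, hl]⟩

end IsWeakKernel

variable [HasShift C ℤ]

/-- The candidate triangle `T` is sent to an exact sequence by every functor `Hom(W, -)`. -/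
structure IsExact (T : Triangle C) : Prop where
  mor₁ : IsWeakKernel T.mor₁ T.mor₂
  mor₂ : IsWeakKernel T.mor₂ T.mor₃
  mor₃ : IsWeakKernel T.mor₃ (T.mor₁⟦(1 : ℤ)⟧')

namespace IsExact

variable {T T' : Triangle C} (hT : IsExact T)

include hT

theorem isZero_obj₃ (h : IsIso T.mor₁) : IsZero T.obj₃ := by
  have h₂ : T.mor₂ = 0 := by rw [← cancel_epi T.mor₁, hT.mor₁.1, comp_zero]
  have h₃ : T.mor₃ = 0 := by rw [← cancel_mono (T.mor₁⟦(1 : ℤ)⟧'), hT.mor₃.1, zero_comp]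
  obtain ⟨l, hl⟩ := hT.mor₂.2 (𝟙 _) (by rw [h₃, comp_zero])
  rw [IsZero.iff_id_eq_zero, ← hl, h₂, comp_zero]

theorem rotate [(shiftFunctor C (1 : ℤ)).Additive] : IsExact T.rotate where
  mor₁ := hT.mor₂
  mor₂ := hT.mor₃.neg_right
  mor₃ := by
    have h : IsWeakKernel (-T.mor₁⟦(1 : ℤ)⟧') (T.mor₂⟦(1 : ℤ)⟧') :=
      (hT.mor₁.map (CategoryTheory.shiftFunctor C (1 : ℤ))).neg_left
    exact h

theorem of_iso (e : T' ≅ T) : IsExact T' where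
  mor₁ := hT.mor₁.of_iso (Triangle.π₁.mapIso e) (Triangle.π₂.mapIso e) (Triangle.π₃.mapIso e)
    e.hom.comm₁ e.hom.comm₂
  mor₂ := hT.mor₂.of_iso (Triangle.π₂.mapIso e) (Triangle.π₃.mapIso e)
    ((CategoryTheory.shiftFunctor C (1 : ℤ)).mapIso (Triangle.π₁.mapIso e)) e.hom.comm₂ e.hom.comm₃
  mor₃ := hT.mor₃.of_iso (Triangle.π₃.mapIso e)
    ((CategoryTheory.shiftFunctor C (1 : ℤ)).mapIso (Triangle.π₁.mapIso e))
    ((CategoryTheory.shiftFunctor C (1 : ℤ)).mapIso (Triangle.π₂.mapIso e)) e.hom.comm₃ <| by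
      change _ ≫ e.hom.hom₂⟦(1 : ℤ)⟧' = e.hom.hom₁⟦(1 : ℤ)⟧' ≫ _
      rw [← Functor.map_comp, e.hom.comm₁, Functor.map_comp]

end IsExact

omit [Preadditive C] in
theorem exists_hom_of_iso {T T' S S' : Triangle C} (i : T ≅ S) (i' : T' ≅ S')
    (H : ∀ f g, S.mor₁ ≫ g = f ≫ S'.mor₁ → ∃ φ : S ⟶ S', φ.hom₁ = f ∧ φ.hom₂ = g)
    (f : T.obj₁ ⟶ T'.obj₁) (g : T.obj₂ ⟶ T'.obj₂) (comm : T.mor₁ ≫ g = f ≫ T'.mor₁) :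
    ∃ φ : T ⟶ T', φ.hom₁ = f ∧ φ.hom₂ = g := by
  obtain ⟨φ, h₁, h₂⟩ := H (i.inv.hom₁ ≫ f ≫ i'.hom.hom₁) (i.inv.hom₂ ≫ g ≫ i'.hom.hom₂) <| by
    rw [← assoc, i.inv.comm₁, assoc, reassoc_of% comm, i'.hom.comm₁, assoc, assoc]
  exact ⟨i.hom ≫ φ ≫ i'.inv, by simp [h₁], by simp [h₂]⟩

theorem isIso_hom₃_of_isExact {T T' : Triangle C} (hT : IsExact T) (hT' : IsExact T')
    (φ : T ⟶ T') [IsIso φ.hom₁] [IsIso φ.hom₂] : IsIso φ.hom₃ := by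
  have eq_zero_of_comp {W : C} (t : W ⟶ T.obj₃) (ht : t ≫ φ.hom₃ = 0) : t = 0 := by
    obtain ⟨l, rfl⟩ := hT.mor₂.2 t <| by
      rw [← cancel_mono (φ.hom₁⟦(1 : ℤ)⟧'), assoc, φ.comm₃, reassoc_of% ht, zero_comp, zero_comp]
    obtain ⟨m, hm⟩ := hT'.mor₁.2 (l ≫ φ.hom₂) <| by rw [assoc, ← φ.comm₂, ← assoc, ht]
    obtain rfl : (m ≫ inv φ.hom₁) ≫ T.mor₁ = l := by
      rw [← cancel_mono φ.hom₂, ← hm, assoc, φ.comm₁, assoc, IsIso.inv_hom_id_assoc]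
    rw [assoc, hT.mor₁.1, comp_zero]
  obtain ⟨s, hs⟩ : ∃ s, s ≫ φ.hom₃ = 𝟙 T'.obj₃ := by
    obtain ⟨l, hl⟩ := hT.mor₃.2 (T'.mor₃ ≫ inv (φ.hom₁⟦(1 : ℤ)⟧')) <| by
      rw [← cancel_mono (φ.hom₂⟦(1 : ℤ)⟧'), assoc, assoc, ← Functor.map_comp, φ.comm₁,
        Functor.map_comp, IsIso.inv_hom_id_assoc, hT'.mor₃.1, zero_comp]
    obtain ⟨m, hm⟩ := hT'.mor₂.2 (𝟙 _ - l ≫ φ.hom₃) <| by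
      rw [sub_comp, id_comp, assoc, ← φ.comm₃, reassoc_of% hl, IsIso.inv_hom_id, comp_id, sub_self]
    exact ⟨l + m ≫ inv φ.hom₂ ≫ T.mor₂, by
      rw [add_comp, assoc, assoc, φ.comm₂, IsIso.inv_hom_id_assoc, hm, add_sub_cancel]⟩
  refine ⟨s, ?_, hs⟩
  rw [← sub_eq_zero]
  exact eq_zero_of_comp _ (by rw [sub_comp, assoc, hs, comp_id, id_comp, sub_self])

theorem isIso_of_isExact {T T' : Triangle C} (hT : IsExact T) (hT' : IsExact T') (φ : T ⟶ T')
    (h₁ : IsIso φ.hom₁) (h₂ : IsIso φ.hom₂) : IsIso φ :=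
  Triangle.isIso_of_isIsos φ h₁ h₂ (isIso_hom₃_of_isExact hT hT' φ)

/-- Candidate triangles that induce exact sequences satisfy the rotation axiom in both directions
as soon as they satisfy it in one, and thus form a pretriangulated structure. -/
abbrev pretriangulatedOfIsExact [HasZeroObject C] [∀ n : ℤ, (shiftFunctor C n).Additive]
    (dist : Set (Triangle C))
    (isExact : ∀ T ∈ dist, IsExact T)
    (isomorphic : ∀ T ∈ dist, ∀ T', (T' ≅ T) → T' ∈ dist)
    (contractible : ∀ X, contractibleTriangle X ∈ dist)
    (cocone : ∀ {X Y : C} (f : X ⟶ Y), ∃ Z g h, Triangle.mk (Z := Z) f g h ∈ dist)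
    (rotate : ∀ T ∈ dist, T.rotate ∈ dist)
    (complete : ∀ T ∈ dist, ∀ T' ∈ dist, ∀ (a : T.obj₁ ⟶ T'.obj₁) (b : T.obj₂ ⟶ T'.obj₂),
      T.mor₁ ≫ b = a ≫ T'.mor₁ → ∃ φ : T ⟶ T', φ.hom₁ = a ∧ φ.hom₂ = b) :
    Pretriangulated C where
  distinguishedTriangles := dist
  isomorphic_distinguished := isomorphic
  contractible_distinguished := contractible
  distinguished_cocone_triangle := cocone
  rotate_distinguished_triangle T := by
    refine ⟨rotate T, fun hT => ?_⟩
    obtain ⟨Z, g, h, hT'⟩ := cocone T.mor₁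
    have hT₃ := rotate _ (rotate _ hT)
    have hT'₃ := rotate _ (rotate _ (rotate _ hT'))
    obtain ⟨φ, h₁, h₂⟩ := complete _ hT₃ _ hT'₃ (𝟙 (T.obj₁⟦(1 : ℤ)⟧)) (𝟙 (T.obj₂⟦(1 : ℤ)⟧))
      ((comp_id _).trans (id_comp _).symm)
    have hφ : IsIso φ := isIso_of_isExact (isExact _ hT₃) (isExact _ hT'₃) φ
      (h₁ ▸ IsIso.id _) (h₂ ▸ IsIso.id _)
    exact isomorphic _ hT' _ <| (CategoryTheory.shiftFunctor (Triangle C) (1 : ℤ)).preimageIso <|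
      (rotateRotateRotateIso C).symm.app _ ≪≫ @asIso _ _ _ _ φ hφ ≪≫ (rotateRotateRotateIso C).app _
  complete_distinguished_triangle_morphism T T' hT hT' a b comm := by
    obtain ⟨φ, rfl, rfl⟩ := complete T hT T' hT' a b comm
    exact ⟨φ.hom₃, φ.comm₂, φ.comm₃⟩

end ExactTriangles

/-! ### Ideal quotients and orthogonals -/

section Ideal

variable {C : Type*} [Category* C] {D : ObjectProperty C}

variable (D) in
/-- Membership in the ideal `[D]` of morphisms factoring through an object satisfying `D`. -/
def FactorsThrough {X Y : C} (f : X ⟶ Y) : Prop :=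
  ∃ W, D W ∧ ∃ (u : X ⟶ W) (v : W ⟶ Y), u ≫ v = f

namespace FactorsThrough

variable {X Y Z : C}

theorem comp_left (f : X ⟶ Y) {g : Y ⟶ Z} : FactorsThrough D g → FactorsThrough D (f ≫ g)
  | ⟨W, hW, u, v, h⟩ => ⟨W, hW, f ≫ u, v, by rw [assoc, h]⟩

theorem comp_right {f : X ⟶ Y} (g : Y ⟶ Z) : FactorsThrough D f → FactorsThrough D (f ≫ g)
  | ⟨W, hW, u, v, h⟩ => ⟨W, hW, u, v ≫ g, by rw [← assoc, h]⟩

variable [Preadditive C]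

theorem neg {f : X ⟶ Y} : FactorsThrough D f → FactorsThrough D (-f)
  | ⟨W, hW, u, v, h⟩ => ⟨W, hW, u, -v, by rw [comp_neg, h]⟩

theorem smul {k : Type*} [Semiring k] [Linear k C] (c : k) {f : X ⟶ Y} :
    FactorsThrough D f → FactorsThrough D (c • f)
  | ⟨W, hW, u, v, h⟩ => ⟨W, hW, u, c • v, by rw [Linear.comp_smul, h]⟩

theorem zero [D.ContainsZero] : FactorsThrough D (0 : X ⟶ Y) :=
  have ⟨W, _, hW⟩ := D.exists_prop_of_containsZero
  ⟨W, hW, 0, 0, zero_comp⟩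

theorem add [HasBinaryBiproducts C] [D.IsClosedUnderBinaryProducts] {f g : X ⟶ Y} :
    FactorsThrough D f → FactorsThrough D g → FactorsThrough D (f + g)
  | ⟨W, hW, u, v, h⟩, ⟨W', hW', u', v', h'⟩ =>
    ⟨W ⊞ W', D.prop_of_isLimit (BinaryBiproduct.isLimit W W') (by rintro ⟨_ | _⟩ <;> assumption),
      biprod.lift u u', biprod.desc v v', by rw [biprod.lift_desc, h, h']⟩

end FactorsThrough

section Quotient

variable [Preadditive C]

variable (D) in
/-- Congruence modulo the ideal `[D]`. -/
def idealRel : HomRel C := fun _ _ f g => FactorsThrough D (f - g)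

section

variable (k : Type*) [Semiring k] [Linear k C]

theorem idealRel_smul (c : k) ⦃X Y : C⦄ (f g : X ⟶ Y) (h : idealRel D f g) :
    idealRel D (c • f) (c • g) := by
  simpa only [idealRel, smul_sub] using h.smul c

end

variable [HasBinaryBiproducts C] [D.IsClosedUnderBinaryProducts]

theorem idealRel_add ⦃X Y : C⦄ (f₁ f₂ g₁ g₂ : X ⟶ Y) (hf : idealRel D f₁ f₂)
    (hg : idealRel D g₁ g₂) : idealRel D (f₁ + g₁) (f₂ + g₂) := by
  simpa only [idealRel, add_sub_add_comm] using hf.add hg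

variable [D.ContainsZero]

instance : Congruence (idealRel D) where
  equivalence :=
    { refl f := by simpa [idealRel] using FactorsThrough.zero
      symm h := by simpa [idealRel] using h.neg
      trans h h' := by simpa [idealRel] using h.add h' }
  comp_left f _ _ h := by simpa [idealRel] using h.comp_left f
  comp_right g h := by simpa [idealRel] using h.comp_right g

variable (D) in
/-- The quotient category `C/[D]`. -/
abbrev IdealQuotient := CategoryTheory.Quotient (idealRel D)

variable (D) in
/-- The projection functor `C ⥤ C/[D]`. -/
abbrev toQuotient : C ⥤ IdealQuotient D := Quotient.functor (idealRel D)

instance : Preadditive (IdealQuotient D) := Quotient.preadditive _ idealRel_add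

instance : (toQuotient D).Additive := Quotient.functor_additive _ idealRel_add

section Linear

variable (k : Type*) [Semiring k] [Linear k C]

instance : Linear k (IdealQuotient D) := Quotient.linear k _ (idealRel_smul k)

instance : (toQuotient D).Linear k := Quotient.linear_functor k _ (idealRel_smul k)

end Linear

theorem toQuotient_map_eq_zero_iff {X Y : C} {f : X ⟶ Y} :
    (toQuotient D).map f = 0 ↔ FactorsThrough D f := by
  rw [← (toQuotient D).map_zero, Quotient.functor_map_eq_iff, idealRel, sub_zero]

theorem toQuotient_map_eq_iff {X Y : C} {f g : X ⟶ Y} :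
    (toQuotient D).map f = (toQuotient D).map g ↔ FactorsThrough D (f - g) :=
  Quotient.functor_map_eq_iff _ f g

end Quotient

end Ideal

section DistTriang

variable {C : Type*} [Category* C] [Preadditive C] [HasZeroObject C] [HasShift C ℤ]
  [∀ n : ℤ, (shiftFunctor C n).Additive] [Pretriangulated C]

namespace DistTriang

variable {X Y Z W : C} {f : X ⟶ Y} {g : Y ⟶ Z} {h : Z ⟶ X⟦(1 : ℤ)⟧}
  (hT : Triangle.mk f g h ∈ distTriang C)

include hT

theorem comp_zero₁₂ : f ≫ g = 0 := comp_distTriang_mor_zero₁₂ _ hT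

theorem comp_zero₂₃ : g ≫ h = 0 := comp_distTriang_mor_zero₂₃ _ hT

theorem comp_zero₃₁ : h ≫ f⟦(1 : ℤ)⟧' = 0 := comp_distTriang_mor_zero₃₁ _ hT

theorem lift₁ (t : W ⟶ X⟦(1 : ℤ)⟧) (ht : t ≫ f⟦(1 : ℤ)⟧' = 0) : ∃ s, s ≫ h = t :=
  have ⟨s, hs⟩ := Triangle.coyoneda_exact₁ _ hT t ht
  ⟨s, hs.symm⟩

theorem lift₂ (t : W ⟶ Y) (ht : t ≫ g = 0) : ∃ s, s ≫ f = t :=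
  have ⟨s, hs⟩ := Triangle.coyoneda_exact₂ _ hT t ht
  ⟨s, hs.symm⟩

theorem lift₃ (t : W ⟶ Z) (ht : t ≫ h = 0) : ∃ s, s ≫ g = t :=
  have ⟨s, hs⟩ := Triangle.coyoneda_exact₃ _ hT t ht
  ⟨s, hs.symm⟩

theorem desc₁ (t : X ⟶ W) (ht : h ≫ t⟦(1 : ℤ)⟧' = 0) : ∃ s, f ≫ s = t := by
  obtain ⟨s, hs⟩ := Triangle.yoneda_exact₃ _ (rot_of_distTriang _ hT) (t⟦1⟧') ht
  obtain ⟨s : Y ⟶ W, rfl⟩ := (shiftFunctor C (1 : ℤ)).map_surjective s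
  refine ⟨-s, (shiftFunctor C (1 : ℤ)).map_injective ?_⟩
  rw [Functor.map_comp, Functor.map_neg, comp_neg, ← neg_comp]
  exact hs.symm

theorem desc₂ (t : Y ⟶ W) (ht : f ≫ t = 0) : ∃ s, g ≫ s = t :=
  have ⟨s, hs⟩ := Triangle.yoneda_exact₂ _ hT t ht
  ⟨s, hs.symm⟩

theorem desc₃ (t : Z ⟶ W) (ht : g ≫ t = 0) : ∃ s, h ≫ s = t :=
  have ⟨s, hs⟩ := Triangle.yoneda_exact₃ _ hT t ht
  ⟨s, hs.symm⟩

theorem rotate : Triangle.mk g h (-f⟦(1 : ℤ)⟧') ∈ distTriang C := rot_of_distTriang _ hT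

theorem exists_hom₂ {X' Y' Z' : C} {f' : X' ⟶ Y'} {g' : Y' ⟶ Z'} {h' : Z' ⟶ X'⟦(1 : ℤ)⟧}
    (hT' : Triangle.mk f' g' h' ∈ distTriang C) (a : X ⟶ X') (c : Z ⟶ Z')
    (comm : h ≫ a⟦(1 : ℤ)⟧' = c ≫ h') : ∃ b, f ≫ b = a ≫ f' ∧ g ≫ c = b ≫ g' :=
  complete_distinguished_triangle_morphism₂ _ _ hT hT' a c comm

end DistTriang

end DistTriang

section Syzygies

variable {C : Type*} [Category* C] [Preadditive C] [HasShift C ℤ]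

section Perp

variable (D : ObjectProperty C)

/-- The right `Ext¹`-orthogonal of `D`. -/
def rightPerp : ObjectProperty C := fun A => ∀ ⦃W : C⦄, D W → ∀ f : W ⟶ A⟦(1 : ℤ)⟧, f = 0

/-- The left `Ext¹`-orthogonal of `D`. -/
def leftPerp : ObjectProperty C := fun A => ∀ ⦃W : C⦄, D W → ∀ f : A ⟶ W⟦(1 : ℤ)⟧, f = 0

/-- The hypotheses under which `rightPerp D` modulo `[D]` is a triangulated category: `D` is
additive, rigid and functorially finite, and its two `Ext¹`-orthogonals coincide. -/
class AdmitsReduction : Prop extends D.ContainsZero, D.IsClosedUnderBinaryProducts where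
  le_rightPerp : D ≤ rightPerp D
  leftPerp_eq_rightPerp : leftPerp D = rightPerp D
  exists_leftApproximation (X : C) :
    ∃ W, D W ∧ ∃ α : X ⟶ W, ∀ W', D W' → ∀ f : X ⟶ W', ∃ g, α ≫ g = f
  exists_rightApproximation (X : C) :
    ∃ W, D W ∧ ∃ β : W ⟶ X, ∀ W', D W' → ∀ f : W' ⟶ X, ∃ g, g ≫ β = f

end Perp

variable {D : ObjectProperty C}

theorem comp_eq_zero_of_rightPerp {X Y A : C} {f : X ⟶ Y} (hf : FactorsThrough D f)
    (hA : rightPerp D A) (c : Y ⟶ A⟦(1 : ℤ)⟧) : f ≫ c = 0 := by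
  obtain ⟨W, hW, u, v, rfl⟩ := hf
  rw [assoc, hA hW (v ≫ c), comp_zero]

theorem comp_shift_eq_zero_of_leftPerp {X Y B : C} {f : X ⟶ Y} (hf : FactorsThrough D f)
    (hB : leftPerp D B) (c : B ⟶ X⟦(1 : ℤ)⟧) : c ≫ f⟦(1 : ℤ)⟧' = 0 := by
  obtain ⟨W, hW, u, v, rfl⟩ := hf
  rw [Functor.map_comp, ← assoc, hB hW (c ≫ u⟦1⟧'), zero_comp]

theorem rightPerp_of_leftPerp [AdmitsReduction D] {A : C} (hA : leftPerp D A) : rightPerp D A :=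
  AdmitsReduction.leftPerp_eq_rightPerp (D := D) ▸ hA

theorem leftPerp_of_rightPerp [AdmitsReduction D] {A : C} (hA : rightPerp D A) : leftPerp D A :=
  AdmitsReduction.leftPerp_eq_rightPerp (D := D) ▸ hA

variable [∀ n : ℤ, (shiftFunctor C n).Additive] [HasZeroObject C] [Pretriangulated C]

theorem leftPerp_of_distTriang {X Y Z : C} {f : X ⟶ Y} {g : Y ⟶ Z} {h : Z ⟶ X⟦(1 : ℤ)⟧}
    (hT : Triangle.mk f g h ∈ distTriang C) (hX : leftPerp D X) (hZ : leftPerp D Z) :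
    leftPerp D Y := by
  intro W hW t
  obtain ⟨s, rfl⟩ := DistTriang.desc₂ hT t (hX hW _)
  rw [hZ hW s, comp_zero]

variable (D) in
/-- `γ` is the connecting morphism of a distinguished triangle `A ⟶ W ⟶ B ⟶ A⟦1⟧` with `W` in `D`,
so that `A` is a syzygy of `B`. -/
def IsSyzygy {A B : C} (γ : B ⟶ A⟦(1 : ℤ)⟧) : Prop :=
  ∃ (W : C) (α : A ⟶ W) (β : W ⟶ B), D W ∧ Triangle.mk α β γ ∈ distTriang C

namespace IsSyzygy

variable {A B : C} {γ : B ⟶ A⟦(1 : ℤ)⟧} (hγ : IsSyzygy D γ)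

include hγ

theorem factorsThrough_of_comp_eq_zero {X : C} {v : X ⟶ B} (hv : v ≫ γ = 0) :
    FactorsThrough D v := by
  obtain ⟨W, α, β, hW, hT⟩ := hγ
  obtain ⟨u, hu⟩ := DistTriang.lift₃ hT v hv
  exact ⟨W, hW, u, β, hu⟩

theorem factorsThrough_of_comp_shift_eq_zero {Y : C} {u : A ⟶ Y} (hu : γ ≫ u⟦(1 : ℤ)⟧' = 0) :
    FactorsThrough D u := by
  obtain ⟨W, α, β, hW, hT⟩ := hγ
  obtain ⟨v, hv⟩ := DistTriang.desc₁ hT u hu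
  exact ⟨W, hW, α, v, hv⟩

theorem exists_comp_eq {X : C} (hX : leftPerp D X) (c : X ⟶ A⟦(1 : ℤ)⟧) : ∃ v, v ≫ γ = c := by
  obtain ⟨W, α, β, hW, hT⟩ := hγ
  exact DistTriang.lift₁ hT c (hX hW _)

theorem exists_comp_shift_eq {Y : C} (hY : rightPerp D Y) (c : B ⟶ Y⟦(1 : ℤ)⟧) :
    ∃ u : A ⟶ Y, γ ≫ u⟦(1 : ℤ)⟧' = c := by
  obtain ⟨W, α, β, hW, hT⟩ := hγ
  obtain ⟨g, hg⟩ := DistTriang.desc₃ hT c (hY hW _)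
  obtain ⟨u, rfl⟩ := (shiftFunctor C (1 : ℤ)).map_surjective g
  exact ⟨u, hg⟩

end IsSyzygy

variable (D) [AdmitsReduction D]

theorem exists_isSyzygy_of_source (A : C) :
    ∃ B, rightPerp D B ∧ ∃ γ : B ⟶ A⟦(1 : ℤ)⟧, IsSyzygy D γ := by
  obtain ⟨W, hW, α, hα⟩ := AdmitsReduction.exists_leftApproximation (D := D) A
  obtain ⟨B, β, γ, hT⟩ := distinguished_cocone_triangle α
  refine ⟨B, rightPerp_of_leftPerp fun W' hW' f => ?_, γ, W, α, β, hW, hT⟩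
  obtain ⟨g, rfl⟩ := DistTriang.desc₃ hT f (AdmitsReduction.le_rightPerp _ hW' hW _)
  obtain ⟨u, rfl⟩ := (shiftFunctor C (1 : ℤ)).map_surjective g
  obtain ⟨v, rfl⟩ := hα W' hW' u
  rw [Functor.map_comp, ← assoc, DistTriang.comp_zero₃₁ hT, zero_comp]

theorem exists_isSyzygy_of_target (B : C) :
    ∃ A, rightPerp D A ∧ ∃ γ : B ⟶ A⟦(1 : ℤ)⟧, IsSyzygy D γ := by
  obtain ⟨W, hW, β, hβ⟩ := AdmitsReduction.exists_rightApproximation (D := D) B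
  obtain ⟨A, α, γ, hT⟩ := distinguished_cocone_triangle₁ β
  refine ⟨A, fun W' hW' f => ?_, γ, W, α, β, hW, hT⟩
  obtain ⟨g, rfl⟩ := DistTriang.lift₁ hT f (AdmitsReduction.le_rightPerp _ hW hW' _)
  obtain ⟨v, rfl⟩ := hβ W' hW' g
  rw [assoc, DistTriang.comp_zero₂₃ hT, comp_zero]

end Syzygies

/-! ### The reduction and its shift -/

section Reduction

variable {C : Type*} [Category* C] [Preadditive C] [HasShift C ℤ] [HasZeroObject C]
  [∀ n : ℤ, (shiftFunctor C n).Additive] [Pretriangulated C]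

/-- The Iyama–Yoshino reduction of `C` at `D`. An object is a complete `D`-resolution in
`rightPerp D`, standing for its term in degree `0`; the chosen (co)syzygies make the shift, which is
a translation of the indices, strictly invertible. -/
structure Reduction (D : ObjectProperty C) where
  X : ℤ → C
  rightPerp_X : ∀ n, rightPerp D (X n)
  conn : ∀ i j, i + 1 = j → (X j ⟶ (X i)⟦(1 : ℤ)⟧)
  isSyzygy_conn : ∀ i j h, IsSyzygy D (conn i j h)

namespace Reduction

variable {D : ObjectProperty C}

/-- The image of the `n`-th term of a resolution in `C/[D]`. -/
abbrev obj (X : Reduction D) (n : ℤ) : IdealQuotient D := (toQuotient D).obj (X.X n)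

section Compatible

variable {X Y Z : Reduction D}

/-- The pair `(f, g)` of morphisms of `C/[D]` between the terms of degrees `i` and `j = i + 1`
of two resolutions is represented by a commutative square with the connecting morphisms. -/
def Compatible (i j : ℤ) (h : i + 1 = j) (f : X.obj i ⟶ Y.obj i) (g : X.obj j ⟶ Y.obj j) : Prop :=
  ∃ u v, (toQuotient D).map u = f ∧ (toQuotient D).map v = g ∧
    v ≫ Y.conn i j h = X.conn i j h ≫ u⟦(1 : ℤ)⟧'

variable {i j : ℤ} {h : i + 1 = j}

theorem exists_compatible_left (g : X.obj j ⟶ Y.obj j) : ∃ f, Compatible i j h f g := by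
  obtain ⟨v, rfl⟩ := (toQuotient D).map_surjective g
  obtain ⟨u, hu⟩ := (X.isSyzygy_conn i j h).exists_comp_shift_eq (Y.rightPerp_X i)
    (v ≫ Y.conn i j h)
  exact ⟨_, u, v, rfl, rfl, hu.symm⟩

namespace Compatible

theorem id (X : Reduction D) (i j : ℤ) (h : i + 1 = j) :
    Compatible i j h (𝟙 (X.obj i)) (𝟙 (X.obj j)) :=
  ⟨𝟙 _, 𝟙 _, (toQuotient D).map_id _, (toQuotient D).map_id _, by
    rw [id_comp, (shiftFunctor C (1 : ℤ)).map_id, comp_id]⟩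

theorem comp {f : X.obj i ⟶ Y.obj i} {g : X.obj j ⟶ Y.obj j} {f' : Y.obj i ⟶ Z.obj i}
    {g' : Y.obj j ⟶ Z.obj j} :
    Compatible i j h f g → Compatible i j h f' g' → Compatible i j h (f ≫ f') (g ≫ g')
  | ⟨u, v, hu, hv, huv⟩, ⟨u', v', hu', hv', huv'⟩ =>
    ⟨u ≫ u', v ≫ v', by rw [Functor.map_comp, hu, hu'], by rw [Functor.map_comp, hv, hv'],
      by rw [assoc, huv', reassoc_of% huv, Functor.map_comp]⟩

end Compatible

end Compatible

variable [AdmitsReduction D]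

theorem leftPerp_X (X : Reduction D) (n : ℤ) : leftPerp D (X.X n) :=
  leftPerp_of_rightPerp (X.rightPerp_X n)

theorem exists_X_zero_eq {A : C} (hA : rightPerp D A) : ∃ R : Reduction D, R.X 0 = A := by
  obtain ⟨B, hB, hsyz⟩ := exists_int_chain (P := fun _ => {A : C // rightPerp D A})
    (fun _ _ _ A B => ∃ γ : B.1 ⟶ A.1⟦(1 : ℤ)⟧, IsSyzygy D γ)
    (fun _ _ _ A => have ⟨B, hB, h⟩ := exists_isSyzygy_of_source D A.1; ⟨⟨B, hB⟩, h⟩)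
    (fun _ _ _ B => have ⟨A, hA, h⟩ := exists_isSyzygy_of_target D B.1; ⟨⟨A, hA⟩, h⟩) ⟨A, hA⟩
  choose conn isSyzygy_conn using hsyz
  exact ⟨⟨fun n => (B n).1, fun n => (B n).2, conn, isSyzygy_conn⟩, congrArg Subtype.val hB⟩

instance : Category (Reduction D) :=
  inferInstanceAs (Category (InducedCategory (IdealQuotient D) fun X : Reduction D => X.obj 0))

instance : Preadditive (Reduction D) :=
  inferInstanceAs (Preadditive (InducedCategory (IdealQuotient D) fun X : Reduction D => X.obj 0))

instance (k : Type*) [Semiring k] [Linear k C] : Linear k (Reduction D) :=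
  inferInstanceAs (Linear k (InducedCategory (IdealQuotient D) fun X : Reduction D => X.obj 0))

/-- The morphism of the reduction represented by a morphism of `C`. -/
def ofHom {X Y : Reduction D} : (X.X 0 ⟶ Y.X 0) →+ (X ⟶ Y) where
  toFun f := InducedCategory.homMk ((toQuotient D).map f)
  map_zero' := InducedCategory.hom_ext ((toQuotient D).map_zero _ _)
  map_add' _ _ := InducedCategory.hom_ext (toQuotient D).map_add

/-- `ofHom` as a linear map. -/
def ofHomLinear (k : Type*) [Semiring k] [Linear k C] {X Y : Reduction D} :
    (X.X 0 ⟶ Y.X 0) →ₗ[k] (X ⟶ Y) where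
  __ := ofHom
  map_smul' c f := InducedCategory.hom_ext ((toQuotient D).map_smul c f)

variable {X Y Z : Reduction D}

theorem ofHom_comp (f : X.X 0 ⟶ Y.X 0) (g : Y.X 0 ⟶ Z.X 0) :
    ofHom (f ≫ g) = ofHom f ≫ ofHom g :=
  InducedCategory.hom_ext ((toQuotient D).map_comp f g)

theorem ofHom_id (X : Reduction D) : ofHom (𝟙 (X.X 0)) = 𝟙 X :=
  InducedCategory.hom_ext ((toQuotient D).map_id _)

theorem ofHom_surjective : Function.Surjective (ofHom : (X.X 0 ⟶ Y.X 0) → (X ⟶ Y)) := fun f =>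
  have ⟨u, hu⟩ := (toQuotient D).map_surjective f.hom
  ⟨u, InducedCategory.hom_ext hu⟩

theorem ofHom_eq_zero_iff {f : X.X 0 ⟶ Y.X 0} : ofHom f = 0 ↔ FactorsThrough D f := by
  rw [← toQuotient_map_eq_zero_iff]
  exact InducedCategory.hom_ext_iff

section Extension

variable {i j : ℤ} {h : i + 1 = j}

theorem exists_compatible_right (f : X.obj i ⟶ Y.obj i) : ∃ g, Compatible i j h f g := by
  obtain ⟨u, rfl⟩ := (toQuotient D).map_surjective f
  obtain ⟨v, hv⟩ := (Y.isSyzygy_conn i j h).exists_comp_eq (X.leftPerp_X j)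
    (X.conn i j h ≫ u⟦(1 : ℤ)⟧')
  exact ⟨_, u, v, rfl, rfl, hv⟩

namespace Compatible

variable {f f' : X.obj i ⟶ Y.obj i} {g g' : X.obj j ⟶ Y.obj j}

theorem add : Compatible i j h f g → Compatible i j h f' g' →
    Compatible i j h (f + f') (g + g')
  | ⟨u, v, hu, hv, huv⟩, ⟨u', v', hu', hv', huv'⟩ =>
    ⟨u + u', v + v', by rw [Functor.map_add, hu, hu'], by rw [Functor.map_add, hv, hv'],
      by rw [add_comp, huv, huv', ← comp_add, ← Functor.map_add]⟩

theorem comp_conn {u : X.X i ⟶ Y.X i} {v : X.X j ⟶ Y.X j}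
    (H : Compatible i j h ((toQuotient D).map u) ((toQuotient D).map v)) :
    v ≫ Y.conn i j h = X.conn i j h ≫ u⟦(1 : ℤ)⟧' := by
  obtain ⟨u', v', hu, hv, huv⟩ := H
  have hu := comp_shift_eq_zero_of_leftPerp (toQuotient_map_eq_iff.1 hu) (X.leftPerp_X j)
    (X.conn i j h)
  have hv := comp_eq_zero_of_rightPerp (toQuotient_map_eq_iff.1 hv) (Y.rightPerp_X i)
    (Y.conn i j h)
  rw [Functor.map_sub, comp_sub, sub_eq_zero] at hu
  rw [sub_comp, sub_eq_zero] at hv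
  rw [← hv, huv, hu]

theorem right_unique (H : Compatible i j h f g) (H' : Compatible i j h f g') : g = g' := by
  obtain ⟨u, v, rfl, rfl, huv⟩ := H
  obtain ⟨v', rfl⟩ := (toQuotient D).map_surjective g'
  rw [toQuotient_map_eq_iff]
  refine (Y.isSyzygy_conn i j h).factorsThrough_of_comp_eq_zero ?_
  rw [sub_comp, huv, H'.comp_conn, sub_self]

theorem left_unique (H : Compatible i j h f g) (H' : Compatible i j h f' g) : f = f' := by
  obtain ⟨u, v, rfl, rfl, huv⟩ := H
  obtain ⟨u', rfl⟩ := (toQuotient D).map_surjective f'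
  rw [toQuotient_map_eq_iff]
  refine (X.isSyzygy_conn i j h).factorsThrough_of_comp_shift_eq_zero ?_
  rw [Functor.map_sub, comp_sub, ← huv, H'.comp_conn, sub_self]

end Compatible

theorem exists_extension (f : X ⟶ Y) : ∃ φ : ∀ n, X.obj n ⟶ Y.obj n,
    φ 0 = f.hom ∧ ∀ i j h, Compatible i j h (φ i) (φ j) :=
  exists_int_chain (fun i j h => Compatible i j h) (fun _ _ _ => exists_compatible_right)
    (fun _ _ _ => exists_compatible_left) f.hom

/-- The morphism of complete resolutions modulo `[D]` that extends a morphism in degree `0`. -/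
def extend (f : X ⟶ Y) : ∀ n, X.obj n ⟶ Y.obj n := (exists_extension f).choose

theorem extend_zero (f : X ⟶ Y) : extend f 0 = f.hom := (exists_extension f).choose_spec.1

theorem compatible_extend (f : X ⟶ Y) (i j : ℤ) (h : i + 1 = j) :
    Compatible i j h (extend f i) (extend f j) :=
  (exists_extension f).choose_spec.2 i j h

theorem extend_eq {f : X ⟶ Y} {φ : ∀ n, X.obj n ⟶ Y.obj n} (h₀ : φ 0 = f.hom)
    (hφ : ∀ i j h, Compatible i j h (φ i) (φ j)) : extend f = φ := by
  funext n
  induction n with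
  | zero => rw [h₀, extend_zero]
  | succ n ih => exact (compatible_extend f n (n + 1) rfl).right_unique (ih ▸ hφ n (n + 1) rfl)
  | pred n ih =>
    exact (compatible_extend f (-n - 1) (-n) (sub_add_cancel _ _)).left_unique
      (ih ▸ hφ (-n - 1) (-n) (sub_add_cancel _ _))

theorem extend_id (X : Reduction D) : extend (𝟙 X) = fun n => 𝟙 (X.obj n) :=
  extend_eq (by rfl) (Compatible.id X)

theorem extend_comp (f : X ⟶ Y) (g : Y ⟶ Z) :
    extend (f ≫ g) = fun n => extend f n ≫ extend g n :=
  extend_eq (by rw [extend_zero, extend_zero]; rfl)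
    fun i j h => (compatible_extend f i j h).comp (compatible_extend g i j h)

theorem extend_add (f g : X ⟶ Y) : extend (f + g) = fun n => extend f n + extend g n :=
  extend_eq (by rw [extend_zero, extend_zero]; rfl)
    fun i j h => (compatible_extend f i j h).add (compatible_extend g i j h)

end Extension

section Shift

/-- Restriction of resolutions along a translation `φ` of the index set `ℤ`. -/
def reindex (φ : ℤ → ℤ) (hφ : ∀ i j, i + 1 = j → φ i + 1 = φ j) : Reduction D ⥤ Reduction D where
  obj X :=
    { X n := X.X (φ n)
      rightPerp_X n := X.rightPerp_X (φ n)
      conn i j h := X.conn (φ i) (φ j) (hφ i j h)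
      isSyzygy_conn i j h := X.isSyzygy_conn (φ i) (φ j) (hφ i j h) }
  map f := InducedCategory.homMk (extend f (φ 0))
  map_id X := InducedCategory.hom_ext (congrFun (extend_id X) (φ 0))
  map_comp f g := InducedCategory.hom_ext (congrFun (extend_comp f g) (φ 0))

theorem extend_reindex_map (φ : ℤ → ℤ) (hφ : ∀ i j, i + 1 = j → φ i + 1 = φ j) (f : X ⟶ Y) :
    extend ((reindex φ hφ).map f) = fun n => extend f (φ n) :=
  extend_eq rfl fun i j h => compatible_extend f (φ i) (φ j) (hφ i j h)

theorem reindex_id : reindex id (fun _ _ h => h) = 𝟭 (Reduction D) :=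
  CategoryTheory.Functor.ext (fun _ => rfl) fun _ _ f => InducedCategory.hom_ext <|
    (extend_zero f).trans (congrArg _ ((id_comp _).trans (comp_id _)).symm)

theorem reindex_comp (φ ψ : ℤ → ℤ) (hφ : ∀ i j, i + 1 = j → φ i + 1 = φ j)
    (hψ : ∀ i j, i + 1 = j → ψ i + 1 = ψ j) :
    reindex φ hφ ⋙ reindex ψ hψ =
      reindex (D := D) (φ ∘ ψ) (fun i j h => hφ _ _ (hψ i j h)) :=
  CategoryTheory.Functor.ext (fun _ => rfl) fun _ _ f => InducedCategory.hom_ext <|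
    (congrFun (extend_reindex_map φ hφ f) (ψ 0)).trans <|
      congrArg InducedCategory.Hom.hom (a₁ := (reindex (φ ∘ ψ) _).map f)
        ((id_comp _).trans (comp_id _)).symm

theorem reindex_congr {φ ψ : ℤ → ℤ} (h : φ = ψ) (hφ : ∀ i j, i + 1 = j → φ i + 1 = φ j)
    (hψ : ∀ i j, i + 1 = j → ψ i + 1 = ψ j) : reindex (D := D) φ hφ = reindex ψ hψ := by
  subst h
  rfl

variable (D) in
/-- The shift by `a` of the reduction, translating a resolution by `a` places. -/
def translation (a : ℤ) : Reduction D ⥤ Reduction D :=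
  reindex (fun n => n + a) (fun i j h => by omega)

theorem translation_zero : translation D 0 = 𝟭 (Reduction D) :=
  (reindex_congr (funext add_zero) _ _).trans reindex_id

theorem translation_add (a b : ℤ) : translation D (a + b) = translation D a ⋙ translation D b :=
  ((reindex_comp _ _ _ _).trans
    (reindex_congr (funext fun n => by dsimp only [Function.comp_apply]; ring) _ _)).symm

instance : HasShift (Reduction D) ℤ :=
  hasShiftMk _ _
    { F := translation D
      zero := eqToIso translation_zero
      add := fun a b => eqToIso (translation_add a b)
      assoc_hom_app := fun _ _ _ X => by simp [eqToHom_app, eqToHom_map]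
      zero_add_hom_app := fun _ X => by simp [eqToHom_app, eqToHom_map]
      add_zero_hom_app := fun _ X => by simp [eqToHom_app] }

instance (a : ℤ) : (shiftFunctor (Reduction D) a).Additive where
  map_add {_ _ f g} := InducedCategory.hom_ext (congrFun (extend_add f g) (0 + a))

/-- The morphism `X ⟶ Y⟦1⟧` of the reduction represented by a morphism of `C` to the term of degree
`1` of `Y`. -/
def ofHomShift : (X.X 0 ⟶ Y.X 1) →+ (X ⟶ Y⟦(1 : ℤ)⟧) := ofHom (Y := Y⟦(1 : ℤ)⟧)

theorem ofHomShift_surjective :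
    Function.Surjective (ofHomShift : (X.X 0 ⟶ Y.X 1) → (X ⟶ Y⟦(1 : ℤ)⟧)) :=
  ofHom_surjective

theorem ofHom_comp_ofHomShift (f : X.X 0 ⟶ Y.X 0) (d : Y.X 0 ⟶ Z.X 1) :
    ofHom f ≫ ofHomShift d = ofHomShift (f ≫ d) :=
  (ofHom_comp (Z := Z⟦(1 : ℤ)⟧) f d).symm

theorem ofHomShift_eq_zero_iff {d : X.X 0 ⟶ Y.X 1} :
    ofHomShift d = 0 ↔ d ≫ Y.conn 0 1 rfl = 0 :=
  ofHom_eq_zero_iff.trans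
    ⟨fun h => comp_eq_zero_of_rightPerp h (Y.rightPerp_X 0) _,
      (Y.isSyzygy_conn 0 1 rfl).factorsThrough_of_comp_eq_zero⟩

theorem exists_lift_conn (f : X.X 0 ⟶ Y.X 0) :
    ∃ f₁ : X.X 1 ⟶ Y.X 1, f₁ ≫ Y.conn 0 1 rfl = X.conn 0 1 rfl ≫ f⟦(1 : ℤ)⟧' :=
  (Y.isSyzygy_conn 0 1 rfl).exists_comp_eq (X.leftPerp_X 1) _

theorem ofHomShift_comp_map {f : X.X 0 ⟶ Y.X 0} {f₁ : X.X 1 ⟶ Y.X 1}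
    (h : f₁ ≫ Y.conn 0 1 rfl = X.conn 0 1 rfl ≫ f⟦(1 : ℤ)⟧') (d : Z.X 0 ⟶ X.X 1) :
    ofHomShift d ≫ (ofHom f)⟦(1 : ℤ)⟧' = ofHomShift (d ≫ f₁) := by
  have hf : (ofHom f)⟦(1 : ℤ)⟧' = ofHom (X := X⟦(1 : ℤ)⟧) (Y := Y⟦(1 : ℤ)⟧) f₁ := by
    refine InducedCategory.hom_ext ((compatible_extend (ofHom f) 0 1 rfl).right_unique ?_)
    exact ⟨f, f₁, (extend_zero _).symm, rfl, h⟩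
  rw [hf]
  exact (ofHom_comp (Y := X⟦(1 : ℤ)⟧) (Z := Y⟦(1 : ℤ)⟧) d f₁).symm

theorem ofHomShift_comp_map_eq_zero_iff {f : X.X 0 ⟶ Y.X 0} {d : Z.X 0 ⟶ X.X 1} :
    ofHomShift d ≫ (ofHom f)⟦(1 : ℤ)⟧' = 0 ↔ d ≫ X.conn 0 1 rfl ≫ f⟦(1 : ℤ)⟧' = 0 := by
  obtain ⟨f₁, hf₁⟩ := exists_lift_conn f
  rw [ofHomShift_comp_map hf₁, ofHomShift_eq_zero_iff, assoc, hf₁]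

end Shift

end Reduction

end Reduction

/-! ### Triangulation of the reduction -/

namespace Reduction

variable {C : Type*} [Category* C] [Preadditive C] [HasShift C ℤ] [HasZeroObject C]
  [∀ n : ℤ, (shiftFunctor C n).Additive] [Pretriangulated C]
  {D : ObjectProperty C} [AdmitsReduction D] {X Y Z X' Y' Z' : Reduction D}

/-- The candidate triangle `X ⟶ Y ⟶ Z ⟶ X⟦1⟧` of the reduction represented by morphisms `a`, `b`,
`d` of `C`. -/
abbrev triangle (a : X.X 0 ⟶ Y.X 0) (b : Y.X 0 ⟶ Z.X 0) (d : Z.X 0 ⟶ X.X 1) :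
    Triangle (Reduction D) :=
  Triangle.mk (ofHom a) (ofHom b) (ofHomShift d)

/-- The triple `(a, b, d)` represents a standard triangle of the reduction: `b` and `d` exhibit a
cone of `a` modulo `[D]`. -/
def IsStandard (a : X.X 0 ⟶ Y.X 0) (b : Y.X 0 ⟶ Z.X 0) (d : Z.X 0 ⟶ X.X 1) : Prop :=
  Triangle.mk b d (-(X.conn 0 1 rfl ≫ a⟦(1 : ℤ)⟧')) ∈ distTriang C

theorem exists_isStandard (a : X.X 0 ⟶ Y.X 0) :
    ∃ (Z : Reduction D) (b : Y.X 0 ⟶ Z.X 0) (d : Z.X 0 ⟶ X.X 1), IsStandard a b d := by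
  obtain ⟨Z₀, b, d, hT⟩ := distinguished_cocone_triangle₂ (-(X.conn 0 1 rfl ≫ a⟦(1 : ℤ)⟧'))
  obtain ⟨Z, rfl⟩ := exists_X_zero_eq <| rightPerp_of_leftPerp <|
    leftPerp_of_distTriang hT (Y.leftPerp_X 0) (X.leftPerp_X 1)
  exact ⟨Z, b, d, hT⟩

namespace IsStandard

variable {a : X.X 0 ⟶ Y.X 0} {b : Y.X 0 ⟶ Z.X 0} {d : Z.X 0 ⟶ X.X 1} (h : IsStandard a b d)

include h

theorem isWeakKernel_mor₁ : IsWeakKernel (ofHom a) (ofHom b) := by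
  refine ⟨?_, fun W t ht => ?_⟩
  · rw [← ofHom_comp, ofHom_eq_zero_iff]
    refine (X.isSyzygy_conn 0 1 rfl).factorsThrough_of_comp_shift_eq_zero ?_
    rw [Functor.map_comp, ← assoc, ← neg_eq_zero, ← neg_comp]
    exact DistTriang.comp_zero₃₁ h
  · obtain ⟨t, rfl⟩ := ofHom_surjective t
    rw [← ofHom_comp, ofHom_eq_zero_iff] at ht
    obtain ⟨s, hs⟩ := DistTriang.lift₁ h (W.conn 0 1 rfl ≫ t⟦(1 : ℤ)⟧') <| by
      rw [assoc, ← Functor.map_comp]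
      exact comp_shift_eq_zero_of_leftPerp ht (W.leftPerp_X 1) _
    obtain ⟨l, hl⟩ := (W.isSyzygy_conn 0 1 rfl).exists_comp_shift_eq (X.rightPerp_X 0)
      (s ≫ X.conn 0 1 rfl)
    refine ⟨ofHom (-l), ?_⟩
    rw [← ofHom_comp, ← sub_eq_zero, ← map_sub, ofHom_eq_zero_iff]
    refine (W.isSyzygy_conn 0 1 rfl).factorsThrough_of_comp_shift_eq_zero ?_
    rw [Functor.map_sub, comp_sub, ← hs, Functor.map_comp, Functor.map_neg, neg_comp, comp_neg,
      reassoc_of% hl, comp_neg, sub_self]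

theorem isWeakKernel_mor₂ : IsWeakKernel (ofHom b) (ofHomShift d) := by
  refine ⟨?_, fun W t ht => ?_⟩
  · rw [ofHom_comp_ofHomShift, DistTriang.comp_zero₁₂ h, map_zero]
  · obtain ⟨t, rfl⟩ := ofHom_surjective t
    rw [ofHom_comp_ofHomShift, ofHomShift_eq_zero_iff] at ht
    obtain ⟨V, hV, u, v, huv⟩ :=
      (X.isSyzygy_conn 0 1 rfl).factorsThrough_of_comp_eq_zero ht
    obtain ⟨s, rfl⟩ := DistTriang.lift₃ h v (Y.rightPerp_X 0 hV _)
    obtain ⟨l, hl⟩ := DistTriang.lift₂ h (t - u ≫ s) <| by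
      rw [sub_comp, assoc, huv, sub_self]
    refine ⟨ofHom l, ?_⟩
    have hus : ofHom (u ≫ s) = 0 := ofHom_eq_zero_iff.2 ⟨V, hV, u, s, rfl⟩
    rw [← ofHom_comp, hl, map_sub, hus, sub_zero]

theorem isWeakKernel_mor₃ : IsWeakKernel (ofHomShift d) ((ofHom a)⟦(1 : ℤ)⟧') := by
  refine ⟨?_, fun W t ht => ?_⟩
  · rw [ofHomShift_comp_map_eq_zero_iff, ← neg_eq_zero, ← comp_neg]
    exact DistTriang.comp_zero₂₃ h
  · obtain ⟨t, rfl⟩ := ofHomShift_surjective t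
    obtain ⟨l, rfl⟩ := DistTriang.lift₃ h t <| by
      rw [comp_neg, ofHomShift_comp_map_eq_zero_iff.1 ht, neg_zero]
    exact ⟨ofHom l, ofHom_comp_ofHomShift l d⟩

theorem isExact : IsExact (triangle a b d) :=
  ⟨h.isWeakKernel_mor₁, h.isWeakKernel_mor₂, h.isWeakKernel_mor₃⟩

theorem exists_hom {a' : X'.X 0 ⟶ Y'.X 0} {b' : Y'.X 0 ⟶ Z'.X 0} {d' : Z'.X 0 ⟶ X'.X 1}
    (h' : IsStandard a' b' d') (f : X ⟶ X') (g : Y ⟶ Y') (comm : ofHom a ≫ g = f ≫ ofHom a') :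
    ∃ φ : triangle a b d ⟶ triangle a' b' d', φ.hom₁ = f ∧ φ.hom₂ = g := by
  obtain ⟨f, rfl⟩ := ofHom_surjective f
  obtain ⟨g, rfl⟩ := ofHom_surjective g
  have hcomm := comp_shift_eq_zero_of_leftPerp (f := a ≫ g - f ≫ a')
    (ofHom_eq_zero_iff.1 <| by rw [map_sub, ofHom_comp, ofHom_comp, comm, sub_self])
    (X.leftPerp_X 1) (X.conn 0 1 rfl)
  rw [Functor.map_sub, comp_sub, sub_eq_zero, Functor.map_comp, Functor.map_comp] at hcomm
  obtain ⟨f₁, hf₁⟩ := exists_lift_conn f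
  obtain ⟨w, hw₁, hw₂⟩ := DistTriang.exists_hom₂ h h' g f₁ <| by
    rw [neg_comp, comp_neg, assoc, hcomm, reassoc_of% hf₁]
  exact ⟨Triangle.homMk _ _ (ofHom f) (ofHom g) (ofHom w) comm
    (by change ofHom b ≫ ofHom w = ofHom g ≫ ofHom b'; rw [← ofHom_comp, hw₁, ofHom_comp])
    (by
      change ofHomShift d ≫ (ofHom f)⟦(1 : ℤ)⟧' = ofHom w ≫ ofHomShift d'
      rw [ofHomShift_comp_map hf₁, hw₂, ofHom_comp_ofHomShift]), rfl, rfl⟩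

theorem exists_iso_rotate {V : Reduction D} {c : Z.X 0 ⟶ V.X 0} {e : V.X 0 ⟶ Y.X 1}
    (h' : IsStandard b c e) : Nonempty (triangle b c e ≅ (triangle a b d).rotate) := by
  obtain ⟨w, hw₁, hw₂⟩ := DistTriang.exists_hom₂ h' (DistTriang.rotate h) (𝟙 _)
    (Y.conn 0 1 rfl) <| by
      rw [(shiftFunctor C (1 : ℤ)).map_id, comp_id, comp_neg]
  obtain ⟨a₁, ha₁⟩ := exists_lift_conn a
  have comm : ofHomShift e = ofHomShift w ≫ (-(ofHom a)⟦(1 : ℤ)⟧') := by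
    rw [comp_neg, ofHomShift_comp_map ha₁, ← sub_eq_zero, sub_neg_eq_add, ← map_add,
      ofHomShift_eq_zero_iff, add_comp, hw₂, assoc, ha₁, comp_neg, neg_add_cancel]
  let φ : triangle b c e ⟶ (triangle a b d).rotate :=
    Triangle.homMk _ _ (𝟙 Y) (𝟙 Z) (ofHomShift w) ((comp_id _).trans (id_comp _).symm)
      (by
        change ofHom c ≫ ofHomShift w = 𝟙 Z ≫ ofHomShift d
        rw [ofHom_comp_ofHomShift, hw₁, id_comp, id_comp])
      (by
        change ofHomShift e ≫ (𝟙 Y)⟦(1 : ℤ)⟧' = ofHomShift w ≫ (-(ofHom a)⟦(1 : ℤ)⟧')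
        rw [(shiftFunctor _ (1 : ℤ)).map_id, comp_id, comm])
  have : IsIso φ := isIso_of_isExact h'.isExact h.isExact.rotate φ (IsIso.id Y) (IsIso.id Z)
  exact ⟨asIso φ⟩

end IsStandard

instance : HasZeroObject (Reduction D) :=
  have ⟨A, hA, hDA⟩ := D.exists_prop_of_containsZero
  have ⟨R, hR⟩ := exists_X_zero_eq (AdmitsReduction.le_rightPerp A hDA)
  ⟨R, (IsZero.iff_id_eq_zero R).2 <| by
    rw [← ofHom_id, (hR ▸ hA : IsZero (R.X 0)).eq_of_src (𝟙 _) 0, map_zero]⟩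

variable (D) in
/-- The distinguished triangles of the reduction: those isomorphic to a standard one. -/
def distinguished : Set (Triangle (Reduction D)) := fun T =>
  ∃ (X Y Z : Reduction D) (a : X.X 0 ⟶ Y.X 0) (b : Y.X 0 ⟶ Z.X 0) (d : Z.X 0 ⟶ X.X 1),
    IsStandard a b d ∧ Nonempty (T ≅ triangle a b d)

theorem contractible_mem_distinguished (X : Reduction D) :
    contractibleTriangle X ∈ distinguished D := by
  obtain ⟨Z, b, d, h⟩ := exists_isStandard (𝟙 (X.X 0))
  have hX : IsIso (ofHom (𝟙 (X.X 0)) : X ⟶ X) := by rw [ofHom_id]; infer_instance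
  have hZ : IsZero Z := h.isExact.isZero_obj₃ hX
  exact ⟨X, X, Z, 𝟙 _, b, d, h, ⟨Triangle.isoMk _ _ (Iso.refl X) (Iso.refl X)
    ((isZero_zero _).iso hZ) (congrArg (𝟙 X ≫ ·) (ofHom_id X).symm) (hZ.eq_of_tgt _ _)
    ((isZero_zero _).eq_of_src _ _)⟩⟩

theorem rotate_mem_distinguished (T : Triangle (Reduction D)) (hT : T ∈ distinguished D) :
    T.rotate ∈ distinguished D := by
  obtain ⟨X, Y, Z, a, b, d, h, ⟨i⟩⟩ := hT
  obtain ⟨V, c, e, h'⟩ := exists_isStandard b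
  obtain ⟨j⟩ := h.exists_iso_rotate h'
  exact ⟨Y, Z, V, b, c, e, h', ⟨(rotate (Reduction D)).mapIso i ≪≫ j.symm⟩⟩

theorem exists_hom_of_mem_distinguished (T : Triangle (Reduction D)) (hT : T ∈ distinguished D)
    (T' : Triangle (Reduction D)) (hT' : T' ∈ distinguished D) (f : T.obj₁ ⟶ T'.obj₁)
    (g : T.obj₂ ⟶ T'.obj₂) (comm : T.mor₁ ≫ g = f ≫ T'.mor₁) :
    ∃ φ : T ⟶ T', φ.hom₁ = f ∧ φ.hom₂ = g := by
  obtain ⟨X, Y, Z, a, b, d, h, ⟨i⟩⟩ := hT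
  obtain ⟨X', Y', Z', a', b', d', h', ⟨i'⟩⟩ := hT'
  exact exists_hom_of_iso i i' (h.exists_hom h') f g comm

instance : Pretriangulated (Reduction D) :=
  pretriangulatedOfIsExact (distinguished D)
    (fun _ ⟨_, _, _, _, _, _, h, ⟨i⟩⟩ => h.isExact.of_iso i)
    (fun _ ⟨_, _, _, _, _, _, h, ⟨i⟩⟩ _ j => ⟨_, _, _, _, _, _, h, ⟨j ≪≫ i⟩⟩)
    contractible_mem_distinguished
    (fun {X Y} f => by
      obtain ⟨a, rfl⟩ := ofHom_surjective f
      obtain ⟨Z, b, d, h⟩ := exists_isStandard a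
      exact ⟨Z, _, _, X, Y, Z, a, b, d, h, ⟨Iso.refl _⟩⟩)
    rotate_mem_distinguished exists_hom_of_mem_distinguished

end Reduction

/-! ### Linear structure of the reduction -/

section CommonKernel

theorem nonempty_linearEquiv_of_ker_eq {R M N P : Type*} [Ring R] [AddCommGroup M]
    [AddCommGroup N] [AddCommGroup P] [Module R M] [Module R N] [Module R P] {f : M →ₗ[R] N}
    {g : M →ₗ[R] P} (hf : Function.Surjective f) (hg : Function.Surjective g)
    (h : LinearMap.ker f = LinearMap.ker g) : Nonempty (N ≃ₗ[R] P) :=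
  ⟨(f.quotKerEquivOfSurjective hf).symm ≪≫ₗ Submodule.quotEquivOfEq _ _ h ≪≫ₗ
    g.quotKerEquivOfSurjective hg⟩

theorem nonempty_algEquiv_of_ker_eq {R A B B' : Type*} [CommRing R] [Ring A] [Ring B] [Ring B']
    [Algebra R A] [Algebra R B] [Algebra R B'] {f : A →ₐ[R] B} {g : A →ₐ[R] B'}
    (hf : Function.Surjective f) (hg : Function.Surjective g)
    (h : RingHom.ker f = RingHom.ker g) : Nonempty (B ≃ₐ[R] B') :=
  ⟨(Ideal.quotientKerAlgEquivOfSurjective hf).symm.trans <|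
    (Ideal.quotientEquivAlgOfEq R h).trans (Ideal.quotientKerAlgEquivOfSurjective hg)⟩

end CommonKernel

section Retracts

variable {C : Type*} [Category* C] [Preadditive C] [HasShift C ℤ]

theorem rightPerp_of_retract (D : ObjectProperty C) {A X : C} (r : Retract A X)
    (hX : rightPerp D X) [(shiftFunctor C (1 : ℤ)).Additive] : rightPerp D A := by
  intro W hW f
  rw [← cancel_mono (r.map (CategoryTheory.shiftFunctor C (1 : ℤ))).i, zero_comp]
  exact hX hW _

end Retracts

namespace Reduction

variable {C : Type*} [Category* C] [Preadditive C] [HasShift C ℤ] [HasZeroObject C]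
  [∀ n : ℤ, (shiftFunctor C n).Additive] [Pretriangulated C]
  {D : ObjectProperty C} [AdmitsReduction D] (k : Type*) [Field k] [Linear k C]

/-- `ofHom` on endomorphisms, as a morphism of algebras. -/
def endAlgHom (X : Reduction D) : End (X.X 0) →ₐ[k] End X :=
  AlgHom.ofLinearMap (ofHomLinear k) (ofHom_id X) fun f g => ofHom_comp g f

theorem endAlgHom_surjective (X : Reduction D) : Function.Surjective (endAlgHom k X) :=
  ofHom_surjective

theorem endAlgHom_eq_zero_iff {X : Reduction D} {f : End (X.X 0)} :
    endAlgHom k X f = 0 ↔ FactorsThrough D f :=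
  ofHom_eq_zero_iff

theorem finiteDimensional_hom (X Y : Reduction D) [FiniteDimensional k (X.X 0 ⟶ Y.X 0)] :
    FiniteDimensional k (X ⟶ Y) :=
  Module.Finite.of_surjective (ofHomLinear k) ofHom_surjective

theorem isIdempotentComplete [IsIdempotentComplete C]
    (homFinite : ∀ X : C, FiniteDimensional k (End X)) :
    IsIdempotentComplete (Reduction D) where
  idempotents_split X p hp := by
    obtain ⟨p, rfl⟩ := endAlgHom_surjective k X p
    obtain ⟨q, hq, hqp⟩ := exists_isIdempotentElem_map_eq k (endAlgHom k X).toRingHom hp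
    obtain ⟨A, i, r, hir, hri⟩ := IsIdempotentComplete.idempotents_split (X.X 0) q hq
    obtain ⟨R, rfl⟩ := exists_X_zero_eq (rightPerp_of_retract D ⟨i, r, hir⟩ (X.rightPerp_X 0))
    refine ⟨R, ofHom i, ofHom r, ?_, ?_⟩
    · rw [← ofHom_comp, hir, ofHom_id]
    · rw [← ofHom_comp, hri]
      exact hqp

theorem exists_hom_linearEquiv_desuspension (X Y : Reduction D) :
    ∃ B : C, Nonempty (B⟦(1 : ℤ)⟧ ≅ X.X 1) ∧ Nonempty ((X ⟶ Y) ≃ₗ[k] (B ⟶ Y.X 0)) := by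
  let B := (shiftFunctor C (1 : ℤ)).objPreimage (X.X 1)
  let e : B⟦(1 : ℤ)⟧ ≅ X.X 1 := (shiftFunctor C (1 : ℤ)).objObjPreimageIso (X.X 1)
  obtain ⟨c, hc⟩ := (shiftFunctor C (1 : ℤ)).map_surjective (e.hom ≫ X.conn 0 1 rfl)
  refine ⟨B, ⟨e⟩, nonempty_linearEquiv_of_ker_eq (f := ofHomLinear k)
    (g := Linear.leftComp k (Y.X 0) c) ofHom_surjective (fun t => ?_) ?_⟩
  · obtain ⟨u, hu⟩ := (X.isSyzygy_conn 0 1 rfl).exists_comp_shift_eq (Y.rightPerp_X 0)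
      (e.inv ≫ t⟦(1 : ℤ)⟧')
    exact ⟨u, (shiftFunctor C (1 : ℤ)).map_injective <|
      ((shiftFunctor C (1 : ℤ)).map_comp _ _).trans <| by
        rw [hc, assoc, hu, Iso.hom_inv_id_assoc]⟩
  · ext f
    have key : (c ≫ f)⟦(1 : ℤ)⟧' = e.hom ≫ X.conn 0 1 rfl ≫ f⟦(1 : ℤ)⟧' := by
      rw [Functor.map_comp, hc, assoc]
    refine ofHom_eq_zero_iff.trans ⟨fun h => ?_, fun h => ?_⟩
    · refine (shiftFunctor C (1 : ℤ)).map_injective ?_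
      rw [Functor.map_zero]
      exact key.trans (by rw [comp_shift_eq_zero_of_leftPerp h (X.leftPerp_X 1), comp_zero])
    · refine (X.isSyzygy_conn 0 1 rfl).factorsThrough_of_comp_shift_eq_zero ?_
      have h' : c ≫ f = 0 := h
      rwa [h', Functor.map_zero, eq_comm, IsIso.comp_left_eq_zero] at key

theorem nonempty_hom_linearEquiv_suspension (X Y : Reduction D) :
    Nonempty ((Y ⟶ X⟦(2 : ℤ)⟧) ≃ₗ[k] (Y.X 0 ⟶ (X.X 1)⟦(1 : ℤ)⟧)) := by
  refine nonempty_linearEquiv_of_ker_eq (f := ofHomLinear k (Y := X⟦(2 : ℤ)⟧))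
    (g := Linear.rightComp k (Y.X 0) (X.conn 1 2 rfl)) ofHom_surjective
    ((X.isSyzygy_conn 1 2 rfl).exists_comp_eq (Y.leftPerp_X 0)) ?_
  ext f
  exact ofHom_eq_zero_iff.trans ⟨fun h => comp_eq_zero_of_rightPerp h (X.rightPerp_X 1) _,
    (X.isSyzygy_conn 1 2 rfl).factorsThrough_of_comp_eq_zero⟩

theorem nonempty_linearEquiv_dual
    (serre : ∀ X Y : C, Nonempty ((X ⟶ Y) ≃ₗ[k] Module.Dual k (Y ⟶ X⟦(2 : ℤ)⟧)))
    (X Y : Reduction D) : Nonempty ((X ⟶ Y) ≃ₗ[k] Module.Dual k (Y ⟶ X⟦(2 : ℤ)⟧)) := by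
  obtain ⟨B, ⟨e⟩, ⟨E₁⟩⟩ := exists_hom_linearEquiv_desuspension k X Y
  obtain ⟨E₂⟩ := nonempty_hom_linearEquiv_suspension k X Y
  obtain ⟨S⟩ := serre B (Y.X 0)
  let e' : (X.X 1)⟦(1 : ℤ)⟧ ≅ B⟦(2 : ℤ)⟧ :=
    (CategoryTheory.shiftFunctor C (1 : ℤ)).mapIso e.symm ≪≫
      ((shiftFunctorAdd' C (1 : ℤ) 1 2 rfl).app B).symm
  exact ⟨E₁ ≪≫ₗ S ≪≫ₗ (E₂ ≪≫ₗ Linear.homCongr k (Iso.refl _) e').dualMap⟩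

end Reduction

/-! ### Additive closure of an object -/

section AdditiveClosure

variable {C : Type*} [Category* C] [Preadditive C]

/-- The morphisms `X ⟶ Y` that are finite sums of morphisms factoring through `T`. -/
def sumsThrough (T X Y : C) : AddSubmonoid (X ⟶ Y) :=
  AddSubmonoid.closure {f | ∃ (u : X ⟶ T) (v : T ⟶ Y), u ≫ v = f}

variable {T X Y Z : C}

theorem comp_mem_sumsThrough (u : X ⟶ T) (v : T ⟶ Y) : u ≫ v ∈ sumsThrough T X Y :=
  AddSubmonoid.subset_closure ⟨u, v, rfl⟩

theorem sumsThrough_le_iff {S : AddSubmonoid (X ⟶ Y)} :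
    sumsThrough T X Y ≤ S ↔ ∀ (u : X ⟶ T) (v : T ⟶ Y), u ≫ v ∈ S :=
  AddSubmonoid.closure_le.trans
    ⟨fun h u v => h ⟨u, v, rfl⟩, by rintro h _ ⟨u, v, rfl⟩; exact h u v⟩

theorem comp_right_mem_sumsThrough {f : X ⟶ Y} (hf : f ∈ sumsThrough T X Y) (g : Y ⟶ Z) :
    f ≫ g ∈ sumsThrough T X Z :=
  (sumsThrough_le_iff (S := (sumsThrough T X Z).comap (rightComp X g))).2
    (fun u v => show (u ≫ v) ≫ g ∈ _ by rw [assoc]; exact comp_mem_sumsThrough u (v ≫ g)) hf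

theorem comp_left_mem_sumsThrough (f : X ⟶ Y) {g : Y ⟶ Z} (hg : g ∈ sumsThrough T Y Z) :
    f ≫ g ∈ sumsThrough T X Z :=
  (sumsThrough_le_iff (S := (sumsThrough T X Z).comap (leftComp Z f))).2
    (fun u v => show f ≫ u ≫ v ∈ _ by rw [← assoc]; exact comp_mem_sumsThrough (f ≫ u) v) hg

theorem comp_eq_zero_of_mem_sumsThrough_left {f : X ⟶ Y} (hf : f ∈ sumsThrough T X Y) {g : Y ⟶ Z}
    (hg : ∀ v : T ⟶ Y, v ≫ g = 0) : f ≫ g = 0 :=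
  (sumsThrough_le_iff (S := AddMonoidHom.mker (rightComp X g))).2
    (fun u v => (assoc u v g).trans (by rw [hg v, comp_zero])) hf

theorem comp_eq_zero_of_mem_sumsThrough_right {f : X ⟶ Y} {g : Y ⟶ Z}
    (hg : g ∈ sumsThrough T Y Z) (hf : ∀ u : Y ⟶ T, f ≫ u = 0) : f ≫ g = 0 :=
  (sumsThrough_le_iff (S := AddMonoidHom.mker (leftComp Z f))).2
    (fun u v => (assoc f u v).symm.trans (by rw [hf u, zero_comp])) hg

/-- The idempotent of `End T` onto a retract of `T`. -/
def retractIdem {A T : C} (r : Retract A T) : End T := r.r ≫ r.i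

theorem sumsThrough_le_sup {A B : C} (r : Retract A T) (r' : Retract B T)
    (h : retractIdem r + retractIdem r' = 1) :
    sumsThrough T X Y ≤ sumsThrough A X Y ⊔ sumsThrough B X Y :=
  sumsThrough_le_iff.2 fun u v => by
    rw [← id_comp v, ← End.one_def, ← h, add_comp, comp_add, retractIdem, retractIdem]
    exact AddSubmonoid.add_mem_sup
      (by simpa only [assoc] using comp_mem_sumsThrough (u ≫ r.r) (r.i ≫ v))
      (by simpa only [assoc] using comp_mem_sumsThrough (u ≫ r'.r) (r'.i ≫ v))

theorem comp_eq_sum_comp_π_comp_ι_comp [HasFiniteBiproducts C] {n : ℕ}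
    (u : X ⟶ ⨁ fun _ : Fin n => T) (v : (⨁ fun _ : Fin n => T) ⟶ Y) :
    u ≫ v = ∑ i, (u ≫ biproduct.π _ i) ≫ biproduct.ι (fun _ : Fin n => T) i ≫ v := by
  nth_rw 1 [← id_comp v]
  rw [← biproduct.total, Preadditive.sum_comp, Preadditive.comp_sum]
  simp only [assoc]

theorem mem_sumsThrough_iff [HasFiniteBiproducts C] {f : X ⟶ Y} :
    f ∈ sumsThrough T X Y ↔
      ∃ (n : ℕ) (u : X ⟶ ⨁ fun _ : Fin n => T) (v : (⨁ fun _ : Fin n => T) ⟶ Y), u ≫ v = f := by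
  refine ⟨fun hf => ?_, ?_⟩
  · induction hf using AddSubmonoid.closure_induction with
    | mem f hf =>
      obtain ⟨u, v, rfl⟩ := hf
      exact ⟨1, biproduct.lift fun _ => u, biproduct.desc fun _ => v,
        by rw [biproduct.lift_desc, Fin.sum_univ_one]⟩
    | zero => exact ⟨0, 0, 0, zero_comp⟩
    | add _ _ _ _ hf hg =>
      obtain ⟨n, u, v, rfl⟩ := hf
      obtain ⟨m, u', v', rfl⟩ := hg
      refine ⟨n + m,
        biproduct.lift (Fin.append (fun i => u ≫ biproduct.π _ i) fun i => u' ≫ biproduct.π _ i),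
        biproduct.desc (Fin.append (fun i => biproduct.ι (fun _ => T) i ≫ v)
          fun i => biproduct.ι (fun _ => T) i ≫ v'), ?_⟩
      rw [biproduct.lift_desc, Fin.sum_univ_add, comp_eq_sum_comp_π_comp_ι_comp u,
        comp_eq_sum_comp_π_comp_ι_comp u']
      simp only [Fin.append_left, Fin.append_right]
  · rintro ⟨n, u, v, rfl⟩
    rw [comp_eq_sum_comp_π_comp_ι_comp]
    exact sum_mem fun i _ => comp_mem_sumsThrough _ _

/-- The additive closure `add T`: the retracts of finite direct sums of copies of `T`. -/
def addClosure (T : C) : ObjectProperty C := fun X => 𝟙 X ∈ sumsThrough T X X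

theorem addClosure_iff [HasFiniteBiproducts C] :
    addClosure T X ↔ ∃ (n : ℕ) (s : X ⟶ ⨁ fun _ : Fin n => T)
      (r : (⨁ fun _ : Fin n => T) ⟶ X), s ≫ r = 𝟙 X :=
  mem_sumsThrough_iff

theorem addClosure_self (T : C) : addClosure T T :=
  Set.mem_of_eq_of_mem (comp_id _).symm (comp_mem_sumsThrough (𝟙 T) (𝟙 T))

instance : (addClosure T).IsStableUnderRetracts where
  of_retract r hX := by
    rw [addClosure, ← r.retract, ← id_comp r.r]
    exact comp_left_mem_sumsThrough _ (comp_right_mem_sumsThrough hX _)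

theorem factorsThrough_addClosure_iff [HasFiniteBiproducts C] {f : X ⟶ Y} :
    FactorsThrough (addClosure T) f ↔ f ∈ sumsThrough T X Y := by
  refine ⟨?_, fun hf => ?_⟩
  · rintro ⟨W, hW, u, v, rfl⟩
    rw [← id_comp v]
    exact comp_left_mem_sumsThrough u (comp_right_mem_sumsThrough hW v)
  · obtain ⟨n, u, v, rfl⟩ := mem_sumsThrough_iff.1 hf
    exact ⟨_, addClosure_iff.2 ⟨n, 𝟙 _, 𝟙 _, comp_id _⟩, u, v, rfl⟩

instance [HasZeroObject C] : (addClosure T).ContainsZero :=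
  have ⟨Z, hZ⟩ := HasZeroObject.zero (C := C)
  ⟨Z, hZ, Set.mem_of_eq_of_mem (hZ.eq_of_src _ _) (zero_mem _)⟩

theorem addClosure_biprod [HasBinaryBiproducts C] (hX : addClosure T X) (hY : addClosure T Y) :
    addClosure T (X ⊞ Y) := by
  rw [addClosure, ← biprod.total, ← id_comp biprod.inl, ← id_comp biprod.inr]
  exact add_mem (comp_left_mem_sumsThrough _ (comp_right_mem_sumsThrough hX _))
    (comp_left_mem_sumsThrough _ (comp_right_mem_sumsThrough hY _))

instance [HasBinaryBiproducts C] : (addClosure T).IsClosedUnderBinaryProducts where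
  limitsOfShape_le := by
    rintro X ⟨p⟩
    exact (addClosure T).prop_of_iso
      ((BinaryBiproduct.isLimit _ _).conePointsIsoOfNatIso p.isLimit (diagramIsoPair p.diag).symm)
      (addClosure_biprod (p.prop_diag_obj _) (p.prop_diag_obj _))

end AdditiveClosure

section Rigid

variable {C : Type*} [Category* C] [Preadditive C] {T X Y : C}

theorem map_mem_sumsThrough {C' : Type*} [Category* C'] [Preadditive C'] (F : C ⥤ C')
    [F.Additive] {f : X ⟶ Y} (hf : f ∈ sumsThrough T X Y) :
    F.map f ∈ sumsThrough (F.obj T) (F.obj X) (F.obj Y) :=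
  (sumsThrough_le_iff (S := (sumsThrough _ _ _).comap F.mapAddHom)).2
    (fun u v => show F.map (u ≫ v) ∈ _ by
      rw [F.map_comp]; exact comp_mem_sumsThrough (F.map u) (F.map v)) hf

variable [HasShift C ℤ]

theorem rightPerp_addClosure_iff :
    rightPerp (addClosure T) X ↔ ∀ f : T ⟶ X⟦(1 : ℤ)⟧, f = 0 := by
  refine ⟨fun h f => h (addClosure_self T) f, fun h W hW f => ?_⟩
  rw [← id_comp f]
  exact comp_eq_zero_of_mem_sumsThrough_left hW fun v => h _

theorem leftPerp_addClosure_iff [(shiftFunctor C (1 : ℤ)).Additive] :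
    leftPerp (addClosure T) X ↔ ∀ f : X ⟶ T⟦(1 : ℤ)⟧, f = 0 := by
  refine ⟨fun h f => h (addClosure_self T) f, fun h W hW f => ?_⟩
  rw [← comp_id f, ← (shiftFunctor C (1 : ℤ)).map_id]
  exact comp_eq_zero_of_mem_sumsThrough_right (map_mem_sumsThrough _ hW) fun u => h _

theorem addClosure_le_rightPerp [(shiftFunctor C (1 : ℤ)).Additive]
    (hT : ∀ f : T ⟶ T⟦(1 : ℤ)⟧, f = 0) : addClosure T ≤ rightPerp (addClosure T) := fun _ hW =>
  rightPerp_addClosure_iff.2 fun f => leftPerp_addClosure_iff.2 hT hW f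

end Rigid

section Approximations

variable {C : Type*} [Category* C] [Preadditive C]

theorem exists_comp_eq_of_mem_sumsThrough_left {T X W Y : C} {α : X ⟶ W}
    (hα : ∀ u : X ⟶ T, ∃ g, α ≫ g = u) {f : X ⟶ Y} (hf : f ∈ sumsThrough T X Y) :
    ∃ g, α ≫ g = f :=
  (sumsThrough_le_iff (S := AddMonoidHom.mrange (leftComp Y α))).2
    (fun u v => have ⟨g, hg⟩ := hα u; ⟨g ≫ v, (assoc α g v).symm.trans (by rw [hg])⟩) hf

theorem exists_comp_eq_of_mem_sumsThrough_right {T X W Y : C} {β : W ⟶ Y}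
    (hβ : ∀ v : T ⟶ Y, ∃ g, g ≫ β = v) {f : X ⟶ Y} (hf : f ∈ sumsThrough T X Y) :
    ∃ g, g ≫ β = f :=
  (sumsThrough_le_iff (S := AddMonoidHom.mrange (rightComp X β))).2
    (fun u v => have ⟨g, hg⟩ := hβ v; ⟨u ≫ g, (assoc u g β).trans (by rw [hg])⟩) hf

variable [HasFiniteBiproducts C] (k : Type*) [Field k] [Linear k C]

theorem exists_leftApproximation (T X : C) [FiniteDimensional k (X ⟶ T)] :
    ∃ W, addClosure T W ∧ ∃ α : X ⟶ W, ∀ W', addClosure T W' → ∀ f : X ⟶ W', ∃ g, α ≫ g = f := by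
  let b := Module.finBasis k (X ⟶ T)
  refine ⟨_, addClosure_iff.2 ⟨_, 𝟙 _, 𝟙 _, comp_id _⟩, biproduct.lift b, fun W' hW' f => ?_⟩
  refine exists_comp_eq_of_mem_sumsThrough_left
    (fun u => ⟨biproduct.desc fun i => b.repr u i • 𝟙 T, ?_⟩) ?_
  · rw [biproduct.lift_desc]
    simp only [Linear.comp_smul, comp_id, b.sum_repr]
  · rw [← comp_id f]
    exact comp_left_mem_sumsThrough f hW'

theorem exists_rightApproximation (T X : C) [FiniteDimensional k (T ⟶ X)] :
    ∃ W, addClosure T W ∧ ∃ β : W ⟶ X, ∀ W', addClosure T W' → ∀ f : W' ⟶ X, ∃ g, g ≫ β = f := by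
  let b := Module.finBasis k (T ⟶ X)
  refine ⟨_, addClosure_iff.2 ⟨_, 𝟙 _, 𝟙 _, comp_id _⟩, biproduct.desc b, fun W' hW' f => ?_⟩
  refine exists_comp_eq_of_mem_sumsThrough_right
    (fun v => ⟨biproduct.lift fun i => b.repr v i • 𝟙 T, ?_⟩) ?_
  · rw [biproduct.lift_desc]
    simp only [Linear.smul_comp, id_comp, b.sum_repr]
  · rw [← id_comp f]
    exact comp_right_mem_sumsThrough hW' f

end Approximations

section CalabiYau

variable {C : Type*} [Category* C] [Preadditive C] [HasShift C ℤ]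
  [∀ n : ℤ, (shiftFunctor C n).Additive] {k : Type*} [Field k] [Linear k C]
  (serre : ∀ X Y : C, Nonempty ((X ⟶ Y) ≃ₗ[k] Module.Dual k (Y ⟶ X⟦(2 : ℤ)⟧)))

include serre

theorem hom_shift_eq_zero_symm {X Y : C} (h : ∀ f : X ⟶ Y⟦(1 : ℤ)⟧, f = 0) (g : Y ⟶ X⟦(1 : ℤ)⟧) :
    g = 0 := by
  obtain ⟨E⟩ := serre Y (X⟦(1 : ℤ)⟧)
  let e : Y⟦(2 : ℤ)⟧ ≅ Y⟦(1 : ℤ)⟧⟦(1 : ℤ)⟧ := (shiftFunctorAdd' C (1 : ℤ) 1 2 rfl).app Y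
  refine E.injective (LinearMap.ext fun φ => ?_)
  obtain ⟨f, hf⟩ := (shiftFunctor C (1 : ℤ)).map_surjective (φ ≫ e.hom)
  have hφ : φ = 0 := by
    rw [h f, Functor.map_zero, eq_comm, IsIso.comp_right_eq_zero] at hf
    exact hf
  rw [hφ, map_zero, map_zero]

theorem admitsReduction_addClosure [HasZeroObject C] [HasFiniteBiproducts C] {T : C}
    (hT : ∀ f : T ⟶ T⟦(1 : ℤ)⟧, f = 0) (homFinite : ∀ X Y : C, FiniteDimensional k (X ⟶ Y)) :
    AdmitsReduction (addClosure T) where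
  toIsClosedUnderLimitsOfShape :=
    have := HasBinaryBiproducts.of_hasBinaryProducts (C := C)
    inferInstance
  le_rightPerp := addClosure_le_rightPerp hT
  leftPerp_eq_rightPerp := by
    ext X
    exact leftPerp_addClosure_iff.trans (Iff.trans
      ⟨hom_shift_eq_zero_symm serre, hom_shift_eq_zero_symm serre⟩ rightPerp_addClosure_iff.symm)
  exists_leftApproximation X := exists_leftApproximation k T X
  exists_rightApproximation X := exists_rightApproximation k T X

end CalabiYau

section ClusterTilting

variable {C : Type*} [Category* C] [Preadditive C] [HasShift C ℤ]

/-- `T` is cluster-tilting: `add T` consists of the objects `X` with `Ext¹(T, X) = 0`. -/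
def IsClusterTilting (T : C) : Prop := ∀ X : C, (∀ f : T ⟶ X⟦(1 : ℤ)⟧, f = 0) ↔ addClosure T X

theorem IsClusterTilting.hom_shift_eq_zero [(shiftFunctor C (1 : ℤ)).Additive] {T A B : C}
    (hT : IsClusterTilting T) (rA : Retract A T) (rB : Retract B T) (f : A ⟶ B⟦(1 : ℤ)⟧) :
    f = 0 :=
  addClosure_le_rightPerp ((hT T).2 (addClosure_self T)) _
    ((addClosure T).prop_of_retract rB (addClosure_self T))
    ((addClosure T).prop_of_retract rA (addClosure_self T)) f

namespace Reduction

variable [HasZeroObject C] [∀ n : ℤ, (shiftFunctor C n).Additive] [Pretriangulated C]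

theorem forall_hom_shift_eq_zero_iff {D : ObjectProperty C} [AdmitsReduction D]
    {X Y : Reduction D} :
    (∀ f : X ⟶ Y⟦(1 : ℤ)⟧, f = 0) ↔ ∀ g : X.X 0 ⟶ (Y.X 0)⟦(1 : ℤ)⟧, g = 0 := by
  refine ⟨fun h g => ?_, fun h f => ?_⟩
  · obtain ⟨d, rfl⟩ := (Y.isSyzygy_conn 0 1 rfl).exists_comp_eq (X.leftPerp_X 0) g
    exact ofHomShift_eq_zero_iff.1 (h _)
  · obtain ⟨d, rfl⟩ := ofHomShift_surjective f
    exact ofHomShift_eq_zero_iff.2 (h _)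

theorem ofHom_mem_sumsThrough {D : ObjectProperty C} [AdmitsReduction D] {R X Y : Reduction D}
    {f : X.X 0 ⟶ Y.X 0} (hf : f ∈ sumsThrough (R.X 0) (X.X 0) (Y.X 0)) :
    ofHom f ∈ sumsThrough R X Y :=
  (sumsThrough_le_iff (S := (sumsThrough R X Y).comap ofHom)).2
    (fun u v => show ofHom (u ≫ v) ∈ _ by
      rw [ofHom_comp]; exact comp_mem_sumsThrough (ofHom u) (ofHom v)) hf

variable {A T : C} [AdmitsReduction (addClosure A)] {R X : Reduction (addClosure A)}
  (r : Retract A T) (r' : Retract (R.X 0) T) (h : retractIdem r + retractIdem r' = 1)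

include r r' h

theorem addClosure_of_addClosure_X_zero (hX : addClosure T (X.X 0)) : addClosure R X := by
  obtain ⟨a, ha, b, hb, hab⟩ := AddSubmonoid.mem_sup.1 (sumsThrough_le_sup r r' h hX)
  have ha₀ : ofHom a = 0 := ofHom_eq_zero_iff.2 (factorsThrough_addClosure_iff.2 ha)
  rw [addClosure, ← ofHom_id, ← hab, map_add, ha₀, zero_add]
  exact ofHom_mem_sumsThrough hb

theorem isClusterTilting (hT : IsClusterTilting T) : IsClusterTilting R := by
  refine fun X => ⟨fun hX => addClosure_of_addClosure_X_zero r r' h ((hT _).1 fun f => ?_),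
    fun hX => rightPerp_addClosure_iff.1 (addClosure_le_rightPerp ?_ _ hX)⟩
  · rw [← id_comp f, ← End.one_def, ← h, add_comp, retractIdem, retractIdem, assoc, assoc,
      X.rightPerp_X 0 (addClosure_self A) (r.i ≫ f),
      forall_hom_shift_eq_zero_iff.1 hX (r'.i ≫ f), comp_zero, comp_zero, add_zero]
  · exact forall_hom_shift_eq_zero_iff.2 (hT.hom_shift_eq_zero r' r')

end Reduction

end ClusterTilting

section IdempotentIdeal

variable {C : Type*} [Category* C] [Preadditive C] {A B T : C}

theorem mem_span_retractIdem_iff (r : Retract A T) {f : End T} :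
    f ∈ TwoSidedIdeal.span {retractIdem r} ↔ f ∈ sumsThrough A T T := by
  refine ⟨fun hf => ?_, fun hf => ?_⟩
  · induction hf using TwoSidedIdeal.span_induction with
    | mem _ hx => exact hx ▸ comp_mem_sumsThrough r.r r.i
    | zero => exact zero_mem _
    | add _ _ _ _ hx hy => exact add_mem hx hy
    | neg x _ hx => simpa using comp_right_mem_sumsThrough hx (-𝟙 T)
    | left_absorb a _ _ hx => exact comp_right_mem_sumsThrough hx a
    | right_absorb b _ _ hx => exact comp_left_mem_sumsThrough b hx
  · induction hf using AddSubmonoid.closure_induction with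
    | mem f hf =>
      obtain ⟨u, v, rfl⟩ := hf
      let a : End T := u ≫ r.i
      let b : End T := r.r ≫ v
      have huv : u ≫ v = b * retractIdem r * a := by simp [a, b, End.mul_def, retractIdem]
      exact huv ▸ TwoSidedIdeal.mul_mem_right _ _ a
        (TwoSidedIdeal.mul_mem_left _ b _ (TwoSidedIdeal.subset_span rfl))
    | zero => exact zero_mem _
    | add _ _ _ _ hx hy => exact add_mem hx hy

section

variable (k : Type*) [CommRing k] {E : Type*} [Ring E] [Algebra k E] {J : TwoSidedIdeal E} {x y : E}

theorem mkₐ_ringCon_eq_iff : J.ringCon.mkₐ k x = J.ringCon.mkₐ k y ↔ x - y ∈ J :=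
  (RingCon.eq _).trans (J.rel_iff x y)

theorem mkₐ_ringCon_eq_zero_iff : J.ringCon.mkₐ k x = 0 ↔ x ∈ J := by
  rw [← map_zero (J.ringCon.mkₐ k), mkₐ_ringCon_eq_iff, sub_zero]

end

variable (k : Type*) [CommRing k] [Linear k C] (r : Retract B T)

/-- For a retract `B` of `T`, the isomorphism of `End B` with the corner of `End T` cut out by the
idempotent `retractIdem r`. -/
def corner : End B →ₙₐ[k] End T where
  __ := Linear.leftComp k T r.r ∘ₗ Linear.rightComp k B r.i
  map_zero' := LinearMap.map_zero _
  map_mul' f g := by simp [End.mul_def]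

theorem corner_apply (g : End B) : corner k r g = r.r ≫ g ≫ r.i := rfl

theorem corner_one : corner k r 1 = retractIdem r := by
  rw [corner_apply, End.one_def, id_comp, retractIdem]

theorem corner_comp_comp (f : End T) :
    corner k r (r.i ≫ f ≫ r.r) = retractIdem r * f * retractIdem r := by
  simp [corner_apply, End.mul_def, retractIdem]

variable {J : TwoSidedIdeal (End T)} (hJ : 1 - retractIdem r ∈ J)

/-- The algebra morphism induced by `corner` modulo an ideal containing `1 - retractIdem r`. -/
def cornerQuotient : End B →ₐ[k] J.ringCon.Quotient :=
  AlgHom.ofLinearMap ((J.ringCon.mkₐ k).toLinearMap ∘ₗ (corner k r : End B →ₗ[k] End T))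
    ((mkₐ_ringCon_eq_iff k).2 (by
      rw [← neg_sub]
      exact J.neg_mem ((corner_one k r).symm ▸ hJ)))
    fun f g => (congrArg (J.ringCon.mkₐ k) (map_mul (corner k r) f g)).trans (map_mul _ _ _)

theorem cornerQuotient_surjective : Function.Surjective (cornerQuotient k r hJ) := by
  intro y
  obtain ⟨f, rfl⟩ := J.ringCon.mkₐ_surjective (α := k) y
  refine ⟨r.i ≫ f ≫ r.r, (mkₐ_ringCon_eq_iff k).2 ?_⟩
  have h : retractIdem r * f * retractIdem r - f =
      -((1 - retractIdem r) * f + retractIdem r * f * (1 - retractIdem r)) := by noncomm_ring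
  change corner k r (r.i ≫ f ≫ r.r) - f ∈ J
  rw [corner_comp_comp, h]
  exact J.neg_mem (J.add_mem (J.mul_mem_right _ _ hJ) (J.mul_mem_left _ _ hJ))

theorem cornerQuotient_eq_zero_iff {g : End B} :
    cornerQuotient k r hJ g = 0 ↔ corner k r g ∈ J :=
  mkₐ_ringCon_eq_zero_iff k

end IdempotentIdeal

section Biproduct

variable {C : Type*} [Category* C] [Preadditive C] {A B T : C} [HasBinaryBiproduct A B]

/-- The summand `A` of `T ≅ A ⊕ B` as a retract of `T`. -/
def biprodRetractLeft (e : T ≅ A ⊞ B) : Retract A T where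
  i := biprod.inl ≫ e.inv
  r := e.hom ≫ biprod.fst

/-- The summand `B` of `T ≅ A ⊕ B` as a retract of `T`. -/
def biprodRetractRight (e : T ≅ A ⊞ B) : Retract B T where
  i := biprod.inr ≫ e.inv
  r := e.hom ≫ biprod.snd

theorem retractIdem_biprodRetractLeft_add_biprodRetractRight (e : T ≅ A ⊞ B) :
    retractIdem (biprodRetractLeft e) + retractIdem (biprodRetractRight e) = 1 :=
  calc
    _ = e.hom ≫ (biprod.fst ≫ biprod.inl + biprod.snd ≫ biprod.inr) ≫ e.inv := by
      simp only [retractIdem, biprodRetractLeft, biprodRetractRight, assoc, add_comp, comp_add]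
    _ = 𝟙 T := by rw [biprod.total, id_comp, e.hom_inv_id]

end Biproduct

section Decomposition

variable {C : Type*} [Category* C] [Preadditive C] {A B T : C} (k : Type*) [CommRing k]
  [Linear k C] {r : Retract A T} {r' : Retract B T} (h : retractIdem r + retractIdem r' = 1)

include h in
theorem one_sub_retractIdem_mem_span :
    1 - retractIdem r' ∈ TwoSidedIdeal.span {retractIdem r} := by
  rw [← h, add_sub_cancel_right]
  exact TwoSidedIdeal.subset_span rfl

/-- For `T = A ⊕ B` with idempotent `e` of `End T` onto `A`, the projection of `End B` onto
`End T` modulo the ideal generated by `e`. -/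
def endToQuotientSpan : End B →ₐ[k] (TwoSidedIdeal.span {retractIdem r}).ringCon.Quotient :=
  cornerQuotient k r' (one_sub_retractIdem_mem_span h)

theorem endToQuotientSpan_surjective : Function.Surjective (endToQuotientSpan k h) :=
  cornerQuotient_surjective k r' _

theorem endToQuotientSpan_eq_zero_iff {g : End B} :
    endToQuotientSpan k h g = 0 ↔ g ∈ sumsThrough A B B := by
  refine (cornerQuotient_eq_zero_iff k r' _).trans <|
    (mem_span_retractIdem_iff r).trans ⟨fun hg => ?_, fun hg => ?_⟩
  · have hg' : g = r'.i ≫ (r'.r ≫ g ≫ r'.i) ≫ r'.r := by simp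
    exact hg' ▸ comp_left_mem_sumsThrough _ (comp_right_mem_sumsThrough hg _)
  · exact comp_left_mem_sumsThrough _ (comp_right_mem_sumsThrough hg _)

end Decomposition

section Reduction

variable {k : Type} [Field k] {C : Type} [Category.{0} C] [Preadditive C] [Linear k C]
  [HasShift C ℤ] [HasZeroObject C] [∀ n : ℤ, (shiftFunctor C n).Additive] [Pretriangulated C]

theorem Reduction.nonempty_algEquiv_end {A T : C} [HasFiniteBiproducts C]
    [AdmitsReduction (addClosure A)] {R : Reduction (addClosure A)} {r : Retract A T}
    {r' : Retract (R.X 0) T} (h : retractIdem r + retractIdem r' = 1) :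
    Nonempty ((TwoSidedIdeal.span {retractIdem r}).ringCon.Quotient ≃ₐ[k] End R) :=
  nonempty_algEquiv_of_ker_eq (endToQuotientSpan_surjective k h) (endAlgHom_surjective k R) <| by
    ext f
    exact (endToQuotientSpan_eq_zero_iff k h).trans
      (factorsThrough_addClosure_iff.symm.trans (endAlgHom_eq_zero_iff k).symm)

theorem isCYTilted_quotient_span [HasFiniteBiproducts C] [IsIdempotentComplete C]
    (homFinite : ∀ X Y : C, FiniteDimensional k (X ⟶ Y))
    (serre : ∀ X Y : C, Nonempty ((X ⟶ Y) ≃ₗ[k] Module.Dual k (Y ⟶ X⟦(2 : ℤ)⟧)))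
    {A B T : C} (hT : IsClusterTilting T) {r : Retract A T} {r' : Retract B T}
    (h : retractIdem r + retractIdem r' = 1) :
    IsCYTilted k (TwoSidedIdeal.span {retractIdem r}).ringCon.Quotient := by
  have := admitsReduction_addClosure serre (hT.hom_shift_eq_zero r r) homFinite
  obtain ⟨R, rfl⟩ := Reduction.exists_X_zero_eq
    (rightPerp_addClosure_iff.2 (hT.hom_shift_eq_zero r r'))
  have := Reduction.isIdempotentComplete (D := addClosure A) k fun X => homFinite X X
  exact ⟨{
    C := Reduction (addClosure A)
    homFinite := fun X Y =>
      have := homFinite (X.X 0) (Y.X 0)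
      X.finiteDimensional_hom k Y
    serre := Reduction.nonempty_linearEquiv_dual k serre
    T := R
    clusterTilting := fun X => (Reduction.isClusterTilting r r' h hT X).trans addClosure_iff
    algIso := Reduction.nonempty_algEquiv_end h }⟩

end Reduction

end IyamaYoshino

open IyamaYoshino Limits in
theorem reduction_of_two_CY_tilted_general
    (k : Type) [Field k]
    (C : Type) [Category.{0} C] [Preadditive C] [Linear k C] [HasShift C ℤ]
    [HasZeroObject C] [∀ n : ℤ, (shiftFunctor C n).Additive] [Pretriangulated C]
    [HasFiniteBiproducts C] [HasBinaryBiproducts C] [IsIdempotentComplete C]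
    (homFinite : ∀ X Y : C, FiniteDimensional k (X ⟶ Y))
    (serre : ∀ X Y : C, Nonempty ((X ⟶ Y) ≃ₗ[k] Module.Dual k (Y ⟶ X⟦(2:ℤ)⟧)))
    (T : C)
    (hct : ∀ X : C, (∀ f : T ⟶ X⟦(1:ℤ)⟧, f = 0) ↔
      ∃ (n : ℕ) (s : X ⟶ ⨁ (fun _ : Fin n => T)) (r : (⨁ (fun _ : Fin n => T)) ⟶ X),
        s ≫ r = 𝟙 X)
    (Ti T' : C) (hdec : T ≅ Ti ⊞ T') :
    IsCYTilted k (TwoSidedIdeal.span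
      ({hdec.hom ≫ biprod.fst ≫ biprod.inl ≫ hdec.inv} : Set (End T))).ringCon.Quotient ∧
    ∃ φ : End T' →+* (TwoSidedIdeal.span
        ({hdec.hom ≫ biprod.fst ≫ biprod.inl ≫ hdec.inv} : Set (End T))).ringCon.Quotient,
      Function.Surjective φ ∧ ∀ f : End T', φ f = 0 ↔
        ∃ (n : ℕ) (u : T' ⟶ ⨁ fun _ : Fin n => Ti) (v : (⨁ fun _ : Fin n => Ti) ⟶ T'),
          u ≫ v = f := by
  have hr : hdec.hom ≫ biprod.fst ≫ biprod.inl ≫ hdec.inv =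
      retractIdem (biprodRetractLeft hdec) := (Category.assoc _ _ _).symm
  have h := retractIdem_biprodRetractLeft_add_biprodRetractRight hdec
  have hT : IsClusterTilting T := fun X => (hct X).trans addClosure_iff.symm
  rw [hr]
  exact ⟨isCYTilted_quotient_span homFinite serre hT h,
    (endToQuotientSpan k h).toRingHom, endToQuotientSpan_surjective k h, fun f =>
      (endToQuotientSpan_eq_zero_iff k h).trans mem_sumsThrough_iff⟩

/-- Let `C` be a Hom-finite, idempotent complete, `k`-linear
2-Calabi-Yau triangulated category, `T` a cluster-tilting object in `C`, and
`A = End_C(T)` the associated 2-Calabi-Yau tilted algebra. Let `T ≅ T_i ⊞ T'` with `T_i`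
indecomposable, let `e_i ∈ A` be the corresponding idempotent and `J = A e_i A`. Then the
quotient `B = A/J` is again a 2-Calabi-Yau tilted algebra; explicitly,
`B ≅ End_{C'}(T/T_i)` where `C' = T_i^⊥/(T_i)` is the Iyama-Yoshino reduction of `C` at
`T_i`: there is a surjective ring homomorphism `End_C(T') → B` whose kernel is exactly
the ideal of endomorphisms of `T'` factoring through `add T_i`. -/
theorem reduction_of_two_CY_tilted
    (k : Type) [Field k] [IsAlgClosed k]
    (C : Type) [Category.{0} C] [Preadditive C] [Linear k C] [HasShift C ℤ]
    [Limits.HasZeroObject C] [∀ n : ℤ, (shiftFunctor C n).Additive] [Pretriangulated C]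
    [Limits.HasFiniteBiproducts C] [Limits.HasBinaryBiproducts C] [IsIdempotentComplete C]
    (homFinite : ∀ X Y : C, FiniteDimensional k (X ⟶ Y))
    -- the 2-Calabi-Yau property
    (serre : ∀ X Y : C, Nonempty ((X ⟶ Y) ≃ₗ[k] Module.Dual k (Y ⟶ X⟦(2:ℤ)⟧)))
    -- `T` is a cluster-tilting object
    (T : C)
    (hct : ∀ X : C, (∀ f : T ⟶ X⟦(1:ℤ)⟧, f = 0) ↔
      ∃ (n : ℕ) (s : X ⟶ ⨁ (fun _ : Fin n => T)) (r : (⨁ (fun _ : Fin n => T)) ⟶ X),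
        s ≫ r = 𝟙 X)
    -- a decomposition `T ≅ T_i ⊞ T'` with `T_i` indecomposable
    (Ti T' : C) (hdec : T ≅ Ti ⊞ T')
    (hTi : ¬ Limits.IsZero Ti ∧
      ∀ f : Ti ⟶ Ti, f ≫ f = f → f = 0 ∨ f = 𝟙 Ti) :
    -- with `e_i` the idempotent of `A = End T` given by the summand `T_i`,
    -- and `B = A / A e_i A`:
    IsCYTilted k
      ((TwoSidedIdeal.span
        ({hdec.hom ≫ Limits.biprod.fst ≫ Limits.biprod.inl ≫ hdec.inv} : Set (End T))).ringCon.Quotient) ∧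
    ∃ φ : End T' →+*
      (TwoSidedIdeal.span
        ({hdec.hom ≫ Limits.biprod.fst ≫ Limits.biprod.inl ≫ hdec.inv} : Set (End T))).ringCon.Quotient,
      Function.Surjective φ ∧
      ∀ f : End T', φ f = 0 ↔
        ∃ (n : ℕ) (u : T' ⟶ ⨁ (fun _ : Fin n => Ti))
          (v : (⨁ (fun _ : Fin n => Ti)) ⟶ T'), u ≫ v = f :=
  reduction_of_two_CY_tilted_general k C homFinite serre T hct Ti T' hdec
end
end

section
/- Let A be a 2-Calabi-Yau tilted algebra, J = A e_i A, and let X be a Cohen-Macaulay A-module with Ext^1_A(J, X) = 0 = Ext^1_A(X, J). If f_X : J_X → X is an add-J approximation of X, then the cokernel F(X) = X / im f_X is a Cohen-Macaulay module over B = A/J, i.e., Ext^1_B(F(X), B) = 0. -/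
/-!
Let `A = End T` with `T` cluster-tilting. Every finitely generated module is `Hom(T, M)` for a
triangle `T₁ ⟶ T₀ ⟶ M ⟶ T₁⟦1⟧` with `T₁, T₀ ∈ add T`, and it is Cohen-Macaulay only if no nonzero
map `M ⟶ T⟦1⟧` kills all maps `T⟦1⟧ ⟶ M`. If `P` is the summand of `T` cut out by `e`, then
`J = A e A` is the image of `Hom(T, R) ⟶ Hom(T, T)` for an `add P`-approximation triangle
`Q ⟶ R ⟶ T ⟶ Q⟦1⟧`, in which `Q` is rigid because it arises by mutation.

For `X = Hom(T, M)`, a class in `Ext¹_A(X, A/J)` comes from a map `T₁ ⟶ T ⟶ Q⟦1⟧`, and its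
obstruction to vanishing is a map `M ⟶ Q⟦2⟧`. Since `Ext¹_A(J, X) = 0`, this map kills all maps
`Q ⟶ M`; since `Q` is rigid, the 2-Calabi-Yau duality then shows that it is zero. Hence
`Ext¹_A(X, A/J) = 0`.

Given an extension `0 ⟶ B ⟶ E ⟶ F(X) ⟶ 0` of `B`-modules, the projection `X ⟶ F(X)` therefore lifts
to `E`. The lift kills the image of `f_X` because there are no nonzero maps from `J` to a
`B`-module, so it descends to a section of `E ⟶ F(X)`.
-/

noncomputable section

open CategoryTheory Opposite DirectSum MulOpposite

/-- `M` is a module over `B = A/AeA`: the ideal `J = AeA` acts trivially. -/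
def JTriv {A : Type} [Ring A] (e : A) (M : Type) [AddCommGroup M]
    [Module Aᵐᵒᵖ M] : Prop :=
  ∀ a ∈ genIdeal e, ∀ m : M, (MulOpposite.op a) • m = 0

/-- `N` belongs to `add J`, i.e. is a direct summand of a finite direct sum of
copies of `J = AeA`. -/
def InAddJ {A : Type} [Ring A] (e : A) (N : ModuleCat.{0} Aᵐᵒᵖ) : Prop :=
  ∃ (n : ℕ) (s : N →ₗ[Aᵐᵒᵖ] (Fin n → ↥(genIdeal e)))
    (r : (Fin n → ↥(genIdeal e)) →ₗ[Aᵐᵒᵖ] N), r ∘ₗ s = LinearMap.id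

/-- `f : J_X → X` is an `add J`-approximation: `J_X ∈ add J` and every map from a
module of `add J` to `X` factors through `f`. -/
def IsAddJApprox {A : Type} [Ring A] (e : A) (JX X : ModuleCat.{0} Aᵐᵒᵖ)
    (f : JX →ₗ[Aᵐᵒᵖ] X) : Prop :=
  InAddJ e JX ∧ ∀ (Z : ModuleCat.{0} Aᵐᵒᵖ), InAddJ e Z →
    ∀ g : Z →ₗ[Aᵐᵒᵖ] X, ∃ h : Z →ₗ[Aᵐᵒᵖ] JX, f ∘ₗ h = g

section LinearAlgebra

variable {k : Type*} [DivisionRing k] {U V W Z : Type*}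
  [AddCommGroup U] [Module k U] [AddCommGroup V] [Module k V] [AddCommGroup W] [Module k W]
  [AddCommGroup Z] [Module k Z] [FiniteDimensional k V] [FiniteDimensional k W]

lemma finrank_range_add_finrank_of_exact {a : U →ₗ[k] V} {b : V →ₗ[k] W} {c : W →ₗ[k] Z}
    (ha : Function.Injective a) (hab : Function.Exact a b) (hbc : Function.Exact b c) :
    Module.finrank k (LinearMap.range c) + Module.finrank k V =
      Module.finrank k U + Module.finrank k W := by
  have ha' := LinearMap.finrank_range_of_inj ha
  have hb := LinearMap.finrank_range_add_finrank_ker b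
  have hc := LinearMap.finrank_range_add_finrank_ker c
  rw [LinearMap.exact_iff.1 hab] at hb
  rw [LinearMap.exact_iff.1 hbc] at hc
  omega

end LinearAlgebra

section Add

variable {C : Type*} [Category* C] [Preadditive C] {P T X Y Z : C}

/-- `X ∈ add T`, i.e. `X` is a direct summand of a finite direct sum of copies of `T`. This is
encoded without biproducts, as a decomposition of `𝟙 X` into maps that factor through `T`. -/
def InAdd (T X : C) : Prop :=
  ∃ (n : ℕ) (s : Fin n → (X ⟶ T)) (r : Fin n → (T ⟶ X)), ∑ i, s i ≫ r i = 𝟙 X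

/-- `f : X ⟶ Y` is a right `add P`-approximation: `X ∈ add P` and every map `P ⟶ Y` factors
through `f`. -/
structure IsRightAddApprox (P : C) (f : X ⟶ Y) : Prop where
  inAdd : InAdd P X
  exists_comp_eq : ∀ g : P ⟶ Y, ∃ h : P ⟶ X, h ≫ f = g

namespace InAdd

lemma refl (T : C) : InAdd T T :=
  ⟨1, fun _ => 𝟙 T, fun _ => 𝟙 T, by simp⟩

lemma of_retract {i : P ⟶ T} {p : T ⟶ P} (hip : i ≫ p = 𝟙 P) (h : InAdd P X) : InAdd T X := by
  obtain ⟨n, s, r, hsr⟩ := h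
  exact ⟨n, fun j => s j ≫ i, fun j => p ≫ r j, by simp [reassoc_of% hip, hsr]⟩

lemma biproduct [Limits.HasFiniteBiproducts C] (T : C) (n : ℕ) :
    InAdd T (⨁ fun _ : Fin n => T) :=
  ⟨n, Limits.biproduct.π _, Limits.biproduct.ι _, Limits.biproduct.total⟩

lemma iff_retract_biproduct [Limits.HasFiniteBiproducts C] :
    InAdd T X ↔ ∃ (n : ℕ) (s : X ⟶ ⨁ fun _ : Fin n => T) (r : (⨁ fun _ : Fin n => T) ⟶ X),
      s ≫ r = 𝟙 X := by
  constructor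
  · rintro ⟨n, s, r, h⟩
    exact ⟨n, Limits.biproduct.lift s, Limits.biproduct.desc r, by
      rw [Limits.biproduct.lift_desc, h]⟩
  · rintro ⟨n, s, r, h⟩
    refine ⟨n, fun i => s ≫ Limits.biproduct.π (fun _ => T) i,
      fun i => Limits.biproduct.ι (fun _ => T) i ≫ r, ?_⟩
    have total := Limits.biproduct.total (f := fun _ : Fin n => T)
    have total_comp := congr(s ≫ $total ≫ r)
    simpa only [Preadditive.sum_comp, Preadditive.comp_sum, Category.assoc, Category.id_comp, h]
      using total_comp

lemma map {D : Type*} [Category* D] [Preadditive D] (F : C ⥤ D) [F.Additive] (h : InAdd T X) :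
    InAdd (F.obj T) (F.obj X) := by
  obtain ⟨n, s, r, hsr⟩ := h
  refine ⟨n, fun i => F.map (s i), fun i => F.map (r i), ?_⟩
  simp only [← F.map_comp, ← F.map_sum, hsr, F.map_id]

lemma hom_ext (h : InAdd T X) {f g : X ⟶ Y} (hfg : ∀ t : T ⟶ X, t ≫ f = t ≫ g) : f = g := by
  obtain ⟨n, s, r, hsr⟩ := h
  rw [← Category.id_comp f, ← Category.id_comp g, ← hsr]
  simp only [Preadditive.sum_comp, Category.assoc, hfg]

lemma hom_ext' (h : InAdd T Y) {f g : X ⟶ Y} (hfg : ∀ t : Y ⟶ T, f ≫ t = g ≫ t) : f = g := by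
  obtain ⟨n, s, r, hsr⟩ := h
  rw [← Category.comp_id f, ← Category.comp_id g, ← hsr]
  simp only [Preadditive.comp_sum, ← Category.assoc, hfg]

lemma subsingleton_left (h : InAdd T X) [Subsingleton (T ⟶ Y)] : Subsingleton (X ⟶ Y) :=
  ⟨fun _ _ => h.hom_ext fun _ => Subsingleton.elim _ _⟩

lemma subsingleton_right (h : InAdd T Y) [Subsingleton (X ⟶ T)] : Subsingleton (X ⟶ Y) :=
  ⟨fun _ _ => h.hom_ext' fun _ => Subsingleton.elim _ _⟩

end InAdd

lemma IsRightAddApprox.exists_comp_eq_of_inAdd {f : X ⟶ Y} (hf : IsRightAddApprox P f)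
    (hZ : InAdd P Z) (g : Z ⟶ Y) : ∃ h : Z ⟶ X, h ≫ f = g := by
  obtain ⟨n, s, r, hsr⟩ := hZ
  choose h hh using fun i => hf.exists_comp_eq (r i ≫ g)
  refine ⟨∑ i, s i ≫ h i, ?_⟩
  simp only [Preadditive.sum_comp, Category.assoc, hh]
  simp only [← Category.assoc, ← Preadditive.sum_comp, hsr, Category.id_comp]

lemma exists_isRightAddApprox (k : Type*) [Field k] [Linear k C] [Limits.HasFiniteBiproducts C]
    (P Y : C) [FiniteDimensional k (P ⟶ Y)] :
    ∃ (X : C) (f : X ⟶ Y), IsRightAddApprox P f := by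
  let b := Module.finBasis k (P ⟶ Y)
  refine ⟨_, Limits.biproduct.desc b, InAdd.biproduct P _, fun g =>
    ⟨Limits.biproduct.lift fun i => b.repr g i • 𝟙 P, ?_⟩⟩
  rw [Limits.biproduct.lift_desc]
  simp [b.sum_repr]

end Add

section Shift

variable {C : Type*} [Category* C] [HasShift C ℤ]

instance subsingleton_shift_hom {X Y : C} [Subsingleton (X ⟶ Y)] :
    Subsingleton (X⟦(1 : ℤ)⟧ ⟶ Y⟦(1 : ℤ)⟧) :=
  (shiftFunctor C (1 : ℤ)).map_surjective.subsingleton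

lemma subsingleton_hom_of_shift {X Y : C} [Subsingleton (X⟦(1 : ℤ)⟧ ⟶ Y⟦(1 : ℤ)⟧)] :
    Subsingleton (X ⟶ Y) :=
  (shiftFunctor C (1 : ℤ)).map_injective.subsingleton

/-- The numerical shadow of the 2-Calabi-Yau duality `Hom(X, Y) ≅ D Hom(Y, X⟦2⟧)`. The duality
isomorphisms at hand are not known to be natural, so arguments that would use their naturality
count dimensions instead. -/
def IsTwoCYNumerically (k C : Type*) [Field k] [Category* C] [Preadditive C] [Linear k C]
    [HasShift C ℤ] : Prop :=
  ∀ X Y : C, Module.finrank k (X ⟶ Y) = Module.finrank k (Y ⟶ X⟦(1 : ℤ)⟧⟦(1 : ℤ)⟧)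

variable [Preadditive C]

/-- The cluster-tilting condition `add T = {X | Ext¹(T, X) = 0}`. -/
def IsClusterTilting (T : C) : Prop :=
  ∀ X : C, Subsingleton (T ⟶ X⟦(1 : ℤ)⟧) ↔ InAdd T X

/-- The condition on an object `M` that says that the `End T`-module `Hom(T, M)` is
Cohen-Macaulay, without mentioning modules: a map `M ⟶ T⟦1⟧` that kills all maps `T⟦1⟧ ⟶ M`
vanishes. -/
def IsCohenMacaulayObject (T M : C) : Prop :=
  ∀ φ : M ⟶ T⟦(1 : ℤ)⟧, (∀ t : T⟦(1 : ℤ)⟧ ⟶ M, t ≫ φ = 0) → φ = 0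

lemma IsClusterTilting.subsingleton_hom_shift {T : C} (hT : IsClusterTilting T) :
    Subsingleton (T ⟶ T⟦(1 : ℤ)⟧) :=
  (hT T).2 (InAdd.refl T)

variable {k : Type*} [Field k] [Linear k C]

lemma isTwoCYNumerically_of_serre_duality
    (serre : ∀ X Y : C, Nonempty ((X ⟶ Y) ≃ₗ[k] Module.Dual k (Y ⟶ X⟦(2 : ℤ)⟧))) :
    IsTwoCYNumerically k C := by
  intro X Y
  obtain ⟨s⟩ := serre X Y
  have i : X⟦(2 : ℤ)⟧ ≅ X⟦(1 : ℤ)⟧⟦(1 : ℤ)⟧ :=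
    (shiftFunctorAdd' C (1 : ℤ) 1 2 (by norm_num)).app X
  rw [s.finrank_eq, Subspace.dual_finrank_eq, (Linear.homCongr k (Iso.refl Y) i).finrank_eq]

variable [∀ X Y : C, FiniteDimensional k (X ⟶ Y)]

lemma IsTwoCYNumerically.subsingleton_iff (hC : IsTwoCYNumerically k C) (X Y : C) :
    Subsingleton (X ⟶ Y) ↔ Subsingleton (Y ⟶ X⟦(1 : ℤ)⟧⟦(1 : ℤ)⟧) := by
  rw [← Module.finrank_zero_iff (R := k), ← Module.finrank_zero_iff (R := k), hC X Y]

lemma IsTwoCYNumerically.subsingleton_hom_shift_symm (hC : IsTwoCYNumerically k C) {X Y : C}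
    [Subsingleton (X ⟶ Y⟦(1 : ℤ)⟧)] :
    Subsingleton (Y ⟶ X⟦(1 : ℤ)⟧) :=
  have := (hC.subsingleton_iff X (Y⟦(1 : ℤ)⟧)).1 inferInstance
  subsingleton_hom_of_shift

end Shift

section Triangulated

open Pretriangulated

variable {C : Type*} [Category* C] [Preadditive C] [HasShift C ℤ] [Limits.HasZeroObject C]
  [∀ n : ℤ, (shiftFunctor C n).Additive] [Pretriangulated C]

section Triangle

variable {X Y Z W : C} {f : X ⟶ Y} {g : Y ⟶ Z} {h : Z ⟶ X⟦(1 : ℤ)⟧}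

/-- The sign in the rotated triangle is absorbed into `b`. -/
lemma exists_eq_shift_comp (hT : Triangle.mk f g h ∈ distTriang C) (a : X⟦(1 : ℤ)⟧ ⟶ W)
    (ha : h ≫ a = 0) : ∃ b : Y⟦(1 : ℤ)⟧ ⟶ W, a = f⟦(1 : ℤ)⟧' ≫ b := by
  obtain ⟨b, hb⟩ : ∃ b : Y⟦(1 : ℤ)⟧ ⟶ W, a = (-f⟦(1 : ℤ)⟧') ≫ b :=
    Triangle.yoneda_exact₃ _ (rot_of_distTriang _ hT) a ha
  exact ⟨-b, by simp [hb]⟩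

lemma exists_shift_eq_comp (hT : Triangle.mk f g h ∈ distTriang C) (a : W ⟶ X)
    (ha : a ≫ f = 0) : ∃ b : W⟦(1 : ℤ)⟧ ⟶ Z, a⟦(1 : ℤ)⟧' = b ≫ h :=
  Triangle.coyoneda_exact₁ _ hT _
    (show a⟦(1 : ℤ)⟧' ≫ f⟦(1 : ℤ)⟧' = 0 by rw [← Functor.map_comp, ha, Functor.map_zero])

lemma exact_rightComp (k : Type*) [Semiring k] [Linear k C]
    (hT : Triangle.mk f g h ∈ distTriang C) (W : C) :
    Function.Exact (Linear.rightComp k W f) (Linear.rightComp k W g) := by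
  intro a
  constructor
  · intro ha
    obtain ⟨b, hb⟩ : ∃ b : W ⟶ X, a = b ≫ f := Triangle.coyoneda_exact₂ _ hT a ha
    exact ⟨b, hb.symm⟩
  · rintro ⟨b, rfl⟩
    have hfg : f ≫ g = 0 := comp_distTriang_mor_zero₁₂ _ hT
    simp [hfg]

lemma exact_leftComp (k : Type*) [Semiring k] [Linear k C]
    (hT : Triangle.mk f g h ∈ distTriang C) (W : C) :
    Function.Exact (Linear.leftComp k W g) (Linear.leftComp k W f) := by
  intro a
  constructor
  · intro ha
    obtain ⟨b, hb⟩ : ∃ b : Z ⟶ W, a = g ≫ b := Triangle.yoneda_exact₂ _ hT a ha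
    exact ⟨b, hb.symm⟩
  · rintro ⟨b, rfl⟩
    have hfg : f ≫ g = 0 := comp_distTriang_mor_zero₁₂ _ hT
    simp [reassoc_of% hfg]

end Triangle

namespace IsTwoCYNumerically

variable {k : Type*} [Field k] [Linear k C] [∀ X Y : C, FiniteDimensional k (X ⟶ Y)]

lemma eq_zero_of_forall_comp_eq_zero (hC : IsTwoCYNumerically k C) {Q M : C}
    [Subsingleton (Q ⟶ Q⟦(1 : ℤ)⟧)] (h : M ⟶ Q⟦(1 : ℤ)⟧⟦(1 : ℤ)⟧)
    (hh : ∀ a : Q ⟶ M, a ≫ h = 0) : h = 0 := by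
  obtain ⟨L, f, g, hT⟩ := distinguished_cocone_triangle₂ h
  have g_comp_h : g ≫ h = 0 := comp_distTriang_mor_zero₂₃ _ hT
  have bij : Function.Bijective (Linear.rightComp k Q g) := by
    constructor
    · rw [← LinearMap.ker_eq_bot, LinearMap.exact_iff.1 (exact_rightComp k hT Q)]
      exact LinearMap.range_eq_bot.2 (LinearMap.ext fun a => by
        simp [Subsingleton.eq_zero a])
    · intro a
      obtain ⟨b, hb⟩ : ∃ b : Q ⟶ L, a = b ≫ g := Triangle.coyoneda_exact₃ _ hT a (hh a)
      exact ⟨b, hb.symm⟩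
  have surj : Function.Surjective (Linear.leftComp k (Q⟦(1 : ℤ)⟧⟦(1 : ℤ)⟧) g) := by
    intro a
    obtain ⟨b, hb⟩ : ∃ b : M ⟶ Q⟦(1 : ℤ)⟧⟦(1 : ℤ)⟧, a = g ≫ b :=
      Triangle.yoneda_exact₂ _ hT a (Subsingleton.eq_zero (f ≫ a))
    exact ⟨b, hb.symm⟩
  have dim_eq : Module.finrank k (M ⟶ Q⟦(1 : ℤ)⟧⟦(1 : ℤ)⟧) =
      Module.finrank k (L ⟶ Q⟦(1 : ℤ)⟧⟦(1 : ℤ)⟧) := by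
    rw [← hC Q L, ← hC Q M, (LinearEquiv.ofBijective _ bij).finrank_eq]
  have inj := (LinearMap.injective_iff_surjective_of_finrank_eq_finrank dim_eq).2 surj
  exact inj (by simpa using g_comp_h)

/-- With a natural duality, `p⟦1⟧` would induce on `Hom(T, -)` the dual of the map that `p`
induces on `Hom(-, T⟦1⟧)`. -/
lemma exists_comp_shift_eq (hC : IsTwoCYNumerically k C) {T U M : C}
    [Subsingleton (T ⟶ U)] (p : U ⟶ M)
    (hp : ∀ φ : M ⟶ T⟦(1 : ℤ)⟧, p ≫ φ = 0 → φ = 0) (b : T ⟶ M⟦(1 : ℤ)⟧) :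
    ∃ c : T ⟶ U⟦(1 : ℤ)⟧, c ≫ p⟦(1 : ℤ)⟧' = b := by
  obtain ⟨V, g, d, hT⟩ := distinguished_cocone_triangle p
  have hT' : Triangle.mk g d (-p⟦(1 : ℤ)⟧') ∈ distTriang C := rot_of_distTriang _ hT
  have hT'' : Triangle.mk d (-p⟦(1 : ℤ)⟧') (-g⟦(1 : ℤ)⟧') ∈ distTriang C :=
    rot_of_distTriang _ hT'
  let T₂ := T⟦(1 : ℤ)⟧⟦(1 : ℤ)⟧
  have : Subsingleton (U ⟶ T₂) := (hC.subsingleton_iff T U).1 inferInstance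
  have g_inj : Function.Injective (Linear.rightComp k T g) := by
    rw [← LinearMap.ker_eq_bot, LinearMap.exact_iff.1 (exact_rightComp k hT T)]
    exact LinearMap.range_eq_bot.2 (LinearMap.ext fun a => by simp [Subsingleton.eq_zero a])
  have g_surj : Function.Surjective (Linear.leftComp k T₂ g) := by
    intro a
    obtain ⟨c, hc⟩ : ∃ c : V ⟶ T₂, a = g ≫ c :=
      Triangle.yoneda_exact₂ _ hT a (Subsingleton.eq_zero (p ≫ a))
    exact ⟨c, hc.symm⟩
  have p_inj : Function.Injective (Linear.leftComp k T₂ (-p⟦(1 : ℤ)⟧')) := by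
    rw [injective_iff_map_eq_zero]
    intro a ha
    obtain ⟨a, rfl⟩ := (shiftFunctor C (1 : ℤ)).map_surjective a
    have : p ≫ a = 0 := (shiftFunctor C (1 : ℤ)).map_injective (by simpa using ha)
    rw [hp a this, Functor.map_zero]
  have dim := finrank_range_add_finrank_of_exact g_inj (exact_rightComp k hT' T)
    (exact_rightComp k hT'' T)
  have dim' := finrank_range_add_finrank_of_exact p_inj (exact_leftComp k hT'' T₂)
    (exact_leftComp k hT' T₂)
  rw [LinearMap.range_eq_top.2 g_surj, finrank_top, ← hC T M, ← hC T V, ← hC T (M⟦(1 : ℤ)⟧),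
    ← hC T (U⟦(1 : ℤ)⟧)] at dim'
  have surj : LinearMap.range (Linear.rightComp k T (-p⟦(1 : ℤ)⟧')) = ⊤ :=
    Submodule.eq_top_of_finrank_eq (by omega)
  obtain ⟨c, hc⟩ := LinearMap.range_eq_top.1 surj b
  exact ⟨-c, by simpa using hc⟩

/-- An approximation triangle `Q ⟶ R ⟶ T ⟶ Q⟦1⟧` of a rigid object by a summand is a mutation of
it, and mutation preserves rigidity. -/
lemma subsingleton_hom_shift_of_isRightAddApprox (hC : IsTwoCYNumerically k C) {P T Q R : C}
    {r : Q ⟶ R} {ρ : R ⟶ T} {q : T ⟶ Q⟦(1 : ℤ)⟧} (hT : Triangle.mk r ρ q ∈ distTriang C)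
    (hρ : IsRightAddApprox P ρ) (hR : InAdd T R) [Subsingleton (T ⟶ T⟦(1 : ℤ)⟧)] :
    Subsingleton (Q ⟶ Q⟦(1 : ℤ)⟧) := by
  have ρ_comp_q : ρ ≫ q = 0 := comp_distTriang_mor_zero₂₃ _ hT
  have : Subsingleton (T ⟶ R⟦(1 : ℤ)⟧) := (hR.map (shiftFunctor C (1 : ℤ))).subsingleton_right
  have : Subsingleton (R ⟶ R⟦(1 : ℤ)⟧) := hR.subsingleton_left
  have : Subsingleton (R ⟶ Q⟦(1 : ℤ)⟧) := by
    refine subsingleton_of_forall_eq 0 fun a => ?_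
    obtain ⟨b, rfl⟩ : ∃ b : R ⟶ T, a = b ≫ q :=
      Triangle.coyoneda_exact₁ _ hT a (Subsingleton.eq_zero (a ≫ r⟦(1 : ℤ)⟧'))
    obtain ⟨c, rfl⟩ := hρ.exists_comp_eq_of_inAdd hρ.inAdd b
    rw [Category.assoc, ρ_comp_q, Limits.comp_zero]
  have : Subsingleton (Q ⟶ R⟦(1 : ℤ)⟧) := hC.subsingleton_hom_shift_symm
  refine subsingleton_of_forall_eq 0 fun a => ?_
  obtain ⟨b, rfl⟩ : ∃ b : Q ⟶ T, a = b ≫ q :=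
    Triangle.coyoneda_exact₁ _ hT a (Subsingleton.eq_zero (a ≫ r⟦(1 : ℤ)⟧'))
  obtain ⟨c, hc⟩ := exists_eq_shift_comp hT (b⟦(1 : ℤ)⟧') (Subsingleton.eq_zero _)
  obtain ⟨c, rfl⟩ := (shiftFunctor C (1 : ℤ)).map_surjective c
  obtain rfl : b = r ≫ c := (shiftFunctor C (1 : ℤ)).map_injective (by rw [hc, Functor.map_comp])
  obtain ⟨d, rfl⟩ := hρ.exists_comp_eq_of_inAdd hρ.inAdd c
  simp [ρ_comp_q]

end IsTwoCYNumerically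

section ClusterTilting

lemma IsClusterTilting.exists_distTriang (k : Type*) [Field k] [Linear k C]
    [∀ X Y : C, FiniteDimensional k (X ⟶ Y)] {T : C} (hT : IsClusterTilting T) (M : C) :
    ∃ (T₁ T₀ : C) (g : T₁ ⟶ T₀) (c : T₀ ⟶ M) (δ : M ⟶ T₁⟦(1 : ℤ)⟧),
      Triangle.mk g c δ ∈ distTriang C ∧ InAdd T T₁ ∧ IsRightAddApprox T c := by
  obtain ⟨T₀, c, hc⟩ := exists_isRightAddApprox k T M
  obtain ⟨T₁, g, δ, hΔ⟩ := distinguished_cocone_triangle₁ c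
  refine ⟨T₁, T₀, g, c, δ, hΔ, (hT T₁).1 (subsingleton_of_forall_eq 0 fun t => ?_), hc⟩
  have := hT.subsingleton_hom_shift
  have := (hc.inAdd.map (shiftFunctor C (1 : ℤ))).subsingleton_right (X := T)
  obtain ⟨b, rfl⟩ : ∃ b : T ⟶ M, t = b ≫ δ :=
    Triangle.coyoneda_exact₁ _ hΔ t (Subsingleton.eq_zero (t ≫ g⟦(1 : ℤ)⟧'))
  obtain ⟨b, rfl⟩ := hc.exists_comp_eq b
  have c_comp_δ : c ≫ δ = 0 := comp_distTriang_mor_zero₂₃ _ hΔ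
  rw [Category.assoc, c_comp_δ, Limits.comp_zero]

/-- A map killed by all maps from `T` factors through `add T⟦1⟧`. -/
lemma IsClusterTilting.comp_eq_zero (k : Type*) [Field k] [Linear k C]
    [∀ X Y : C, FiniteDimensional k (X ⟶ Y)] {T Q M N : C} (hT : IsClusterTilting T) {a : Q ⟶ M}
    (ha : ∀ t : T ⟶ Q, t ≫ a = 0) {h : M ⟶ N} (hh : ∀ t : T⟦(1 : ℤ)⟧ ⟶ M, t ≫ h = 0) :
    a ≫ h = 0 := by
  obtain ⟨T₁, T₀, g, c, δ, hΔ, hT₁, hc⟩ := hT.exists_distTriang k Q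
  have c_comp_a : c ≫ a = 0 := hc.inAdd.hom_ext fun t => by
    rw [← Category.assoc, ha, Limits.comp_zero]
  obtain ⟨b, rfl⟩ : ∃ b : T₁⟦(1 : ℤ)⟧ ⟶ M, a = δ ≫ b := Triangle.yoneda_exact₃ _ hΔ a c_comp_a
  have b_comp_h : b ≫ h = 0 := (hT₁.map (shiftFunctor C (1 : ℤ))).hom_ext fun t => by
    rw [← Category.assoc, hh, Limits.comp_zero]
  rw [Category.assoc, b_comp_h, Limits.comp_zero]

variable {k : Type*} [Field k] [Linear k C] [∀ X Y : C, FiniteDimensional k (X ⟶ Y)]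

lemma IsCohenMacaulayObject.comp_comp_eq_zero (hC : IsTwoCYNumerically k C) {T M : C}
    [Subsingleton (T ⟶ T⟦(1 : ℤ)⟧)] (hM : IsCohenMacaulayObject T M) (s : T⟦(1 : ℤ)⟧ ⟶ T)
    (b : T ⟶ M⟦(1 : ℤ)⟧) : s ≫ b = 0 := by
  obtain ⟨U, p, hp⟩ := exists_isRightAddApprox k (T⟦(1 : ℤ)⟧) M
  have : Subsingleton (T ⟶ U) := hp.inAdd.subsingleton_right
  have hp' (φ : M ⟶ T⟦(1 : ℤ)⟧) (hφ : p ≫ φ = 0) : φ = 0 := hM φ fun t => by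
    obtain ⟨u, rfl⟩ := hp.exists_comp_eq t
    rw [Category.assoc, hφ, Limits.comp_zero]
  obtain ⟨c, rfl⟩ := hC.exists_comp_shift_eq p hp' b
  rw [← Category.assoc, Subsingleton.eq_zero (s ≫ c), Limits.zero_comp]

lemma IsCohenMacaulayObject.comp_eq_zero (hC : IsTwoCYNumerically k C) {T M Q R : C}
    [Subsingleton (T ⟶ T⟦(1 : ℤ)⟧)] (hM : IsCohenMacaulayObject T M)
    {r : Q ⟶ R} {ρ : R ⟶ T} {q : T ⟶ Q⟦(1 : ℤ)⟧} (hΔ : Triangle.mk r ρ q ∈ distTriang C)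
    {t : T ⟶ Q} (ht : t ≫ r = 0) (a : Q ⟶ M) : t ≫ a = 0 := by
  obtain ⟨s, hs⟩ := exists_shift_eq_comp hΔ t ht
  apply (shiftFunctor C (1 : ℤ)).map_injective
  rw [Functor.map_comp, hs, Functor.map_zero, Category.assoc, hM.comp_comp_eq_zero hC]

section Lifting

variable {P T Q R M T₀ T₁ : C} {r : Q ⟶ R} {ρ : R ⟶ T} {q : T ⟶ Q⟦(1 : ℤ)⟧}
  {g : T₁ ⟶ T₀} {c : T₀ ⟶ M} {δ : M ⟶ T₁⟦(1 : ℤ)⟧} {w : T₁ ⟶ T}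

/-- `hJ` says that `Ext¹(J, Hom(T, M)) = 0` for `J` the image of `Hom(T, ρ)`, and `hw` that `w`
induces a cocycle with values in `Hom(T, T) / J`. The composite `δ ≫ (w ≫ q)⟦1⟧` is the obstruction
to this cocycle being a coboundary. -/
lemma comp_connecting_eq_zero (hC : IsTwoCYNumerically k C) (hT : IsClusterTilting T)
    (hΔ : Triangle.mk r ρ q ∈ distTriang C) (hR : InAdd T R) (hT₁ : InAdd T T₁)
    (hΔ' : Triangle.mk g c δ ∈ distTriang C) (hM : IsCohenMacaulayObject T M)
    (hJ : ∀ a : Q ⟶ M, (∀ t : T ⟶ Q, t ≫ r = 0 → t ≫ a = 0) →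
      ∃ y : R ⟶ M, ∀ t : T ⟶ Q, t ≫ r ≫ y = t ≫ a)
    (hw : ∀ t : T ⟶ T₁, t ≫ g = 0 → t ≫ w ≫ q = 0) (a : Q ⟶ M) :
    a ≫ δ ≫ (w ≫ q)⟦(1 : ℤ)⟧' = 0 := by
  have := hT.subsingleton_hom_shift
  obtain ⟨y, hy⟩ := hJ a fun t ht => hM.comp_eq_zero hC hΔ ht a
  have y_comp_δ : y ≫ δ = 0 :=
    have := (hT₁.map (shiftFunctor C (1 : ℤ))).subsingleton_right (X := T)
    have : Subsingleton (R ⟶ T₁⟦(1 : ℤ)⟧) := hR.subsingleton_left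
    Subsingleton.eq_zero _
  have shift_comp (t : T⟦(1 : ℤ)⟧ ⟶ M) : t ≫ δ ≫ (w ≫ q)⟦(1 : ℤ)⟧' = 0 := by
    obtain ⟨t', ht'⟩ := (shiftFunctor C (1 : ℤ)).map_surjective (t ≫ δ)
    have δ_comp : δ ≫ g⟦(1 : ℤ)⟧' = 0 := comp_distTriang_mor_zero₃₁ _ hΔ'
    have t'_comp_g : t' ≫ g = 0 := (shiftFunctor C (1 : ℤ)).map_injective (by
      rw [Functor.map_comp, ht', Category.assoc, δ_comp, Limits.comp_zero, Functor.map_zero])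
    rw [← Category.assoc, ← ht', ← Functor.map_comp, hw t' t'_comp_g, Functor.map_zero]
  have diff : (a - r ≫ y) ≫ δ ≫ (w ≫ q)⟦(1 : ℤ)⟧' = 0 :=
    hT.comp_eq_zero k (fun t => by rw [Preadditive.comp_sub, hy t, sub_self]) shift_comp
  rwa [Preadditive.sub_comp, Category.assoc, ← Category.assoc y, y_comp_δ, Limits.zero_comp,
    Limits.comp_zero, sub_zero] at diff

lemma exists_comp_comp_eq (hC : IsTwoCYNumerically k C) (hT : IsClusterTilting T)
    (hΔ : Triangle.mk r ρ q ∈ distTriang C) (hρ : IsRightAddApprox P ρ) (hR : InAdd T R)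
    (hT₁ : InAdd T T₁) (hT₀ : InAdd T T₀)
    (hΔ' : Triangle.mk g c δ ∈ distTriang C) (hM : IsCohenMacaulayObject T M)
    (hJ : ∀ a : Q ⟶ M, (∀ t : T ⟶ Q, t ≫ r = 0 → t ≫ a = 0) →
      ∃ y : R ⟶ M, ∀ t : T ⟶ Q, t ≫ r ≫ y = t ≫ a)
    (hw : ∀ t : T ⟶ T₁, t ≫ g = 0 → t ≫ w ≫ q = 0) :
    ∃ w' : T₀ ⟶ T, g ≫ w' ≫ q = w ≫ q := by
  have := hT.subsingleton_hom_shift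
  have := hC.subsingleton_hom_shift_of_isRightAddApprox hΔ hρ hR
  have connecting : δ ≫ (w ≫ q)⟦(1 : ℤ)⟧' = 0 :=
    hC.eq_zero_of_forall_comp_eq_zero _ (comp_connecting_eq_zero hC hT hΔ hR hT₁ hΔ' hM hJ hw)
  obtain ⟨d, hd⟩ := exists_eq_shift_comp hΔ' _ connecting
  obtain ⟨d, rfl⟩ := (shiftFunctor C (1 : ℤ)).map_surjective d
  have := (hR.map (shiftFunctor C (1 : ℤ))).subsingleton_right (X := T)
  have : Subsingleton (T₀ ⟶ R⟦(1 : ℤ)⟧) := hT₀.subsingleton_left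
  obtain ⟨w', rfl⟩ : ∃ w' : T₀ ⟶ T, d = w' ≫ q :=
    Triangle.coyoneda_exact₁ _ hΔ d (Subsingleton.eq_zero (d ≫ r⟦(1 : ℤ)⟧'))
  exact ⟨w', (shiftFunctor C (1 : ℤ)).map_injective (by rw [Functor.map_comp, hd])⟩

end Lifting

end ClusterTilting

end Triangulated

section ExtOne

universe u

variable {S : Type u} [Ring S] {M M' N N' P V : Type u}
  [AddCommGroup M] [Module S M] [AddCommGroup M'] [Module S M'] [AddCommGroup N] [Module S N]
  [AddCommGroup N'] [Module S N'] [AddCommGroup P] [Module S P] [AddCommGroup V] [Module S V]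

lemma exists_comp_eq_of_ker_le_ker {p : P →ₗ[S] M} (hp : Function.Surjective p) {g : P →ₗ[S] N}
    (h : LinearMap.ker p ≤ LinearMap.ker g) : ∃ φ : M →ₗ[S] N, φ ∘ₗ p = g :=
  ⟨(LinearMap.ker p).liftQ g h ∘ₗ (p.quotKerEquivOfSurjective hp).symm.toLinearMap, by
    ext x; simp⟩

/-- Vanishing of `Ext¹(M, N)`, stated without derived functors: for every surjection `P ⟶ M`, maps
from its kernel to `N` extend to `P`. Allowing all `P` rather than only projective ones gives the
same notion, see `ExtOneVanishes.of_projective`. -/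
def ExtOneVanishes (S M N : Type u) [Ring S] [AddCommGroup M] [Module S M] [AddCommGroup N]
    [Module S N] : Prop :=
  ∀ (P : Type u) [AddCommGroup P] [Module S P] (p : P →ₗ[S] M), Function.Surjective p →
    ∀ α : LinearMap.ker p →ₗ[S] N, ∃ β : P →ₗ[S] N, β ∘ₗ (LinearMap.ker p).subtype = α

namespace ExtOneVanishes

lemma exists_extension (h : ExtOneVanishes S M N) {i : V →ₗ[S] P} {p : P →ₗ[S] M}
    (hp : Function.Surjective p) (hip : Function.Exact i p) {α : V →ₗ[S] N}
    (hα : LinearMap.ker i ≤ LinearMap.ker α) : ∃ β : P →ₗ[S] N, β ∘ₗ i = α := by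
  have i_mem : ∀ x, i x ∈ LinearMap.ker p := fun x => (hip _).2 ⟨x, rfl⟩
  have surj : Function.Surjective (i.codRestrict _ i_mem) := by
    rintro ⟨x, hx⟩
    obtain ⟨y, hy⟩ := (hip x).1 hx
    exact ⟨y, Subtype.ext hy⟩
  obtain ⟨α', hα'⟩ := exists_comp_eq_of_ker_le_ker surj (g := α) (by
    rwa [LinearMap.ker_codRestrict])
  obtain ⟨β, hβ⟩ := h P p hp α'
  refine ⟨β, ?_⟩
  rw [← hα', ← hβ]
  rfl

lemma of_projective [Module.Projective S P] {d : V →ₗ[S] P} {ε : P →ₗ[S] M}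
    (hε : Function.Surjective ε) (hd : Function.Exact d ε)
    (h : ∀ α : V →ₗ[S] N, LinearMap.ker d ≤ LinearMap.ker α → ∃ β : P →ₗ[S] N, β ∘ₗ d = α) :
    ExtOneVanishes S M N := by
  intro P' _ _ p hp α
  obtain ⟨l, hl⟩ := Module.projective_lifting_property p ε hp
  have p_l (x : P) : p (l x) = ε x := LinearMap.congr_fun hl x
  have l_d_mem (x : V) : (l ∘ₗ d) x ∈ LinearMap.ker p := (p_l _).trans ((hd _).2 ⟨x, rfl⟩)
  let l' : V →ₗ[S] LinearMap.ker p := (l ∘ₗ d).codRestrict _ l_d_mem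
  obtain ⟨β, hβ⟩ := h (α ∘ₗ l') fun x hx => by
    have : l' x = 0 := Subtype.ext ((congrArg l hx).trans (map_zero l))
    simp [this]
  have surj : Function.Surjective (l.coprod (LinearMap.ker p).subtype) := by
    intro y
    obtain ⟨x, hx⟩ := hε (p y)
    exact ⟨(x, ⟨y - l x, by simp [p_l, hx]⟩), by simp⟩
  have ker_le : LinearMap.ker (l.coprod (LinearMap.ker p).subtype) ≤
      LinearMap.ker (β.coprod α) := by
    rintro ⟨x, z⟩ hxz
    have l_x : l x = -z := eq_neg_of_add_eq_zero_left hxz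
    obtain ⟨y, rfl⟩ := (hd x).1 (by rw [← p_l, l_x, map_neg, z.2, neg_zero])
    have l'_y : l' y = -z := Subtype.ext l_x
    have : β (d y) = α (l' y) := LinearMap.congr_fun hβ y
    simp [this, l'_y]
  obtain ⟨γ, hγ⟩ := exists_comp_eq_of_ker_le_ker surj ker_le
  exact ⟨γ, by ext z; simpa using LinearMap.congr_fun hγ (0, z)⟩

lemma congr (h : ExtOneVanishes S M N) (f : M ≃ₗ[S] M') (g : N ≃ₗ[S] N') :
    ExtOneVanishes S M' N' := by
  intro P _ _ p hp α
  obtain ⟨β, hβ⟩ := h.exists_extension (i := (LinearMap.ker p).subtype)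
    (p := f.symm.toLinearMap ∘ₗ p) (f.symm.surjective.comp hp) (fun x => by simp)
    (α := g.symm.toLinearMap ∘ₗ α) (by simp)
  refine ⟨g.toLinearMap ∘ₗ β, ?_⟩
  rw [LinearMap.comp_assoc, hβ]
  ext x
  simp

lemma exists_lift (h : ExtOneVanishes S M N) {E F : Type u} [AddCommGroup E] [Module S E]
    [AddCommGroup F] [Module S F] {u : N →ₗ[S] E} {v : E →ₗ[S] F} (hu : Function.Injective u)
    (huv : Function.Exact u v) (hv : Function.Surjective v) (g : M →ₗ[S] F) :
    ∃ l : M →ₗ[S] E, v ∘ₗ l = g := by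
  let p : (M →₀ S) →ₗ[S] M := Finsupp.linearCombination S id
  have hp : Function.Surjective p := Finsupp.linearCombination_id_surjective S M
  obtain ⟨l, hl⟩ := Module.projective_lifting_property v (g ∘ₗ p) hv
  have v_l (x : M →₀ S) : v (l x) = g (p x) := LinearMap.congr_fun hl x
  have v_u (y : N) : v (u y) = 0 := (huv _).2 ⟨y, rfl⟩
  let u' := LinearEquiv.ofInjective u hu
  obtain ⟨β, hβ⟩ := h _ p hp (u'.symm.toLinearMap ∘ₗ
    (l ∘ₗ (LinearMap.ker p).subtype).codRestrict _ fun x => (huv _).1 (by simp [v_l]))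
  have u_β (x : M →₀ S) (hx : p x = 0) : u (β x) = l x := by
    have := LinearMap.congr_fun hβ ⟨x, hx⟩
    exact congrArg Subtype.val ((LinearEquiv.eq_symm_apply u').1 this)
  obtain ⟨φ, hφ⟩ := exists_comp_eq_of_ker_le_ker hp (g := l - u ∘ₗ β) fun x hx => by
    simp [u_β x hx]
  refine ⟨φ, LinearMap.ext fun m => ?_⟩
  obtain ⟨x, rfl⟩ := hp m
  have φ_p : φ (p x) = l x - u (β x) := LinearMap.congr_fun hφ x
  simp [φ_p, v_l, v_u]

end ExtOneVanishes

lemma extOneVanishes_of_subsingleton_ext (k : Type u) [Field k] [Algebra k S]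
    (M N : ModuleCat.{u} S) [h : Subsingleton (((Ext k (ModuleCat.{u} S) 1).obj (op M)).obj N)] :
    ExtOneVanishes S M N := by
  let R := ProjectiveResolution.of M
  have hom_exact : Limits.IsZero ((R.complex.linearYonedaObj k N).homology 1) :=
    (ModuleCat.isZero_of_subsingleton _).of_iso (R.isoExt (R := k) 1 N).symm
  rw [← HomologicalComplex.exactAt_iff_isZero_homology,
    HomologicalComplex.exactAt_iff' _ 0 1 2 (by simp) (by simp)] at hom_exact
  have exists_extension (φ : R.complex.X 1 ⟶ N) (hφ : R.complex.d 2 1 ≫ φ = 0) :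
      ∃ ψ : R.complex.X 0 ⟶ N, R.complex.d 1 0 ≫ ψ = φ :=
    (ShortComplex.moduleCat_exact_iff _).1 hom_exact φ hφ
  have : Module.Projective S (R.complex.X 0) :=
    (IsProjective.iff_projective _).2 (R.projective 0)
  have exact₀ := (ShortComplex.ShortExact.moduleCat_exact_iff_function_exact _).1 R.exact₀
  refine .of_projective (ε := (R.π.f 0).hom) ((ModuleCat.epi_iff_surjective _).1 inferInstance)
    exact₀ fun α hα => ?_
  obtain ⟨β, hβ⟩ := exists_extension (ModuleCat.ofHom α) <| by
    ext x
    exact hα (congr($(R.complex.d_comp_d 2 1 0) x))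
  exact ⟨β.hom, congrArg ModuleCat.Hom.hom hβ⟩

end ExtOne

section GenIdeal

variable {A : Type} [Ring A] {e : A}

lemma mul_mul_mem_genIdeal (b e c : A) : b * e * c ∈ genIdeal e :=
  Submodule.smul_mem _ (MulOpposite.op c) (Submodule.subset_span ⟨b, rfl⟩)

lemma self_mem_genIdeal (e : A) : e ∈ genIdeal e := by
  simpa using mul_mul_mem_genIdeal 1 e 1

namespace JTriv

variable {E : Type} [AddCommGroup E] [Module Aᵐᵒᵖ E]

lemma eq_zero_of_genIdeal (hE : JTriv e E) (he : IsIdempotentElem e)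
    (γ : genIdeal e →ₗ[Aᵐᵒᵖ] E) : γ = 0 := by
  have le_map_ker : genIdeal e ≤ (LinearMap.ker γ).map (genIdeal e).subtype := by
    refine Submodule.span_le.2 ?_
    rintro _ ⟨b, rfl⟩
    let x : genIdeal e := ⟨b * e, Submodule.subset_span ⟨b, rfl⟩⟩
    have x_eq : x = MulOpposite.op e • x := Subtype.ext (by simp [x, mul_assoc, he.eq])
    exact ⟨x, by rw [x_eq]; simpa using hE e (self_mem_genIdeal e) (γ x), rfl⟩
  ext x
  obtain ⟨y, hy, hyx⟩ := le_map_ker x.2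
  rwa [← Subtype.ext hyx]

lemma eq_zero_of_inAddJ (hE : JTriv e E) (he : IsIdempotentElem e) {N : ModuleCat.{0} Aᵐᵒᵖ}
    (hN : InAddJ e N) (γ : N →ₗ[Aᵐᵒᵖ] E) : γ = 0 := by
  obtain ⟨n, s, r, hrs⟩ := hN
  have γ_comp_r : γ ∘ₗ r = 0 :=
    LinearMap.pi_ext' fun j => by
      rw [hE.eq_zero_of_genIdeal he ((γ ∘ₗ r) ∘ₗ _), LinearMap.zero_comp]
  rw [← LinearMap.comp_id γ, ← hrs, ← LinearMap.comp_assoc, γ_comp_r, LinearMap.zero_comp]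

lemma quotient_range {X JX : ModuleCat.{0} Aᵐᵒᵖ} {f : JX →ₗ[Aᵐᵒᵖ] X}
    (hf : IsAddJApprox e JX X f) : JTriv e (X ⧸ LinearMap.range f) := by
  intro a ha m
  obtain ⟨x, rfl⟩ := Submodule.Quotient.mk_surjective _ m
  let smul_x : A →ₗ[Aᵐᵒᵖ] X := LinearMap.toSpanSingleton Aᵐᵒᵖ X x ∘ₗ
    (MulOpposite.opLinearEquiv Aᵐᵒᵖ : A ≃ₗ[Aᵐᵒᵖ] Aᵐᵒᵖ).toLinearMap
  have genIdeal_inAddJ : InAddJ e (ModuleCat.of Aᵐᵒᵖ (genIdeal e)) :=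
    ⟨1, LinearMap.pi fun _ => LinearMap.id, LinearMap.proj 0, rfl⟩
  obtain ⟨h, hh⟩ := hf.2 _ genIdeal_inAddJ (smul_x ∘ₗ (genIdeal e).subtype)
  rw [← Submodule.Quotient.mk_smul, Submodule.Quotient.mk_eq_zero]
  exact ⟨h ⟨a, ha⟩, LinearMap.congr_fun hh ⟨a, ha⟩⟩

end JTriv

end GenIdeal

section HomModule

open Pretriangulated

universe u

variable {A : Type u} [Ring A] {C : Type*} [Category.{u} C] [Preadditive C] {T : C}

/-- The functor `Hom(T, -)` to right modules over `A ≅ End T`, on objects. In `End T`, Mathlib's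
`f * g` is `g ≫ f`, so that precomposition is indeed a right action. -/
def HomModule (_ψ : A ≃+* End T) (Y : C) : Type u := T ⟶ Y

namespace HomModule

variable (ψ : A ≃+* End T) {X Y Z : C}

instance (Y : C) : AddCommGroup (HomModule ψ Y) := inferInstanceAs (AddCommGroup (T ⟶ Y))

instance (Y : C) : Module Aᵐᵒᵖ (HomModule ψ Y) :=
  Module.compHom (T ⟶ Y) ψ.op.toRingHom

/-- The tautological bijection between maps `T ⟶ Y` and elements of `HomModule ψ Y`. -/
def ofHom : (T ⟶ Y) ≃+ HomModule ψ Y := AddEquiv.refl _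

lemma smul_ofHom (a : A) (f : T ⟶ Y) :
    MulOpposite.op a • ofHom ψ f = ofHom ψ ((ψ a : T ⟶ T) ≫ f) := rfl

/-- The functor `Hom(T, -)` on morphisms. -/
def map (g : X ⟶ Y) : HomModule ψ X →ₗ[Aᵐᵒᵖ] HomModule ψ Y where
  toFun f := ofHom ψ ((ofHom ψ).symm f ≫ g)
  map_add' _ _ := Preadditive.add_comp _ _ _ _ _ _
  map_smul' _ _ := Category.assoc _ _ _

@[simp]
lemma map_ofHom (g : X ⟶ Y) (f : T ⟶ X) : map ψ g (ofHom ψ f) = ofHom ψ (f ≫ g) := rfl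

lemma map_comp (f : X ⟶ Y) (g : Y ⟶ Z) : map ψ (f ≫ g) = map ψ g ∘ₗ map ψ f :=
  LinearMap.ext fun _ => (Category.assoc _ _ _).symm

/-- The isomorphism `A ≅ Hom(T, T)` of right `A`-modules. -/
def selfEquiv : A ≃ₗ[Aᵐᵒᵖ] HomModule ψ T where
  toAddEquiv := ψ.toAddEquiv.trans (ofHom ψ)
  map_smul' a b := map_mul ψ b a.unop

/-- `selfEquiv` with the regular module in the form `Aᵐᵒᵖ`. -/
def opEquiv : Aᵐᵒᵖ ≃ₗ[Aᵐᵒᵖ] HomModule ψ T :=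
  (MulOpposite.opLinearEquiv Aᵐᵒᵖ : A ≃ₗ[Aᵐᵒᵖ] Aᵐᵒᵖ).symm.trans (selfEquiv ψ)

section Add

variable {ψ}

lemma exists_eq_map (hZ : InAdd T Z) (φ : HomModule ψ Z →ₗ[Aᵐᵒᵖ] HomModule ψ Y) :
    ∃ y : Z ⟶ Y, φ = map ψ y := by
  obtain ⟨n, s, r, hsr⟩ := hZ
  refine ⟨∑ i, s i ≫ (ofHom ψ).symm (φ (ofHom ψ (r i))), LinearMap.ext fun f => ?_⟩
  obtain ⟨f, rfl⟩ := (ofHom ψ).surjective f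
  have f_eq : f = ∑ i, (ψ (ψ.symm (f ≫ s i)) : T ⟶ T) ≫ r i := by
    simp only [RingEquiv.apply_symm_apply, Category.assoc, ← Preadditive.comp_sum, hsr,
      Category.comp_id]
  conv_lhs => rw [f_eq]
  simp only [map_sum, ← smul_ofHom, map_smul, map_ofHom, Preadditive.comp_sum]
  refine Finset.sum_congr rfl fun i _ => ?_
  rw [← (ofHom ψ).apply_symm_apply (φ _), smul_ofHom, RingEquiv.apply_symm_apply,
    Category.assoc, AddEquiv.symm_apply_apply]

lemma exists_retract_pi (hZ : InAdd T Z) :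
    ∃ (n : ℕ) (s : HomModule ψ Z →ₗ[Aᵐᵒᵖ] Fin n → Aᵐᵒᵖ)
      (r : (Fin n → Aᵐᵒᵖ) →ₗ[Aᵐᵒᵖ] HomModule ψ Z), r ∘ₗ s = LinearMap.id := by
  obtain ⟨n, s, r, hsr⟩ := hZ
  refine ⟨n, LinearMap.pi fun i => (opEquiv ψ).symm.toLinearMap ∘ₗ map ψ (s i),
    ∑ i, map ψ (r i) ∘ₗ (opEquiv ψ).toLinearMap ∘ₗ LinearMap.proj i, LinearMap.ext fun f => ?_⟩
  obtain ⟨f, rfl⟩ := (ofHom ψ).surjective f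
  simp [← map_sum, ← Preadditive.comp_sum, hsr]

lemma projective (hZ : InAdd T Z) : Module.Projective Aᵐᵒᵖ (HomModule ψ Z) :=
  have ⟨_, s, r, hrs⟩ := exists_retract_pi hZ
  .of_split s r hrs

lemma finite (hZ : InAdd T Z) : Module.Finite Aᵐᵒᵖ (HomModule ψ Z) :=
  have ⟨_, s, r, hrs⟩ := exists_retract_pi hZ
  .of_surjective r fun f => ⟨s f, LinearMap.congr_fun hrs f⟩

lemma exists_surjective [Limits.HasFiniteBiproducts C] (ψ : A ≃+* End T) (X : Type u)
    [AddCommGroup X] [Module Aᵐᵒᵖ X] [Module.Finite Aᵐᵒᵖ X] :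
    ∃ (Z : C) (π : HomModule ψ Z →ₗ[Aᵐᵒᵖ] X), InAdd T Z ∧ Function.Surjective π := by
  obtain ⟨n, p, hp⟩ := Module.Finite.exists_fin' Aᵐᵒᵖ X
  let coord : HomModule ψ (⨁ fun _ : Fin n => T) →ₗ[Aᵐᵒᵖ] Fin n → Aᵐᵒᵖ :=
    LinearMap.pi fun i => (opEquiv ψ).symm.toLinearMap ∘ₗ map ψ (Limits.biproduct.π _ i)
  have coord_surjective : Function.Surjective coord := fun a =>
    ⟨ofHom ψ (Limits.biproduct.lift fun i => (ofHom ψ).symm (opEquiv ψ (a i))), by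
      ext i
      simp [coord]⟩
  exact ⟨_, p ∘ₗ coord, InAdd.biproduct T n, hp.comp coord_surjective⟩

end Add

section Triangle

variable [HasShift C ℤ] [Limits.HasZeroObject C] [∀ n : ℤ, (shiftFunctor C n).Additive]
  [Pretriangulated C]

lemma exact_map {f : X ⟶ Y} {g : Y ⟶ Z} {h : Z ⟶ X⟦(1 : ℤ)⟧}
    (hΔ : Triangle.mk f g h ∈ distTriang C) : Function.Exact (map ψ f) (map ψ g) :=
  exact_rightComp ℤ hΔ T

lemma map_surjective {f : X ⟶ Y} {g : Y ⟶ Z} {h : Z ⟶ X⟦(1 : ℤ)⟧}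
    (hΔ : Triangle.mk f g h ∈ distTriang C) [Subsingleton (T ⟶ X⟦(1 : ℤ)⟧)] :
    Function.Surjective (map ψ g) := by
  intro a
  obtain ⟨b, hb⟩ : ∃ b : T ⟶ Y, (ofHom ψ).symm a = b ≫ g :=
    Triangle.coyoneda_exact₃ _ hΔ _ (Subsingleton.eq_zero (_ ≫ h))
  exact ⟨ofHom ψ b, congrArg (ofHom ψ) hb.symm⟩

lemma exists_distTriang_linearEquiv [Limits.HasFiniteBiproducts C] [IsNoetherianRing Aᵐᵒᵖ]
    [Subsingleton (T ⟶ T⟦(1 : ℤ)⟧)] (X : Type u) [AddCommGroup X] [Module Aᵐᵒᵖ X]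
    [Module.Finite Aᵐᵒᵖ X] :
    ∃ (T₁ T₀ M : C) (g : T₁ ⟶ T₀) (c : T₀ ⟶ M) (δ : M ⟶ T₁⟦(1 : ℤ)⟧),
      Triangle.mk g c δ ∈ distTriang C ∧ InAdd T T₁ ∧ InAdd T T₀ ∧
        Nonempty (X ≃ₗ[Aᵐᵒᵖ] HomModule ψ M) := by
  obtain ⟨T₀, π₀, hT₀, hπ₀⟩ := exists_surjective ψ X
  have := finite (ψ := ψ) hT₀
  obtain ⟨T₁, π₁, hT₁, hπ₁⟩ := exists_surjective ψ (LinearMap.ker π₀)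
  obtain ⟨g, hg⟩ := exists_eq_map hT₁ ((LinearMap.ker π₀).subtype ∘ₗ π₁)
  have exact_π₀ : Function.Exact (map ψ g) π₀ := by
    rw [← hg, LinearMap.exact_iff, LinearMap.range_comp, LinearMap.range_eq_top.2 hπ₁,
      Submodule.map_top, Submodule.range_subtype]
  obtain ⟨M, c, δ, hΔ⟩ := distinguished_cocone_triangle g
  have := (hT₁.map (shiftFunctor C (1 : ℤ))).subsingleton_right (X := T)
  refine ⟨T₁, T₀, M, g, c, δ, hΔ, hT₁, hT₀, ⟨?_⟩⟩
  exact (exact_π₀.linearEquivOfSurjective hπ₀).symm ≪≫ₗ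
    (exact_map ψ hΔ).linearEquivOfSurjective (map_surjective ψ hΔ)

variable {ψ} {P Q R M T₀ T₁ : C} {r : Q ⟶ R} {ρ : R ⟶ T} {q : T ⟶ Q⟦(1 : ℤ)⟧}
  {g : T₁ ⟶ T₀} {c : T₀ ⟶ M} {δ : M ⟶ T₁⟦(1 : ℤ)⟧}

lemma isCohenMacaulayObject [Subsingleton (T ⟶ T⟦(1 : ℤ)⟧)]
    (hΔ : Triangle.mk g c δ ∈ distTriang C) (hT₁ : InAdd T T₁) (hT₀ : InAdd T T₀)
    (hM : ExtOneVanishes Aᵐᵒᵖ (HomModule ψ M) (HomModule ψ T)) : IsCohenMacaulayObject T M := by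
  intro φ hφ
  have : Subsingleton (T₀ ⟶ T⟦(1 : ℤ)⟧) := hT₀.subsingleton_left
  have := (hT₁.map (shiftFunctor C (1 : ℤ))).subsingleton_right (X := T)
  obtain ⟨w, rfl⟩ : ∃ w : T₁⟦(1 : ℤ)⟧ ⟶ T⟦(1 : ℤ)⟧, φ = δ ≫ w :=
    Triangle.yoneda_exact₃ _ hΔ φ (Subsingleton.eq_zero (c ≫ φ))
  obtain ⟨w, rfl⟩ := (shiftFunctor C (1 : ℤ)).map_surjective w
  have ker_le : LinearMap.ker (map ψ g) ≤ LinearMap.ker (map ψ w) := by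
    intro t ht
    obtain ⟨t, rfl⟩ := (ofHom ψ).surjective t
    obtain ⟨s, hs⟩ := exists_shift_eq_comp hΔ t ht
    have : t ≫ w = 0 := (shiftFunctor C (1 : ℤ)).map_injective (by
      rw [Functor.map_comp, hs, Category.assoc, hφ, Functor.map_zero])
    exact this
  obtain ⟨β, hβ⟩ := hM.exists_extension (map_surjective ψ hΔ) (exact_map ψ hΔ) ker_le
  obtain ⟨y, rfl⟩ := exists_eq_map hT₀ β
  obtain rfl : g ≫ y = w := hT₁.hom_ext fun t => by
    rw [← Category.assoc]
    exact LinearMap.congr_fun hβ (ofHom ψ t)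
  have δ_comp : δ ≫ g⟦(1 : ℤ)⟧' = 0 := comp_distTriang_mor_zero₃₁ _ hΔ
  rw [Functor.map_comp, ← Category.assoc, δ_comp, Limits.zero_comp]

lemma exists_forall_comp_eq (hΔ : Triangle.mk r ρ q ∈ distTriang C) (hR : InAdd T R)
    (hJ : ExtOneVanishes Aᵐᵒᵖ (LinearMap.range (map ψ ρ)) (HomModule ψ M)) (a : Q ⟶ M)
    (ha : ∀ t : T ⟶ Q, t ≫ r = 0 → t ≫ a = 0) :
    ∃ y : R ⟶ M, ∀ t : T ⟶ Q, t ≫ r ≫ y = t ≫ a := by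
  have exact_rangeRestrict : Function.Exact (map ψ r) (map ψ ρ).rangeRestrict := by
    rw [LinearMap.exact_iff, LinearMap.ker_rangeRestrict, (exact_map ψ hΔ).linearMap_ker_eq]
  obtain ⟨β, hβ⟩ := hJ.exists_extension (α := map ψ a) (map ψ ρ).surjective_rangeRestrict
    exact_rangeRestrict fun t ht => ha ((ofHom ψ).symm t) ht
  obtain ⟨y, rfl⟩ := exists_eq_map hR β
  refine ⟨y, fun t => ?_⟩
  rw [← Category.assoc]
  exact LinearMap.congr_fun hβ (ofHom ψ t)

lemma extOneVanishes_quotient_range {k : Type*} [Field k] [Linear k C]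
    [∀ X Y : C, FiniteDimensional k (X ⟶ Y)] (hC : IsTwoCYNumerically k C)
    (hT : IsClusterTilting T) (hΔ : Triangle.mk r ρ q ∈ distTriang C)
    (hρ : IsRightAddApprox P ρ) (hR : InAdd T R) (hΔ' : Triangle.mk g c δ ∈ distTriang C)
    (hT₁ : InAdd T T₁) (hT₀ : InAdd T T₀)
    (hM : ExtOneVanishes Aᵐᵒᵖ (HomModule ψ M) (HomModule ψ T))
    (hJ : ExtOneVanishes Aᵐᵒᵖ (LinearMap.range (map ψ ρ)) (HomModule ψ M)) :
    ExtOneVanishes Aᵐᵒᵖ (HomModule ψ M) (HomModule ψ T ⧸ LinearMap.range (map ψ ρ)) := by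
  have := hT.subsingleton_hom_shift
  have := (hT₁.map (shiftFunctor C (1 : ℤ))).subsingleton_right (X := T)
  have := projective (ψ := ψ) hT₀
  have := projective (ψ := ψ) hT₁
  have mem_range (f : T ⟶ T) : ofHom ψ f ∈ LinearMap.range (map ψ ρ) ↔ f ≫ q = 0 :=
    (exact_map ψ (rot_of_distTriang _ hΔ) (ofHom ψ f)).symm
  refine .of_projective (map_surjective ψ hΔ') (exact_map ψ hΔ') fun α hα => ?_
  obtain ⟨l, hl⟩ := Module.projective_lifting_property _ α
    (LinearMap.range (map ψ ρ)).mkQ_surjective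
  obtain ⟨w, rfl⟩ := exists_eq_map hT₁ l
  have hw (t : T ⟶ T₁) (ht : t ≫ g = 0) : t ≫ w ≫ q = 0 := by
    have : α (ofHom ψ t) = 0 := hα ht
    rw [← hl] at this
    rw [← Category.assoc, ← mem_range]
    exact (Submodule.Quotient.mk_eq_zero _).1 this
  obtain ⟨w', hw'⟩ := exists_comp_comp_eq hC hT hΔ hρ hR hT₁ hT₀ hΔ'
    (isCohenMacaulayObject hΔ' hT₁ hT₀ hM) (exists_forall_comp_eq hΔ hR hJ) hw
  refine ⟨(LinearMap.range (map ψ ρ)).mkQ ∘ₗ map ψ w', ?_⟩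
  rw [← hl, LinearMap.comp_assoc, ← map_comp]
  ext f
  obtain ⟨f, rfl⟩ := (ofHom ψ).surjective f
  refine (Submodule.Quotient.eq _).2 ((mem_range (f ≫ g ≫ w' - f ≫ w)).2 ?_)
  simp only [Preadditive.sub_comp, Category.assoc, hw', sub_self]

end Triangle

end HomModule
end HomModule

section Ideal

variable {A : Type} [Ring A] {e : A} {C : Type*} [Category.{0} C] [Preadditive C] {T : C}

lemma map_selfEquiv_genIdeal {ψ : A ≃+* End T} {P R : C} {i : P ⟶ T} {p : T ⟶ P}
    (hip : i ≫ p = 𝟙 P) (hpi : p ≫ i = ψ e) {ρ : R ⟶ T} (hρ : IsRightAddApprox P ρ) :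
    (genIdeal e).map (HomModule.selfEquiv ψ).toLinearMap =
      LinearMap.range (HomModule.map ψ ρ) := by
  apply le_antisymm
  · rw [Submodule.map_le_iff_le_comap]
    refine Submodule.span_le.2 ?_
    rintro _ ⟨b, rfl⟩
    obtain ⟨h, hh⟩ := hρ.exists_comp_eq (i ≫ (ψ b : T ⟶ T))
    refine ⟨HomModule.ofHom ψ (p ≫ h), congrArg (HomModule.ofHom ψ) ?_⟩
    change (p ≫ h) ≫ ρ = ψ (b * e)
    rw [map_mul, End.mul_def, ← hpi, Category.assoc, Category.assoc, hh]
  · rintro _ ⟨f, rfl⟩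
    obtain ⟨f, rfl⟩ := (HomModule.ofHom ψ).surjective f
    obtain ⟨n, s, r, hsr⟩ := hρ.inAdd
    let a (j : Fin n) : A := ψ.symm (p ≫ r j ≫ ρ)
    let b (j : Fin n) : A := ψ.symm (f ≫ s j ≫ i)
    refine ⟨∑ j, a j * e * b j, sum_mem fun j _ => mul_mul_mem_genIdeal _ _ _,
      congrArg (HomModule.ofHom ψ) ?_⟩
    have (j : Fin n) : ψ (a j * e * b j) = f ≫ (s j ≫ r j) ≫ ρ := by
      simp only [a, b, map_mul, End.mul_def, RingEquiv.apply_symm_apply, ← hpi, Category.assoc,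
        reassoc_of% hip]
    change ψ (∑ j, a j * e * b j) = f ≫ ρ
    simp only [map_sum, this]
    rw [← Preadditive.comp_sum, ← Preadditive.sum_comp, hsr, Category.id_comp]

open Pretriangulated

variable [HasShift C ℤ] [Limits.HasZeroObject C] [∀ n : ℤ, (shiftFunctor C n).Additive]
  [Pretriangulated C] [IsIdempotentComplete C]

theorem IsClusterTilting.extOneVanishes_quotient_genIdeal {k : Type*} [Field k] [Linear k C]
    [∀ X Y : C, FiniteDimensional k (X ⟶ Y)] (hT : IsClusterTilting T)
    (hC : IsTwoCYNumerically k C) (ψ : A ≃+* End T) [IsNoetherianRing Aᵐᵒᵖ]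
    (he : IsIdempotentElem e) (X : Type) [AddCommGroup X] [Module Aᵐᵒᵖ X]
    [Module.Finite Aᵐᵒᵖ X] (hX : ExtOneVanishes Aᵐᵒᵖ X A)
    (hJ : ExtOneVanishes Aᵐᵒᵖ (genIdeal e) X) : ExtOneVanishes Aᵐᵒᵖ X (A ⧸ genIdeal e) := by
  have := hT.subsingleton_hom_shift
  obtain ⟨T₁, T₀, M, g, c, δ, hΔ', hT₁, hT₀, ⟨θ⟩⟩ := HomModule.exists_distTriang_linearEquiv ψ X
  have ψe_idem : (ψ e : T ⟶ T) ≫ (ψ e : T ⟶ T) = ψ e := by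
    rw [← End.mul_def, ← map_mul, he.eq]
  obtain ⟨P, i, p, hip, hpi⟩ := IsIdempotentComplete.idempotents_split T (ψ e : T ⟶ T) ψe_idem
  obtain ⟨R, ρ, hρ⟩ := exists_isRightAddApprox k P T
  obtain ⟨Q, r, q, hΔ⟩ := distinguished_cocone_triangle₁ ρ
  let σ := HomModule.selfEquiv ψ
  have map_σ := map_selfEquiv_genIdeal hip hpi hρ
  have hJ' := hJ.congr (σ.submoduleMap _ ≪≫ₗ LinearEquiv.ofEq _ _ map_σ) θ
  exact (HomModule.extOneVanishes_quotient_range hC hT hΔ hρ (hρ.inAdd.of_retract hip) hΔ'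
    hT₁ hT₀ (hX.congr θ σ) hJ').congr θ.symm (Submodule.Quotient.equiv _ _ σ map_σ).symm

end Ideal

theorem CYTiltedWitness.extOneVanishes_quotient_genIdeal {k A : Type} [Field k] [Ring A]
    [Algebra k A] (W : CYTiltedWitness k A) {e : A} (he : IsIdempotentElem e) (X : Type)
    [AddCommGroup X] [Module Aᵐᵒᵖ X] [Module.Finite Aᵐᵒᵖ X] (hX : ExtOneVanishes Aᵐᵒᵖ X A)
    (hJ : ExtOneVanishes Aᵐᵒᵖ (genIdeal e) X) : ExtOneVanishes Aᵐᵒᵖ X (A ⧸ genIdeal e) := by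
  let := W.cat
  let := W.pre
  let := W.lin
  let := W.shift
  let := W.zero
  let := W.shiftAdd
  let := W.tri
  let := W.biprod
  let := W.idem
  have := W.homFinite
  obtain ⟨ψ⟩ := W.algIso
  have : FiniteDimensional k (End W.T) := W.homFinite _ _
  have : FiniteDimensional k A := Module.Finite.equiv ψ.symm.toLinearEquiv
  have : IsNoetherianRing Aᵐᵒᵖ := IsNoetherianRing.of_finite k Aᵐᵒᵖ
  have hT : IsClusterTilting W.T := fun Y => by
    rw [InAdd.iff_retract_biproduct, ← W.clusterTilting Y]
    exact ⟨fun _ f => Subsingleton.eq_zero f, fun h => subsingleton_of_forall_eq 0 h⟩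
  exact hT.extOneVanishes_quotient_genIdeal (isTwoCYNumerically_of_serre_duality W.serre)
    ψ.toRingEquiv he X hX hJ

theorem cokernel_of_approximation_is_CM_over_B_general
    (k A : Type) [Field k] [Ring A] [Algebra k A]
    (hA : IsCYTilted k A) (e : A) (he : IsIdempotentElem e)
    (X : ModuleCat.{0} Aᵐᵒᵖ) [Module.Finite Aᵐᵒᵖ X] (hX : IsCM k A X)
    (h1 : Subsingleton (rext1 k A (ModuleCat.of Aᵐᵒᵖ ↥(genIdeal e)) X))
    (JX : ModuleCat.{0} Aᵐᵒᵖ) (fX : JX →ₗ[Aᵐᵒᵖ] X) (hfX : IsAddJApprox e JX X fX) :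
    JTriv e (X ⧸ LinearMap.range fX) ∧
    ∀ (E : ModuleCat.{0} Aᵐᵒᵖ) (u : (A ⧸ genIdeal e) →ₗ[Aᵐᵒᵖ] E)
      (v : E →ₗ[Aᵐᵒᵖ] (X ⧸ LinearMap.range fX)),
      JTriv e E → Function.Injective u → Function.Surjective v → Function.Exact u v →
      ∃ s : (X ⧸ LinearMap.range fX) →ₗ[Aᵐᵒᵖ] E, v ∘ₗ s = LinearMap.id := by
  obtain ⟨W⟩ := hA
  have ext_zero : ExtOneVanishes Aᵐᵒᵖ X (A ⧸ genIdeal e) :=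
    W.extOneVanishes_quotient_genIdeal he X
      (extOneVanishes_of_subsingleton_ext k X (ModuleCat.of Aᵐᵒᵖ A) (h := hX))
      (extOneVanishes_of_subsingleton_ext k (ModuleCat.of Aᵐᵒᵖ (genIdeal e)) X (h := h1))
  refine ⟨.quotient_range hfX, fun E u v hE hu hv huv => ?_⟩
  obtain ⟨l, hl⟩ := ext_zero.exists_lift hu huv hv (LinearMap.range fX).mkQ
  have l_comp_fX : l ∘ₗ fX = 0 := hE.eq_zero_of_inAddJ he hfX.1 _
  refine ⟨(LinearMap.range fX).liftQ l (LinearMap.range_le_ker_iff.2 l_comp_fX), ?_⟩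
  ext x
  exact LinearMap.congr_fun hl x

/-- Let `A` be a 2-Calabi-Yau tilted algebra, `J = A e A`, and let `X` be
a Cohen-Macaulay `A`-module with `Ext¹_A(J, X) = 0 = Ext¹_A(X, J)`. If `f_X : J_X → X` is
an `add J`-approximation of `X`, then the cokernel `F(X) = X / im f_X` is a Cohen-Macaulay
module over `B = A/J`: it is a `B`-module, and `Ext¹_B(F(X), B) = 0`, i.e. every short
exact sequence of `B`-modules `0 → B → E → F(X) → 0` splits. -/
theorem cokernel_of_approximation_is_CM_over_B
    (k A : Type) [Field k] [IsAlgClosed k] [Ring A] [Algebra k A] [FiniteDimensional k A]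
    (hA : IsCYTilted k A) (e : A) (he : IsPrimitiveIdempotent e)
    (X : ModuleCat.{0} Aᵐᵒᵖ) [Module.Finite Aᵐᵒᵖ X] (hX : IsCM k A X)
    (h1 : Subsingleton (rext1 k A (ModuleCat.of Aᵐᵒᵖ ↥(genIdeal e)) X))
    (h2 : Subsingleton (rext1 k A X (ModuleCat.of Aᵐᵒᵖ ↥(genIdeal e))))
    (JX : ModuleCat.{0} Aᵐᵒᵖ) (fX : JX →ₗ[Aᵐᵒᵖ] X) (hfX : IsAddJApprox e JX X fX) :
    JTriv e (X ⧸ LinearMap.range fX) ∧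
    ∀ (E : ModuleCat.{0} Aᵐᵒᵖ) (u : (A ⧸ genIdeal e) →ₗ[Aᵐᵒᵖ] E)
      (v : E →ₗ[Aᵐᵒᵖ] (X ⧸ LinearMap.range fX)),
      JTriv e E → Function.Injective u → Function.Surjective v → Function.Exact u v →
      ∃ s : (X ⧸ LinearMap.range fX) →ₗ[Aᵐᵒᵖ] E, v ∘ₗ s = LinearMap.id :=
  cokernel_of_approximation_is_CM_over_B_general k A hA e he.1 X hX h1 JX fX hfX
end
end
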